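/- arXiv:1302.4826 — 4 statements merged into one kernel-verified Lean document; each statement's English description precedes it below -/
import Mathlib

section
/- Let g be a finite-dimensional semisimple complex Lie algebra graded by Z/3Z, g = g_0 ⊕ g_1 ⊕ g_2, such that g_0 is an abelian subalgebra of dimension 6 whose adjoint action on g_1 and on g_2 is semisimple, and dim g = 24. Then g_0 is a Cartan subalgebra of g. -/
open Module in
/-- For an endomorphism whose eigenvectors span, generalized eigenvectors are eigenvectors. -/
theorem aux_gen_eq {V : Type*} [AddCommGroup V] [Module ℂ V] [FiniteDimensional ℂ V]
    (T : End ℂ V) (hT : ⨆ μ, T.eigenspace μ = ⊤) (μ : ℂ) :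
    T.maxGenEigenspace μ = T.eigenspace μ := by
  have hle : T.eigenspace ≤ T.maxGenEigenspace :=
    fun μ => (T.genEigenspace μ).monotone (by simp)
  have h := (iSupIndep.le_iff_eq_of_iSup_eq_top
    (f := T.eigenspace) (g := T.maxGenEigenspace)
    (T.independent_maxGenEigenspace) hT).1 hle
  exact (congrFun h μ).symm

open Module in
/-- A diagonalizable commutator which commutes with both factors vanishes. -/
theorem aux_comm_zero {V : Type*} [AddCommGroup V] [Module ℂ V] [FiniteDimensional ℂ V]
    (C Y W : End ℂ V) (hC : ⨆ μ, C.eigenspace μ = ⊤) (h : C = Y * W - W * Y)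
    (hY : Commute C Y) (hW : Commute C W) : C = 0 := by
  have key : ∀ μ : ℂ, μ ≠ 0 → C.eigenspace μ = ⊥ := by
    intro μ hμ
    have mY : Set.MapsTo Y (C.eigenspace μ) (C.eigenspace μ) :=
      End.mapsTo_genEigenspace_of_comm hY μ 1
    have mW : Set.MapsTo W (C.eigenspace μ) (C.eigenspace μ) :=
      End.mapsTo_genEigenspace_of_comm hW μ 1
    have e : Y.restrict mY * W.restrict mW - W.restrict mW * Y.restrict mY
        = μ • (1 : End ℂ (C.eigenspace μ)) := by
      ext v
      have hv := End.mem_eigenspace_iff.1 v.2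
      have hv2 : C (v : V) = Y (W v) - W (Y v) := by
        have := LinearMap.congr_fun h (v : V)
        simpa using this
      rw [hv2] at hv
      exact hv
    have t := congrArg (LinearMap.trace ℂ _) e
    rw [map_sub, LinearMap.trace_mul_comm, sub_self, map_smul, LinearMap.trace_one] at t
    rw [← Submodule.finrank_eq_zero (R := ℂ)]
    simpa [hμ] using t.symm
  have h0 : C.eigenspace 0 = ⊤ := by
    rw [eq_top_iff, ← hC]
    refine iSup_le fun μ => ?_
    by_cases hμ : μ = 0
    · rw [hμ]
    · rw [key μ hμ]; exact bot_le
  ext v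
  have : v ∈ C.eigenspace 0 := h0 ▸ Submodule.mem_top
  simpa using End.mem_eigenspace_iff.1 this

section rootspaces
open Module LieModule Set LieAlgebra

/-- Root spaces for a nilpotent subalgebra are Killing-orthogonal unless the roots are opposite. -/
theorem aux_root_orth {L : Type*} [LieRing L] [LieAlgebra ℂ L] [FiniteDimensional ℂ L]
    (H : LieSubalgebra ℂ L) [LieRing.IsNilpotent H] {α β : H → ℂ} {x y : L}
    (hx : x ∈ rootSpace H α) (hy : y ∈ rootSpace H β) (hαβ : α + β ≠ 0) :
    killingForm ℂ L x y = 0 := by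
  let σ : (H → ℂ) → (H → ℂ) := fun γ ↦ α + (β + γ)
  have hσ : ∀ γ, σ γ ≠ γ := fun γ ↦ by simpa only [σ, ← add_assoc] using add_ne_right.mpr hαβ
  let f : Module.End ℂ L := (ad ℂ L x) ∘ₗ (ad ℂ L y)
  have hf : ∀ γ, MapsTo f (rootSpace H γ) (rootSpace H (σ γ)) := fun γ ↦
    (mapsTo_toEnd_genWeightSpace_add_of_mem_rootSpace ℂ L H L α (β + γ) hx).comp <|
      mapsTo_toEnd_genWeightSpace_add_of_mem_rootSpace ℂ L H L β γ hy
  classical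
  have hds := DirectSum.isInternal_submodule_of_iSupIndep_of_iSup_eq_top
    (LieSubmodule.iSupIndep_toSubmodule.mpr <| iSupIndep_genWeightSpace ℂ H L)
    (LieSubmodule.iSup_toSubmodule_eq_top.mpr <| iSup_genWeightSpace_eq_top ℂ H L)
  exact LinearMap.trace_eq_zero_of_mapsTo_ne hds σ hσ hf

theorem aux_root_ker {L : Type*} [LieRing L] [LieAlgebra ℂ L] [FiniteDimensional ℂ L]
    (H : LieSubalgebra ℂ L) [LieRing.IsNilpotent H]
    {α : H → ℂ} {x : L} (hx : x ∈ rootSpace H α)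
    (hx' : ∀ y ∈ rootSpace H (-α), killingForm ℂ L x y = 0) :
    x ∈ LinearMap.ker (killingForm ℂ L) := by
  rw [LinearMap.mem_ker]
  ext y
  have hy : y ∈ ⨆ β, rootSpace H β := by simp [iSup_genWeightSpace_eq_top ℂ H L]
  induction hy using LieSubmodule.iSup_induction' with
  | mem β y hy =>
    by_cases hαβ : α + β = 0
    · exact hx' _ (add_eq_zero_iff_neg_eq.mp hαβ ▸ hy)
    · exact aux_root_orth H hx hy hαβ
  | zero => simp
  | add => simp_all

end rootspaces

section grading
variable {L : Type*} [LieRing L] [LieAlgebra ℂ L] [FiniteDimensional ℂ L]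
    {g : ZMod 3 → Submodule ℂ L}

theorem aux_mem_sum (hinternal : DirectSum.IsInternal g) (x : L) :
    ∃ f : ZMod 3 → L, (∀ i, f i ∈ g i) ∧ x = ∑ i, f i := by
  have hx : x ∈ ⨆ i, g i := hinternal.submodule_iSup_eq_top ▸ Submodule.mem_top
  rw [Submodule.mem_iSup_iff_exists_finsupp] at hx
  obtain ⟨f, hf, rfl⟩ := hx
  exact ⟨f, hf, Finsupp.sum_fintype _ _ (fun _ => rfl)⟩

theorem aux_sum_zero (hinternal : DirectSum.IsInternal g) (f : ZMod 3 → L)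
    (hf : ∀ i, f i ∈ g i) (h : ∑ i, f i = 0) (i : ZMod 3) : f i = 0 :=
  by
    have hi := hinternal.submodule_iSupIndep
    have := hi i
    rw [Submodule.disjoint_def] at this
    refine this _ (hf i) ?_
    rw [← Finset.add_sum_erase _ _ (Finset.mem_univ i)] at h
    rw [eq_neg_of_add_eq_zero_left h]
    refine neg_mem (Submodule.sum_mem _ fun j hj => ?_)
    exact Submodule.mem_iSup_of_mem j (Submodule.mem_iSup_of_mem (Finset.ne_of_mem_erase hj) (hf j))

/-- Elements of `g 0` act diagonalizably on the whole of `L`. -/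
theorem aux_diag (hinternal : DirectSum.IsInternal g)
    (habelian : ∀ x ∈ g 0, ∀ y ∈ g 0, ⁅x, y⁆ = 0)
    (hss : ∀ x ∈ g 0, ∀ k : ZMod 3, k ≠ 0 → ∃ s : Set L, s ⊆ g k ∧
      Submodule.span ℂ s = g k ∧ ∀ y ∈ s, ∃ c : ℂ, ⁅x, y⁆ = c • y)
    (a : L) (ha : a ∈ g 0) : ⨆ μ, (LieAlgebra.ad ℂ L a).eigenspace μ = ⊤ := by
  rw [eq_top_iff, ← hinternal.submodule_iSup_eq_top]
  refine iSup_le fun k => ?_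
  by_cases hk : k = 0
  · subst hk
    refine le_trans (fun y hy => ?_) (le_iSup _ (0 : ℂ))
    rw [Module.End.mem_eigenspace_iff]
    simpa using habelian a ha y hy
  · obtain ⟨s, -, hs, h⟩ := hss a ha k hk
    rw [← hs, Submodule.span_le]
    intro y hy
    obtain ⟨c, hc⟩ := h y hy
    exact Submodule.mem_iSup_of_mem c (Module.End.mem_eigenspace_iff.2 (by simpa using hc))

/-- A homogeneous element centralizing `g 0` is ad-nilpotent. -/
theorem aux_nil (hinternal : DirectSum.IsInternal g)
    (hgrad : ∀ i j : ZMod 3, ∀ x ∈ g i, ∀ y ∈ g j, ⁅x, y⁆ ∈ g (i + j))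
    (k : ZMod 3) (hk : k ≠ 0) (y : L) (hy : y ∈ g k) (hc : ∀ a ∈ g 0, ⁅y, a⁆ = 0) :
    IsNilpotent (LieAlgebra.ad ℂ L y) := by
  refine ⟨3, ?_⟩
  rw [← LinearMap.ker_eq_top, eq_top_iff, ← hinternal.submodule_iSup_eq_top]
  refine iSup_le fun j v hv => ?_
  have h1 := hgrad _ _ y hy v hv
  have h2 := hgrad _ _ y hy _ h1
  have hcase : j = 0 ∨ k + j = 0 ∨ k + (k + j) = 0 := by
    revert hk; clear * -; revert k j; decide
  have : ⁅y, ⁅y, ⁅y, v⁆⁆⁆ = 0 := by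
    rcases hcase with h | h | h
    · subst h; simp [hc v hv]
    · rw [h] at h1; simp [hc _ h1]
    · rw [h] at h2; simp [hc _ h2]
  simpa [pow_succ] using this

/-- The Killing form pairs `g i` and `g j` trivially unless `i + j = 0`. -/
theorem aux_killing (hinternal : DirectSum.IsInternal g)
    (hgrad : ∀ i j : ZMod 3, ∀ x ∈ g i, ∀ y ∈ g j, ⁅x, y⁆ ∈ g (i + j))
    (i j : ZMod 3) (hij : i + j ≠ 0) (x y : L) (hx : x ∈ g i) (hy : y ∈ g j) :
    killingForm ℂ L x y = 0 := by
  rw [killingForm_apply_apply]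
  refine LinearMap.trace_eq_zero_of_mapsTo_ne hinternal (fun k => i + (j + k)) (fun k hk => hij ?_)
    (fun k v hv => hgrad _ _ x hx _ (hgrad _ _ y hy v hv))
  have : i + j + k = k := by rw [add_assoc]; exact hk
  simpa using this

theorem aux_commute (x y : L) (h : ∀ v : L, ⁅⁅x, y⁆, v⁆ = 0) :
    Commute (LieAlgebra.ad ℂ L x) (LieAlgebra.ad ℂ L y) := by
  refine LinearMap.ext fun v => ?_
  have := h v
  rw [lie_lie, sub_eq_zero] at this
  simpa using this

/-- Homogeneous elements of nonzero degree centralizing `g 0` are Killing-orthogonal to all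
elements centralizing `g 0`. -/
theorem aux_orth [LieAlgebra.IsSemisimple ℂ L] (hinternal : DirectSum.IsInternal g)
    (hgrad : ∀ i j : ZMod 3, ∀ x ∈ g i, ∀ y ∈ g j, ⁅x, y⁆ ∈ g (i + j))
    (habelian : ∀ x ∈ g 0, ∀ y ∈ g 0, ⁅x, y⁆ = 0)
    (hss : ∀ x ∈ g 0, ∀ k : ZMod 3, k ≠ 0 → ∃ s : Set L, s ⊆ g k ∧
      Submodule.span ℂ s = g k ∧ ∀ y ∈ s, ∃ c : ℂ, ⁅x, y⁆ = c • y)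
    (k : ZMod 3) (hk : k ≠ 0) (y : L) (hy : y ∈ g k) (hc : ∀ a ∈ g 0, ⁅a, y⁆ = 0)
    (j : ZMod 3) (w : L) (hw : w ∈ g j) (hcw : ∀ a ∈ g 0, ⁅a, w⁆ = 0) :
    killingForm ℂ L y w = 0 := by
  by_cases hkj : k + j = 0
  swap
  · exact aux_killing hinternal hgrad k j hkj y w hy hw
  have hz : ⁅y, w⁆ ∈ g 0 := hkj ▸ hgrad _ _ y hy w hw
  have hC : LieAlgebra.ad ℂ L ⁅y, w⁆ = 0 := by
    refine aux_comm_zero _ (LieAlgebra.ad ℂ L y) (LieAlgebra.ad ℂ L w)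
      (aux_diag hinternal habelian hss _ hz) ?_ ?_ ?_
    · ext v; simp
    · exact aux_commute _ _ fun v => by rw [hc _ hz, zero_lie]
    · exact aux_commute _ _ fun v => by rw [hcw _ hz, zero_lie]
  have hcomm : Commute (LieAlgebra.ad ℂ L y) (LieAlgebra.ad ℂ L w) := by
    exact aux_commute _ _ fun v => by simpa using LinearMap.congr_fun hC v
  have hn := aux_nil hinternal hgrad k hk y hy
    (fun a ha => by rw [← lie_skew, hc a ha, neg_zero])
  rw [killingForm_apply_apply]
  exact (LinearMap.isNilpotent_trace_of_isNilpotent (hcomm.isNilpotent_mul_right hn)).eq_zero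

/-- Graded components of an element centralizing `g 0` centralize `g 0`. -/
theorem aux_comp (hinternal : DirectSum.IsInternal g)
    (hgrad : ∀ i j : ZMod 3, ∀ x ∈ g i, ∀ y ∈ g j, ⁅x, y⁆ ∈ g (i + j))
    (f : ZMod 3 → L) (hf : ∀ i, f i ∈ g i) (h : ∀ a ∈ g 0, ⁅a, ∑ i, f i⁆ = 0)
    (i : ZMod 3) : ∀ a ∈ g 0, ⁅a, f i⁆ = 0 := by
  intro a ha
  refine aux_sum_zero hinternal (fun i => ⁅a, f i⁆) (fun i => ?_) ?_ i
  · simpa using hgrad 0 i a ha _ (hf i)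
  · rw [← lie_sum]; exact h a ha

end grading

/-- Let `g` be a finite-dimensional semisimple complex Lie algebra of dimension 24 with a
`ℤ/3ℤ`-grading `g = g₀ ⊕ g₁ ⊕ g₂` such that `g₀` is an abelian subalgebra of dimension 6
whose adjoint action on `g₁` and on `g₂` is semisimple (each graded piece is spanned by
`ad x`-eigenvectors for every `x ∈ g₀`). Then `g₀` is a Cartan subalgebra of `g`. -/
theorem cartan_of_z3_graded_semisimple
    {L : Type*} [LieRing L] [LieAlgebra ℂ L] [FiniteDimensional ℂ L]
    [LieAlgebra.IsSemisimple ℂ L]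
    (hdim : Module.finrank ℂ L = 24)
    (g : ZMod 3 → Submodule ℂ L)
    (hinternal : DirectSum.IsInternal g)
    (hgrad : ∀ i j : ZMod 3, ∀ x ∈ g i, ∀ y ∈ g j, ⁅x, y⁆ ∈ g (i + j))
    (habelian : ∀ x ∈ g 0, ∀ y ∈ g 0, ⁅x, y⁆ = 0)
    (hdim0 : Module.finrank ℂ (g 0) = 6)
    (hss : ∀ x ∈ g 0, ∀ k : ZMod 3, k ≠ 0 → ∃ s : Set L, s ⊆ g k ∧
      Submodule.span ℂ s = g k ∧ ∀ y ∈ s, ∃ c : ℂ, ⁅x, y⁆ = c • y) :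
    ∃ K : LieSubalgebra ℂ L, (K : Set L) = (g 0 : Set L) ∧ K.IsCartanSubalgebra := by
  have hlie : ∀ {x y : L}, x ∈ g 0 → y ∈ g 0 → ⁅x, y⁆ ∈ g 0 := by
    intro x y hx hy
    have := hgrad 0 0 x hx y hy
    rwa [add_zero] at this
  let K : LieSubalgebra ℂ L := { g 0 with lie_mem' := hlie }
  have hK : ∀ x, x ∈ K ↔ x ∈ g 0 := fun x => Iff.rfl
  have hab : IsLieAbelian K :=
    ⟨fun x y => Subtype.ext (habelian x.1 x.2 y.1 y.2)⟩
  -- the zero root space of `K` is the centralizer of `g 0`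
  have hzero : ∀ v, (∀ a : K, ∃ n : ℕ, ((LieAlgebra.ad ℂ L a.1) ^ n) v = 0) →
      ∀ a ∈ g 0, ⁅a, v⁆ = 0 := by
    intro v hv a ha
    obtain ⟨n, hn⟩ := hv ⟨a, ha⟩
    have h1 : v ∈ (LieAlgebra.ad ℂ L a).maxGenEigenspace 0 := by
      rw [Module.End.mem_maxGenEigenspace]
      exact ⟨n, by simpa using hn⟩
    rw [aux_gen_eq _ (aux_diag hinternal habelian hss a ha), Module.End.mem_eigenspace_iff] at h1
    simpa using h1
  -- homogeneous centralizing elements of nonzero degree vanish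
  have hvan : ∀ k : ZMod 3, k ≠ 0 → ∀ y ∈ g k, (∀ a ∈ g 0, ⁅a, y⁆ = 0) → y = 0 := by
    intro k hk y hy hc
    have hy0 : y ∈ LieAlgebra.rootSpace K (0 : K → ℂ) := by
      rw [LieModule.mem_genWeightSpace]
      intro a
      exact ⟨1, by simpa using hc a.1 a.2⟩
    have hker : y ∈ LinearMap.ker (killingForm ℂ L) := by
      apply aux_root_ker K hy0
      intro w hw
      rw [neg_zero, LieModule.mem_genWeightSpace] at hw
      have hw' := hzero w (fun a => by
        obtain ⟨n, hn⟩ := hw a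
        refine ⟨n, ?_⟩
        simp only [Pi.zero_apply, zero_smul, sub_zero] at hn
        exact hn)
      obtain ⟨f, hf, rfl⟩ := aux_mem_sum hinternal w
      rw [map_sum]
      exact Finset.sum_eq_zero fun i _ => aux_orth hinternal hgrad habelian hss k hk y hy hc i _
        (hf i) (aux_comp hinternal hgrad f hf hw' i)
    rwa [LieAlgebra.IsKilling.ker_killingForm_eq_bot, Submodule.mem_bot] at hker
  refine ⟨K, rfl, ⟨inferInstance, le_antisymm (fun x hx => ?_) K.le_normalizer⟩⟩
  rw [LieSubalgebra.mem_normalizer_iff'] at hx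
  have hx0 : ∀ a ∈ g 0, ⁅a, x⁆ = 0 := hzero x fun a =>
    ⟨2, by simpa [pow_succ] using habelian a.1 a.2 _ (hx a.1 a.2)⟩
  obtain ⟨f, hf, rfl⟩ := aux_mem_sum hinternal x
  rw [hK]
  refine Submodule.sum_mem _ fun i _ => ?_
  by_cases hi : i = 0
  · subst hi; exact hf 0
  · rw [hvan i hi _ (hf i) (aux_comp hinternal hgrad f hf hx0 i)]
    exact zero_mem _
end

section
/- Let g be a finite-dimensional semisimple complex Lie algebra with a Z/3Z-grading g = g_0 ⊕ g_1 ⊕ g_2 such that g_0 is a Cartan subalgebra of g. Then g is not isomorphic to the semisimple Lie algebra of type B_2 ⊕ A_2 ⊕ A_1 ⊕ A_1. (Equivalently: if a semisimple Lie algebra admits a Z/3Z-grading whose degree-zero part is a Cartan subalgebra, then no simple component of type B_2 can occur.) -/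
open LieAlgebra

/-- The direct product of two Lie rings, with componentwise bracket. -/
instance prodLieRing {A B : Type*} [LieRing A] [LieRing B] : LieRing (A × B) where
  bracket x y := (⁅x.1, y.1⁆, ⁅x.2, y.2⁆)
  add_lie x y z := Prod.ext (add_lie x.1 y.1 z.1) (add_lie x.2 y.2 z.2)
  lie_add x y z := Prod.ext (lie_add x.1 y.1 z.1) (lie_add x.2 y.2 z.2)
  lie_self x := Prod.ext (lie_self x.1) (lie_self x.2)
  leibniz_lie x y z := Prod.ext (leibniz_lie x.1 y.1 z.1) (leibniz_lie x.2 y.2 z.2)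

/-- The direct product of two Lie algebras. -/
instance prodLieAlgebra {R A B : Type*} [CommRing R] [LieRing A] [LieRing B]
    [LieAlgebra R A] [LieAlgebra R B] : LieAlgebra R (A × B) where
  lie_smul t x y := Prod.ext (lie_smul t x.1 y.1) (lie_smul t x.2 y.2)


theorem aux_root_count {ι M N : Type*} [Fintype ι] [AddCommGroup M] [Module ℂ M]
    [AddCommGroup N] [Module ℂ N] [FiniteDimensional ℂ M]
    (P : RootPairing ι ℂ M N) [P.IsRootSystem] [P.IsCrystallographic] [P.IsReduced]
    (hP : ∀ i j, P.pairingIn ℤ i j ≤ -2 → P.root i = - P.root j) :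
    Module.finrank ℂ M + Fintype.card ι ≠ 10 := by
  classical
  intro h10
  -- neg
  have hneg : ∀ i, ∃ j, P.root j = - P.root i := fun i => ⟨P.reflectionPerm i i, by simp⟩
  choose ν hν using hneg
  have hνν : ∀ i, ν (ν i) = i := fun i => P.root.injective (by simp [hν])
  have hνne : ∀ i, ν i ≠ i := by
    intro i hi
    have h1 := hν i
    rw [hi] at h1
    have h2 : (2:ℂ) • P.root i = 0 := by rw [two_smul]; nth_rewrite 1 [h1]; simp
    exact P.ne_zero i (by simpa using h2)
  have heven : Even (Fintype.card ι) := by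
    have h := Equiv.Perm.card_fixedPoints_modEq (f := (ν : Function.End ι)) (p := 2) (n := 1)
      (by funext i; exact hνν i)
    have h0 : Fintype.card (Function.fixedPoints (ν : ι → ι)) = 0 := by
      rw [Fintype.card_eq_zero_iff]
      exact ⟨fun x => hνne x.1 x.2⟩
    rw [Nat.even_iff]
    have h' : Fintype.card ι % 2 = Fintype.card (Function.fixedPoints (ν : ι → ι)) % 2 := h
    rw [h', h0]
  obtain ⟨b⟩ := P.nonempty_base
  have hb : b.support.card = Module.finrank ℂ M := by
    rw [← P.ncard_eq_finrank_of_linearIndepOn_of b.linearIndepOn_root b.root_mem_or_neg_mem]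
    simp
  have h2r : 2 * Module.finrank ℂ M ≤ Fintype.card ι := by
    have hdisj : Disjoint b.support (b.support.image ν) := by
      rw [Finset.disjoint_left]
      intro i hi hi'
      obtain ⟨j, hj, rfl⟩ := Finset.mem_image.1 hi'
      exact b.root_ne_neg_of_ne hi hj (hνne j) (hν j)
    have := Finset.card_le_univ (b.support ∪ b.support.image ν)
    rw [Finset.card_union_of_disjoint hdisj, Finset.card_image_of_injective _
      (Function.LeftInverse.injective hνν)] at this
    omega
  have hpneg : ∀ i j, P.pairingIn ℤ (ν i) j = - P.pairingIn ℤ i j := by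
    intro i j
    apply (algebraMap ℤ ℂ).injective_int
    rw [map_neg, P.algebraMap_pairingIn, P.algebraMap_pairingIn]
    rw [← P.root_coroot_eq_pairing, ← P.root_coroot_eq_pairing, hν]
    simp
  -- symmetry
  have hsym : ∀ i j, P.pairingIn ℤ i j = P.pairingIn ℤ j i ∧ -2 ≤ P.pairingIn ℤ i j ∧
      P.pairingIn ℤ i j ≤ 2 := by
    intro i j
    have hm := P.pairingIn_pairingIn_mem_set_of_isCrystal_of_isRed i j
    have hS : P.pairingIn ℤ i j = -2 ∧ P.pairingIn ℤ j i = -2 ↔ P.root i = -P.root j :=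
      P.pairingIn_neg_two_neg_two_iff ℤ i j
    have h1 := hP i j
    have h2 := hP j i
    have h3 := hP (ν i) j
    have h4 := hP (ν j) i
    rw [hpneg, hν] at h3 h4
    have e1 : P.root j = - P.root i ↔ P.root i = - P.root j := by
      rw [eq_comm, neg_eq_iff_eq_neg]
    have e3 : - P.root i = - P.root j ↔ i = j := by simp
    have e4 : - P.root j = - P.root i ↔ i = j := by simp [eq_comm]
    have hS' := P.pairingIn_two_two_iff ℤ i j
    rw [e1, ← hS] at h2
    rw [← hS] at h1
    rw [e3, ← hS'] at h3
    rw [e4, ← hS'] at h4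
    simp only [Set.mem_insert_iff, Set.mem_singleton_iff, Prod.mk.injEq] at hm
    omega
  have hr : Module.finrank ℂ M = 2 := by
    obtain ⟨k, hk⟩ := heven
    have h0 : Module.finrank ℂ M ≠ 0 := by
      intro h0
      have : Nonempty ι := Fintype.card_pos_iff.1 (by omega)
      obtain ⟨i⟩ := this
      have := Module.finrank_zero_iff.1 h0
      exact P.ne_zero i (Subsingleton.elim _ _)
    omega
  have hn : Fintype.card ι = 8 := by omega
  have : Nonempty ι := Fintype.card_pos_iff.1 (by omega)
  obtain ⟨i⟩ := this
  obtain ⟨j, hj⟩ : ∃ j, j ∉ ({i, ν i} : Finset ι) := by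
    by_contra! hcon
    have := Finset.card_le_card (fun x _ => hcon x : (Finset.univ : Finset ι) ⊆ {i, ν i})
    have h2 := Finset.card_le_two (a := i) (b := ν i)
    rw [Finset.card_univ] at this
    omega
  simp only [Finset.mem_insert, Finset.mem_singleton, not_or] at hj
  have hli : LinearIndependent ℂ ![P.root i, P.root j] := by
    apply RootPairing.IsReduced.linearIndependent P (Ne.symm hj.1)
    intro h
    apply hj.2
    apply P.root.injective
    rw [hν, h, neg_neg]
  have hspan : ∀ k, ∃ x y : ℂ, P.root k = x • P.root i + y • P.root j := by
    intro k
    have htop := hli.span_eq_top_of_card_eq_finrank (by simp [hr])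
    have : P.root k ∈ Submodule.span ℂ (Set.range ![P.root i, P.root j]) := by
      rw [htop]; trivial
    rw [Matrix.range_cons, Matrix.range_cons, Matrix.range_empty, Set.union_empty,
      Set.singleton_union, Submodule.mem_span_pair] at this
    obtain ⟨x, y, h⟩ := this
    exact ⟨x, y, h.symm⟩
  set c := P.pairingIn ℤ i j with hc
  have hcC : P.pairing i j = (c : ℂ) := (P.algebraMap_pairingIn ℤ i j).symm
  have hcC' : P.pairing j i = (c : ℂ) := by
    rw [hc, (hsym i j).1]; exact (P.algebraMap_pairingIn ℤ j i).symm
  have hc1 : c = 0 ∨ c = 1 ∨ c = -1 := by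
    have h1 := (hsym i j)
    have h2 : c ≠ 2 := fun h => hj.1 ((P.pairingIn_two_two_iff ℤ i j).1 ⟨h, h1.1 ▸ h⟩).symm
    have h3 : c ≠ -2 := fun h => by
      apply hj.2
      apply P.root.injective
      rw [hν, (P.pairingIn_neg_two_neg_two_iff ℤ i j).1 ⟨h, h1.1 ▸ h⟩, neg_neg]
    omega
  let F : ι → ℤ × ℤ := fun k => (P.pairingIn ℤ k i, P.pairingIn ℤ k j)
  -- expansions
  have hexp : ∀ k l x y, P.root k = x • P.root i + y • P.root j →
      P.pairing k l = x * P.pairing i l + y * P.pairing j l := by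
    intro k l x y h
    rw [← P.root_coroot_eq_pairing, h]
    simp [P.root_coroot_eq_pairing]
  have key : ∀ (k : ι) (x y : ℂ), P.root k = x • P.root i + y • P.root j →
      ((F k).1 : ℂ) = 2 * x + c * y ∧ ((F k).2 : ℂ) = c * x + 2 * y ∧
      (2 : ℂ) = x * (F k).1 + y * (F k).2 := by
    intro k x y h
    have e1 : ((F k).1 : ℂ) = P.pairing k i := P.algebraMap_pairingIn ℤ k i
    have e2 : ((F k).2 : ℂ) = P.pairing k j := P.algebraMap_pairingIn ℤ k j
    have e1' : ((F k).1 : ℂ) = P.pairing i k := by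
      simp only [F]; rw [(hsym k i).1]; exact P.algebraMap_pairingIn ℤ i k
    have e2' : ((F k).2 : ℂ) = P.pairing j k := by
      simp only [F]; rw [(hsym k j).1]; exact P.algebraMap_pairingIn ℤ j k
    have h1 := hexp k i x y h
    have h2 := hexp k j x y h
    have h3 := hexp k k x y h
    rw [P.pairing_same] at h1 h2 h3
    refine ⟨?_, ?_, ?_⟩
    · rw [e1, h1, hcC']; ring
    · rw [e2, h2, hcC]; ring
    · rw [h3, e1', e2']
  have hc0 : (4 - (c:ℂ)^2) ≠ 0 := by
    rcases hc1 with h | h | h <;> rw [h] <;> norm_num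
  have hinj : Function.Injective F := by
    intro k l hkl
    obtain ⟨x, y, h⟩ := hspan k
    obtain ⟨x', y', h'⟩ := hspan l
    obtain ⟨a1, a2, -⟩ := key k x y h
    obtain ⟨b1, b2, -⟩ := key l x' y' h'
    rw [hkl] at a1 a2
    have hx : x = x' := by
      apply mul_left_cancel₀ hc0
      linear_combination (2 : ℂ) * b1 - 2 * a1 + c * a2 - c * b2
    have hy : y = y' := by
      apply mul_left_cancel₀ hc0
      linear_combination (2 : ℂ) * b2 - 2 * a2 + c * a1 - c * b1
    apply P.root.injective
    rw [h, h', hx, hy]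
  let T : Finset (ℤ × ℤ) := ((Finset.Icc (-2) 2) ×ˢ (Finset.Icc (-2) 2)).filter
    (fun u => u.1 ^ 2 - c * u.1 * u.2 + u.2 ^ 2 = 4 - c ^ 2)
  have hT : T.card ≤ 6 := by
    simp only [T]
    rcases hc1 with h | h | h <;> rw [h] <;> decide
  have hFT : ∀ k ∈ (Finset.univ : Finset ι), F k ∈ T := by
    intro k _
    obtain ⟨x, y, h⟩ := hspan k
    obtain ⟨a1, a2, a3⟩ := key k x y h
    have := hsym k i
    have := hsym k j
    simp only [T, Finset.mem_filter, Finset.mem_product, Finset.mem_Icc]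
    refine ⟨⟨⟨(hsym k i).2.1, (hsym k i).2.2⟩, ⟨(hsym k j).2.1, (hsym k j).2.2⟩⟩, ?_⟩
    have : (((F k).1 ^ 2 - c * (F k).1 * (F k).2 + (F k).2 ^ 2 : ℤ) : ℂ) = ((4 - c ^ 2 : ℤ) : ℂ) := by
      push_cast
      rw [a1, a2] at a3 ⊢
      linear_combination (-(4 - (c:ℂ)^2) / 2) * a3
    exact_mod_cast this
  have := Finset.card_le_card_of_injOn F hFT hinj.injOn
  rw [Finset.card_univ] at this
  omega


open LieAlgebra.IsKilling LieModule in
theorem aux_dim {S : Type*} [LieRing S] [LieAlgebra ℂ S] [FiniteDimensional ℂ S]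
    [IsKilling ℂ S] [Nontrivial S] (H : LieSubalgebra ℂ S) [H.IsCartanSubalgebra] :
    Module.finrank ℂ S = Module.finrank ℂ H + Fintype.card H.root := by
  classical
  have hint : DirectSum.IsInternal
      (fun χ : Weight ℂ H S => (rootSpace H χ).toSubmodule) := by
    rw [DirectSum.isInternal_submodule_iff_iSupIndep_and_iSup_eq_top]
    refine ⟨?_, ?_⟩
    · exact LieSubmodule.iSupIndep_toSubmodule.2 (iSupIndep_genWeightSpace' ℂ H S)
    · have := iSup_genWeightSpace_eq_top' ℂ H S
      rw [← LieSubmodule.toSubmodule_inj, LieSubmodule.iSup_toSubmodule] at this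
      simpa using this
  have h1 := (LinearEquiv.ofBijective (DirectSum.coeLinearMap
    (fun χ : Weight ℂ H S => (rootSpace H χ).toSubmodule)) hint).finrank_eq
  rw [Module.finrank_directSum] at h1
  rw [← h1, ← Finset.sum_filter_add_sum_filter_not Finset.univ
    (fun χ : Weight ℂ H S => χ.IsZero)]
  congr 1
  · have : (Finset.univ.filter (fun χ : Weight ℂ H S => χ.IsZero)) = {0} := by
      ext χ
      simp [Weight.isZero_iff_eq_zero]
    rw [this, Finset.sum_singleton]
    have h0 : (rootSpace H ((0 : Weight ℂ H S) : H → ℂ)) = H.toLieSubmodule := by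
      simp
    change Module.finrank ℂ (rootSpace H ((0 : Weight ℂ H S) : H → ℂ)) = _
    rw [h0]
    rfl
  · rw [Fintype.card_coe, Finset.card_eq_sum_ones]
    apply Finset.sum_congr rfl
    intro χ hχ
    simp only [Finset.mem_filter] at hχ
    exact finrank_rootSpace_eq_one χ hχ.2

open LieAlgebra.IsKilling LieModule in
theorem aux_lie_ne_zero {S : Type*} [LieRing S] [LieAlgebra ℂ S] [FiniteDimensional ℂ S]
    [IsKilling ℂ S] (H : LieSubalgebra ℂ S) [H.IsCartanSubalgebra]
    (α β : Weight ℂ H S) (hα : α.IsNonZero) (m : ℕ) (hm : 0 < m)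
    (h : β (coroot α) = -(m : ℂ)) :
    ∃ e ∈ rootSpace H α, ∃ x ∈ rootSpace H β, ⁅e, x⁆ ≠ 0 := by
  obtain ⟨h', e, f, ht, heα, hfα⟩ := exists_isSl2Triple_of_weight_isNonZero hα
  have hh := ht.h_eq_coroot hα heα hfα
  obtain ⟨x, hx, hx0⟩ := β.exists_ne_zero
  refine ⟨e, heα, x, hx, fun h0 => ?_⟩
  have hP : IsSl2Triple.HasPrimitiveVectorWith ht x (-(m:ℂ)) := by
    refine ⟨hx0, ?_, h0⟩
    rw [hh, ← h]
    exact lie_eq_smul_of_mem_rootSpace hx (coroot α)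
  obtain ⟨n, hn⟩ := hP.exists_nat
  have : ((n + m : ℕ) : ℂ) = 0 := by push_cast; rw [← hn]; ring
  have := Nat.cast_eq_zero.1 this
  omega

open LieAlgebra.IsKilling LieModule in
theorem aux_main {S : Type*} [LieRing S] [LieAlgebra ℂ S] [FiniteDimensional ℂ S]
    [IsKilling ℂ S] (H : LieSubalgebra ℂ S) [H.IsCartanSubalgebra]
    (g : ZMod 3 → Submodule ℂ S)
    (hdisj : ∀ i j x, x ∈ g i → x ∈ g j → x ≠ 0 → i = j)
    (hgrad : ∀ i j : ZMod 3, ∀ x ∈ g i, ∀ y ∈ g j, ⁅x, y⁆ ∈ g (i + j))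
    (hH : ∀ x ∈ H, x ∈ g 0)
    (hroot : ∀ α : Weight ℂ H S, α.IsNonZero → ∃ i, i ≠ 0 ∧ ∀ x ∈ rootSpace H α, x ∈ g i)
    (hdim : Module.finrank ℂ S = 10) : False := by
  have : Nontrivial S := Module.nontrivial_of_finrank_pos (R := ℂ) (by omega)
  choose! d hd0 hd using hroot
  -- additivity
  have hadd : ∀ (α β γ : Weight ℂ H S) (m : ℕ), α.IsNonZero → β.IsNonZero → γ.IsNonZero →
      (γ : H → ℂ) = α + β → 0 < m → β (coroot α) = -(m : ℂ) → d γ = d α + d β := by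
    intro α β γ m hα hβ hγ hsum hm h
    obtain ⟨e, he, x, hx, hex⟩ := aux_lie_ne_zero H α β hα m hm h
    have h1 := hgrad _ _ e (hd α hα e he) x (hd β hβ x hx)
    have h2 : ⁅e, x⁆ ∈ rootSpace H γ := by
      rw [hsum]; exact lie_mem_genWeightSpace_of_mem_genWeightSpace he hx
    exact hdisj _ _ _ (hd γ hγ _ h2) h1 hex
  have hneg : ∀ (α : Weight ℂ H S), α.IsNonZero → d (-α) = - d α := by
    intro α hα
    obtain ⟨h', e, f, ht, heα, hfα⟩ := exists_isSl2Triple_of_weight_isNonZero hα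
    have hh := ht.h_eq_coroot hα heα hfα
    have h1 := hgrad _ _ e (hd α hα e heα) f (hd (-α) hα.neg f hfα)
    rw [ht.lie_e_f] at h1
    have h2 : h' ∈ g 0 := hH _ (by rw [hh]; exact (coroot α).2)
    have := hdisj _ _ _ h1 h2 ht.h_ne_zero
    exact eq_neg_of_add_eq_zero_right this
  have hz : ∀ a b : ZMod 3, a ≠ 0 → b ≠ 0 → a + b ≠ 0 → a + (a + b) = 0 := by decide
  have hcomb := aux_root_count (rootSystem H) (by
    intro i j hij
    by_contra hne
    set α : Weight ℂ H S := j.1 with hαd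
    set β : Weight ℂ H S := i.1 with hβd
    have hα : α.IsNonZero := H.isNonZero_coe_root j
    have hβ : β.IsNonZero := H.isNonZero_coe_root i
    have hp : β (coroot α) = (((rootSystem H).pairingIn ℤ i j : ℤ) : ℂ) :=
      ((rootSystem H).algebraMap_pairingIn ℤ i j).symm
    set p := (rootSystem H).pairingIn ℤ i j with hpd
    have hp3 : -3 ≤ p := by
      have hm := (rootSystem H).pairingIn_pairingIn_mem_set_of_isCrystal_of_isRed i j
      simp only [Set.mem_insert_iff, Set.mem_singleton_iff, Prod.mk.injEq] at hm
      omega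
    have hchain : p = chainBotCoeff α β - chainTopCoeff α β := by
      have := apply_coroot_eq_cast α β
      rw [hp] at this
      exact_mod_cast this
    have hli : LinearIndependent ℂ ![(rootSystem H).root i, (rootSystem H).root j] := by
      apply RootPairing.IsReduced.linearIndependent _ _ hne
      rintro rfl
      have : p = 2 := by simp [hpd]
      omega
    have hnz : ∀ n : ℕ, (n : ℂ) • (α : H → ℂ) + β ≠ 0 := by
      intro n h0
      rw [LinearIndependent.pair_iff] at hli
      have := hli 1 n (by
        ext h
        have := congrFun h0 h
        simpa [hαd, hβd, add_comm] using this)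
      exact one_ne_zero this.1
    have hw1 : rootSpace H ((1:ℤ) • (α : H → ℂ) + β) ≠ ⊥ :=
      (rootSpace_zsmul_add_ne_bot_iff α β hα 1).2 ⟨by omega, by omega⟩
    have hw2 : rootSpace H ((2:ℤ) • (α : H → ℂ) + β) ≠ ⊥ :=
      (rootSpace_zsmul_add_ne_bot_iff α β hα 2).2 ⟨by omega, by omega⟩
    let γ : Weight ℂ H S := ⟨_, hw1⟩
    let δ : Weight ℂ H S := ⟨_, hw2⟩
    have hγe : (γ : H → ℂ) = α + β := by
      change (1:ℤ) • (α : H → ℂ) + β = _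
      simp
    have hδe : (δ : H → ℂ) = α + α + β := by
      change (2:ℤ) • (α : H → ℂ) + β = _
      rw [two_smul]
    have hγ : γ.IsNonZero := by
      intro h
      apply hnz 1
      rw [← h.eq, hγe]; simp
    have hδ : δ.IsNonZero := by
      intro h
      apply hnz 2
      rw [← h.eq, hδe]; simp [two_smul]
    have h2 : α (coroot α) = 2 := root_apply_coroot hα
    have s1 : d γ = d α + d β := by
      apply hadd α β γ (-p).toNat hα hβ hγ hγe (by omega)
      rw [hp]
      have : (((-p).toNat : ℤ) : ℂ) = ((-p : ℤ) : ℂ) := by congr 1; omega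
      push_cast at this
      rw [this]; simp
    have s2 : d γ = d (-α) + d δ := by
      apply hadd (-α) δ γ (4 + p).toNat hα.neg hδ hγ
      · rw [hγe, hδe, Weight.coe_neg]; abel
      · omega
      · have : (((4 + p).toNat : ℤ) : ℂ) = ((4 + p : ℤ) : ℂ) := by congr 1; omega
        push_cast at this
        rw [this, coroot_neg, hδe]
        simp [h2, hp]
        ring
    rw [hneg α hα] at s2
    have s3 : d δ = d α + (d α + d β) := by rw [← s1, s2]; ring
    apply hd0 δ hδ
    rw [s3]
    exact hz _ _ (hd0 α hα) (hd0 β hβ) (s1 ▸ hd0 γ hγ))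
  apply hcomb
  rw [Subspace.dual_finrank_eq, ← aux_dim H, hdim]


set_option maxHeartbeats 1000000 in
theorem aux_finrank_sp : Module.finrank ℂ (Symplectic.sp (Fin 2) ℂ) = 10 := by
  have hmem : ∀ M : Matrix (Fin 2 ⊕ Fin 2) (Fin 2 ⊕ Fin 2) ℂ, M ∈ Symplectic.sp (Fin 2) ℂ ↔
      (M.transpose * Matrix.J (Fin 2) ℂ = Matrix.J (Fin 2) ℂ * (-M)) := by
    intro M
    simp only [Symplectic.sp, mem_skewAdjointMatricesLieSubalgebra,
      mem_skewAdjointMatricesSubmodule]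
    rfl
  let f : Symplectic.sp (Fin 2) ℂ →ₗ[ℂ] (Fin 10 → ℂ) :=
    { toFun := fun M => ![M.1 (.inl 0) (.inl 0), M.1 (.inl 0) (.inl 1), M.1 (.inl 1) (.inl 0),
        M.1 (.inl 1) (.inl 1), M.1 (.inl 0) (.inr 0), M.1 (.inl 0) (.inr 1),
        M.1 (.inl 1) (.inr 1), M.1 (.inr 0) (.inl 0), M.1 (.inr 0) (.inl 1),
        M.1 (.inr 1) (.inl 1)]
      map_add' := by
        intro x y
        ext i; fin_cases i <;> rfl
      map_smul' := by
        intro c x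
        ext i; fin_cases i <;> rfl }
  have hinj : Function.Injective f := by
    rw [← LinearMap.ker_eq_bot, LinearMap.ker_eq_bot']
    intro M hM
    have h := (hmem M.1).1 M.2
    have e : ∀ i j, (M.1.transpose * Matrix.J (Fin 2) ℂ) i j = (Matrix.J (Fin 2) ℂ * (-M.1)) i j :=
      fun i j => by rw [h]
    have v : ∀ i, f M i = 0 := fun i => by rw [hM]; rfl
    simp only [Matrix.mul_apply, Fintype.sum_sum_type, Fin.sum_univ_two, Matrix.J,
      Matrix.transpose_apply, Sum.forall, Fin.forall_fin_two, Matrix.fromBlocks_apply₁₁,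
      Matrix.fromBlocks_apply₁₂, Matrix.fromBlocks_apply₂₁, Matrix.fromBlocks_apply₂₂,
      Matrix.neg_apply, Matrix.zero_apply, Matrix.one_apply] at e
    have v0 : M.1 (.inl 0) (.inl 0) = 0 := v 0
    have v1 : M.1 (.inl 0) (.inl 1) = 0 := v 1
    have v2 : M.1 (.inl 1) (.inl 0) = 0 := v 2
    have v3 : M.1 (.inl 1) (.inl 1) = 0 := v 3
    have v4 : M.1 (.inl 0) (.inr 0) = 0 := v 4
    have v5 : M.1 (.inl 0) (.inr 1) = 0 := v 5
    have v6 : M.1 (.inl 1) (.inr 1) = 0 := v 6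
    have v7 : M.1 (.inr 0) (.inl 0) = 0 := v 7
    have v8 : M.1 (.inr 0) (.inl 1) = 0 := v 8
    have v9 : M.1 (.inr 1) (.inl 1) = 0 := v 9
    simp [v0, v1, v2, v3, v4, v5, v6, v7, v8, v9] at e
    clear v hM h hmem
    obtain ⟨M, hM⟩ := M
    simp only at *
    have key : ∀ i j, M i j = 0 := by
      simp only [Sum.forall, Fin.forall_fin_two]
      grind
    exact Subtype.ext (Matrix.ext key)
  have hsurj : Function.Surjective f := by
    intro v
    refine ⟨⟨Matrix.fromBlocks !![v 0, v 1; v 2, v 3] !![v 4, v 5; v 5, v 6]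
      !![v 7, v 8; v 8, v 9] !![-v 0, -v 2; -v 1, -v 3], ?_⟩, ?_⟩
    · rw [hmem]
      simp only [Matrix.J, Matrix.fromBlocks_transpose, Matrix.fromBlocks_multiply,
        Matrix.fromBlocks_neg]
      congr 1 <;> ext i j <;> fin_cases i <;> fin_cases j <;> simp
    · ext i; fin_cases i <;> rfl
  rw [(LinearEquiv.ofBijective f ⟨hinj, hsurj⟩).finrank_eq]
  simp


theorem aux_trivial_radical {L S : Type*} [LieRing L] [LieAlgebra ℂ L] [FiniteDimensional ℂ L]
    [LieAlgebra.HasTrivialRadical ℂ L] [LieRing S] [LieAlgebra ℂ S] [FiniteDimensional ℂ S]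
    (π : L →ₗ⁅ℂ⁆ S) (ι : S →ₗ⁅ℂ⁆ L) (hπι : ∀ s, π (ι s) = s)
    (hl : ∀ l s, ⁅l, ι s⁆ = ι ⁅π l, s⁆) : LieAlgebra.HasTrivialRadical ℂ S := by
  rw [hasTrivialRadical_iff_no_abelian_ideals]
  intro I hI
  let J : LieIdeal ℂ L :=
    { I.toSubmodule.map (ι : S →ₗ[ℂ] L) with
      lie_mem := by
        rintro x m ⟨s, hs, rfl⟩
        exact ⟨⁅π x, s⁆, lie_mem_right ℂ S I _ _ hs, (hl x s).symm⟩ }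
  have hJ : IsLieAbelian J := by
    constructor
    rintro ⟨_, s, hs, rfl⟩ ⟨_, t, ht, rfl⟩
    apply Subtype.ext
    change ⁅ι s, ι t⁆ = 0
    have h0 : ⁅(⟨s, hs⟩ : I), (⟨t, ht⟩ : I)⁆ = 0 := hI.trivial _ _
    have h1 : ⁅s, t⁆ = 0 := congrArg Subtype.val h0
    rw [← LieHom.map_lie, h1, map_zero]
  have hbot := (hasTrivialRadical_iff_no_abelian_ideals ℂ L).1 inferInstance J hJ
  rw [LieSubmodule.eq_bot_iff] at hbot ⊢
  intro s hs
  have := hbot (ι s) ⟨s, hs, rfl⟩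
  rw [← hπι s, this, map_zero]

theorem aux_cartan {L S : Type*} [LieRing L] [LieAlgebra ℂ L]
    [LieRing S] [LieAlgebra ℂ S]
    (π : L →ₗ⁅ℂ⁆ S) (ι : S →ₗ⁅ℂ⁆ L) (hπι : ∀ s, π (ι s) = s)
    (hl : ∀ l s, ⁅l, ι s⁆ = ι ⁅π l, s⁆) (K : LieSubalgebra ℂ L) (hK : K.IsCartanSubalgebra)
    (hab : ∀ x ∈ K, ∀ y ∈ K, ⁅x, y⁆ = 0) :
    (K.comap ι).IsCartanSubalgebra ∧ ∀ k ∈ K, π k ∈ K.comap ι := by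
  have hinj : Function.Injective ι := Function.LeftInverse.injective hπι
  have hmem : ∀ k ∈ K, π k ∈ K.comap ι := by
    intro k hk
    change ι (π k) ∈ K
    rw [← hK.self_normalizing, LieSubalgebra.mem_normalizer_iff']
    intro y hy
    rw [hl, ← LieHom.map_lie, hab y hy k hk]
    simp
  refine ⟨⟨?_, ?_⟩, hmem⟩
  · have : IsLieAbelian (K.comap ι) := by
      constructor
      intro x y
      apply Subtype.ext
      apply hinj
      change ι ⁅x.1, y.1⁆ = ι 0
      have h0 : ⁅ι x.1, ι y.1⁆ = 0 := hab _ x.2 _ y.2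
      rw [LieHom.map_lie, h0, map_zero]
    infer_instance
  · apply le_antisymm _ (LieSubalgebra.le_normalizer _)
    intro s hs
    rw [LieSubalgebra.mem_normalizer_iff'] at hs
    change ι s ∈ K
    rw [← hK.self_normalizing, LieSubalgebra.mem_normalizer_iff']
    intro y hy
    rw [hl]
    exact hs _ (hmem y hy)

open LieAlgebra.IsKilling LieModule in
theorem aux_root_graded {L S : Type*} [LieRing L] [LieAlgebra ℂ L] [FiniteDimensional ℂ L]
    [IsKilling ℂ L] [LieRing S] [LieAlgebra ℂ S] [FiniteDimensional ℂ S] [IsKilling ℂ S]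
    (π : L →ₗ⁅ℂ⁆ S) (ι : S →ₗ⁅ℂ⁆ L) (hπι : ∀ s, π (ι s) = s)
    (hl : ∀ l s, ⁅l, ι s⁆ = ι ⁅π l, s⁆)
    (g : ZMod 3 → Submodule ℂ L)
    (hinternal : DirectSum.IsInternal g)
    (hgrad : ∀ i j : ZMod 3, ∀ x ∈ g i, ∀ y ∈ g j, ⁅x, y⁆ ∈ g (i + j))
    (K : LieSubalgebra ℂ L) (hK : ∀ x, x ∈ K ↔ x ∈ g 0)
    [K.IsCartanSubalgebra] [(K.comap ι).IsCartanSubalgebra]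
    (hmem : ∀ k ∈ K, π k ∈ K.comap ι)
    (hab : ∀ x ∈ K, ∀ y ∈ K, ⁅x, y⁆ = 0)
    (α : Weight ℂ (K.comap ι) S) (hα : α.IsNonZero) :
    ∃ i, i ≠ 0 ∧ ∀ x ∈ rootSpace (K.comap ι) α, ι x ∈ g i := by
  classical
  let _ := hinternal.chooseDecomposition
  have hinj : Function.Injective ι := Function.LeftInverse.injective hπι
  -- projections commute with the bracket by elements of K
  have hcomm : ∀ i, ∀ k ∈ K, ∀ y : L, (DirectSum.decompose g ⁅k, y⁆ i : L) =
      ⁅k, (DirectSum.decompose g y i : L)⁆ := by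
    intro i k hk y
    induction y using DirectSum.Decomposition.inductionOn g with
    | zero => simp
    | @homogeneous j m =>
      have h1 : ⁅k, (m : L)⁆ ∈ g j := by
        have := hgrad 0 j k ((hK k).1 hk) m m.2
        rwa [zero_add] at this
      by_cases hij : j = i
      · subst hij
        rw [DirectSum.decompose_of_mem_same g h1, DirectSum.decompose_of_mem_same g m.2]
      · rw [DirectSum.decompose_of_mem_ne g h1 hij, DirectSum.decompose_of_mem_ne g m.2 hij,
          lie_zero]
    | add a b ha hb =>
      simp only [lie_add, DirectSum.decompose_add, DirectSum.add_apply, Submodule.coe_add, ha, hb]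
  let χ : K → ℂ := fun k => α ⟨π k.1, hmem k.1 k.2⟩
  have hιx : ∀ x ∈ rootSpace (K.comap ι) α, ∀ k : K, ⁅(k : L), ι x⁆ = χ k • ι x := by
    intro x hx k
    rw [hl]
    have := lie_eq_smul_of_mem_rootSpace hx ⟨π k.1, hmem k.1 k.2⟩
    change ⁅π k.1, x⁆ = _ at this
    rw [this, map_smul]
  have hW : ∀ y : L, (∀ k : K, ⁅(k : L), y⁆ = χ k • y) → y ∈ rootSpace K χ := by
    intro y hy
    apply weightSpace_le_genWeightSpace
    rw [mem_weightSpace]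
    exact hy
  obtain ⟨x, hx, hx0⟩ := α.exists_ne_zero
  have hιx0 : ι x ≠ 0 := fun h => hx0 (hinj (by rw [h, map_zero]))
  let ω : Weight ℂ K L := ⟨χ, by
    intro hbot
    have := hW _ (hιx x hx)
    have h2 : ι x ∈ (⊥ : LieSubmodule ℂ K L) := hbot ▸ this
    exact hιx0 (by simpa using h2)⟩
  obtain ⟨k0, hk0⟩ : ∃ k : K, χ k ≠ 0 := by
    by_contra! hcon
    apply hα
    ext h
    have := hcon ⟨ι h.1, h.2⟩
    simpa [χ, hπι] using this
  have hω : ω.IsNonZero := fun h => hk0 (congrFun h k0)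
  have h1 : Module.finrank ℂ (rootSpace K χ) = 1 := finrank_rootSpace_eq_one ω hω
  obtain ⟨i, hi⟩ : ∃ i, (DirectSum.decompose g (ι x) i : L) ≠ 0 := by
    by_contra! hcon
    apply hιx0
    have : DirectSum.decompose g (ι x) = 0 := by
      ext i; simpa using hcon i
    exact (DirectSum.decompose g).injective (by rw [this, DirectSum.decompose_zero])
  set y : L := (DirectSum.decompose g (ι x) i : L) with hy
  have hyg : y ∈ g i := (DirectSum.decompose g (ι x) i).2
  have hyk : ∀ k : K, ⁅(k : L), y⁆ = χ k • y := by
    intro k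
    rw [hy, ← hcomm i k.1 k.2, hιx x hx, DirectSum.decompose_smul]
    rfl
  refine ⟨i, ?_, ?_⟩
  · rintro rfl
    have := hyk k0
    rw [hab _ k0.2 _ ((hK y).2 hyg)] at this
    exact (smul_ne_zero hk0 hi) this.symm
  · intro z hz
    obtain ⟨c, hc⟩ := (finrank_eq_one_iff_of_nonzero' (⟨y, hW y hyk⟩ : rootSpace K χ)
      (by simpa [Subtype.ext_iff] using hi)).1 h1 ⟨ι z, hW _ (hιx z hz)⟩
    have : c • y = ι z := congrArg Subtype.val hc
    rw [← this]
    exact (g i).smul_mem c hyg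

/-- A finite-dimensional semisimple complex Lie algebra with a `ℤ/3ℤ`-grading whose
degree-zero part is a Cartan subalgebra is not isomorphic to the semisimple Lie algebra
of type `B₂ ⊕ A₂ ⊕ A₁ ⊕ A₁` (realized as `sp₄ × sl₃ × sl₂ × sl₂`): no simple component
of type `B₂` can occur. -/
theorem no_B2_component_of_z3_graded_with_cartan_zero_part
    {L : Type*} [LieRing L] [LieAlgebra ℂ L] [FiniteDimensional ℂ L]
    [LieAlgebra.IsSemisimple ℂ L]
    (g : ZMod 3 → Submodule ℂ L)
    (hinternal : DirectSum.IsInternal g)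
    (hgrad : ∀ i j : ZMod 3, ∀ x ∈ g i, ∀ y ∈ g j, ⁅x, y⁆ ∈ g (i + j))
    (K : LieSubalgebra ℂ L) (hK : (K : Set L) = (g 0 : Set L))
    (hcartan : K.IsCartanSubalgebra) :
    ¬ Nonempty (L ≃ₗ⁅ℂ⁆
      (Symplectic.sp (Fin 2) ℂ ×
        (SpecialLinear.sl (Fin 3) ℂ ×
          (SpecialLinear.sl (Fin 2) ℂ × SpecialLinear.sl (Fin 2) ℂ)))) := by
  rintro ⟨e⟩
  let π : L →ₗ⁅ℂ⁆ Symplectic.sp (Fin 2) ℂ :=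
    { toFun := fun l => (e l).1
      map_add' := fun x y => by simp
      map_smul' := fun c x => by simp
      map_lie' := fun {x y} => congrArg Prod.fst (LieEquiv.map_lie e x y) }
  let ι : Symplectic.sp (Fin 2) ℂ →ₗ⁅ℂ⁆ L :=
    { toFun := fun s => e.symm (s, 0)
      map_add' := fun x y => by
        rw [← map_add]; congr 1; ext <;> simp
      map_smul' := fun c x => by
        rw [RingHom.id_apply, ← map_smul]; congr 1; ext <;> simp
      map_lie' := fun {x y} => by
        rw [← LieEquiv.map_lie]
        congr 1
        exact Prod.ext rfl (lie_zero _).symm }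
  have hπι : ∀ s, π (ι s) = s := fun s => by
    change (e (e.symm (s, 0))).1 = s
    rw [LieEquiv.apply_symm_apply]
  have hl : ∀ l s, ⁅l, ι s⁆ = ι ⁅π l, s⁆ := fun l s => by
    change ⁅l, e.symm (s, 0)⁆ = e.symm (⁅(e l).1, s⁆, 0)
    apply e.injective
    change e ⁅l, e.symm (s, 0)⁆ = e (e.symm (⁅(e l).1, s⁆, 0))
    rw [LieEquiv.map_lie, LieEquiv.apply_symm_apply, LieEquiv.apply_symm_apply]
    exact Prod.ext rfl (lie_zero _)
  have hinj : Function.Injective ι := Function.LeftInverse.injective hπι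
  have hrad := aux_trivial_radical π ι hπι hl
  have hKm : ∀ x, x ∈ K ↔ x ∈ g 0 := fun x => Set.ext_iff.1 hK x
  have hab : ∀ x ∈ K, ∀ y ∈ K, ⁅x, y⁆ = 0 := by
    intro x hx y hy
    have hA : IsLieAbelian K := inferInstance
    exact congrArg Subtype.val (hA.trivial ⟨x, hx⟩ ⟨y, hy⟩)
  obtain ⟨hC, hmem⟩ := aux_cartan π ι hπι hl K hcartan hab
  refine aux_main (K.comap ι) (fun i => (g i).comap (ι : Symplectic.sp (Fin 2) ℂ →ₗ[ℂ] L))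
    ?_ ?_ ?_ ?_ aux_finrank_sp
  · intro i j x hi hj hx
    by_contra hne
    have hd := hinternal.submodule_iSupIndep.pairwiseDisjoint hne
    have h0 := Submodule.disjoint_def.1 hd (ι x) hi hj
    exact hx (hinj (by rw [h0, map_zero]))
  · intro i j x hx y hy
    change ι ⁅x, y⁆ ∈ g (i + j)
    rw [LieHom.map_lie]
    exact hgrad i j _ hx _ hy
  · intro x hx
    exact (hKm _).1 hx
  · intro α hα
    exact aux_root_graded π ι hπι hl g hinternal hgrad K hKm hmem hab α hα
end

section
/- A semisimple Z/3Z-graded complex Lie algebra g = g_0 ⊕ g_1 ⊕ g_2 of dimension 24 whose degree-zero part g_0 is an abelian 6-dimensional subalgebra acting semisimply on g_1 and g_2 is isomorphic to the direct sum of three copies of sl_3 (type A_2^3). -/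
open LieAlgebra

section Part1

set_option linter.unusedSectionVars false

variable {L : Type*} [LieRing L] [LieAlgebra ℂ L] [FiniteDimensional ℂ L]

lemma z3_dec (g : ZMod 3 → Submodule ℂ L) (hi : DirectSum.IsInternal g) (x : L) :
    ∃ x0 ∈ g 0, ∃ x1 ∈ g 1, ∃ x2 ∈ g 2, x = x0 + x1 + x2 := by
  have h : x ∈ ⨆ i, g i := by rw [hi.submodule_iSup_eq_top]; trivial
  rw [Submodule.mem_iSup_iff_exists_finsupp] at h
  obtain ⟨f, hf, hs⟩ := h
  refine ⟨f 0, hf 0, f 1, hf 1, f 2, hf 2, ?_⟩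
  rw [← hs, Finsupp.sum_fintype _ _ (fun _ => rfl)]
  exact Fin.sum_univ_three f

lemma z3_uniq (g : ZMod 3 → Submodule ℂ L) (hi : DirectSum.IsInternal g) {x0 x1 x2 : L}
    (h0 : x0 ∈ g 0) (h1 : x1 ∈ g 1) (h2 : x2 ∈ g 2) (h : x0 + x1 + x2 = 0) :
    x0 = 0 ∧ x1 = 0 ∧ x2 = 0 := by
  have := hi.submodule_iSupIndep
  have a1 : ∀ i : ZMod 3, i + 1 ≠ i := by decide
  have a2 : ∀ i : ZMod 3, i + 2 ≠ i := by decide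
  have d01 : ∀ i : ZMod 3, ∀ a ∈ g i, ∀ b ∈ g (i+1), ∀ c ∈ g (i+2), a + b + c = 0 → a = 0 := by
    intro i a ha b hb c hc hs
    have hd := this i
    rw [Submodule.disjoint_def] at hd
    refine hd a ha ?_
    have : a = -(b + c) := by rw [eq_neg_iff_add_eq_zero, ← add_assoc, hs]
    rw [this]
    refine neg_mem (add_mem ?_ ?_)
    · exact Submodule.mem_iSup_of_mem (i+1) (Submodule.mem_iSup_of_mem (a1 i) hb)
    · exact Submodule.mem_iSup_of_mem (i+2) (Submodule.mem_iSup_of_mem (a2 i) hc)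
  refine ⟨d01 0 _ h0 _ h1 _ h2 h, d01 1 _ h1 x2 h2 x0 h0 (by rw [← h]; abel),
    d01 2 _ h2 x0 h0 x1 h1 (by rw [← h]; abel)⟩

lemma z3_end (V : Type*) [AddCommGroup V] [Module ℂ V] (f : Module.End ℂ V)
    (htop : ⨆ μ, f.eigenspace μ = ⊤) {x : V} (hx : f (f x) = 0) : f x = 0 := by
  have hle : (fun μ => f.eigenspace μ) ≤ (fun μ => f.maxGenEigenspace μ) := fun μ =>
    (f.genEigenspace μ).monotone le_top
  have heq := (f.independent_maxGenEigenspace.le_iff_eq_of_iSup_eq_top htop).1 hle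
  have h0 : x ∈ f.maxGenEigenspace 0 := by
    rw [Module.End.mem_maxGenEigenspace]
    exact ⟨2, by simpa [pow_two] using hx⟩
  rw [← congr_fun heq 0, Module.End.mem_eigenspace_iff] at h0
  simpa using h0

lemma z3_ss (g : ZMod 3 → Submodule ℂ L) (hi : DirectSum.IsInternal g)
    (habelian : ∀ x ∈ g 0, ∀ y ∈ g 0, ⁅x, y⁆ = 0)
    (hss : ∀ x ∈ g 0, ∀ k : ZMod 3, k ≠ 0 → ∃ s : Set L, s ⊆ g k ∧
      Submodule.span ℂ s = g k ∧ ∀ y ∈ s, ∃ c : ℂ, ⁅x, y⁆ = c • y)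
    {h : L} (hh : h ∈ g 0) {x : L} (hx : ⁅h, ⁅h, x⁆⁆ = 0) : ⁅h, x⁆ = 0 := by
  have htop : ⨆ μ, (LieAlgebra.ad ℂ L h).eigenspace μ = ⊤ := by
    rw [eq_top_iff, ← hi.submodule_iSup_eq_top]
    refine iSup_le fun k => ?_
    by_cases hk : k = 0
    · subst hk
      intro y hy
      refine Submodule.mem_iSup_of_mem (0 : ℂ) (Module.End.mem_eigenspace_iff.2 ?_)
      rw [LieAlgebra.ad_apply, habelian h hh y hy, zero_smul]
    · obtain ⟨s, -, hs, hy⟩ := hss h hh k hk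
      rw [← hs, Submodule.span_le]
      intro y hys
      obtain ⟨c, hc⟩ := hy y hys
      refine Submodule.mem_iSup_of_mem c (Module.End.mem_eigenspace_iff.2 ?_)
      rw [LieAlgebra.ad_apply, hc]
  exact z3_end L (LieAlgebra.ad ℂ L h) htop hx

lemma z3_kill (g : ZMod 3 → Submodule ℂ L) (hi : DirectSum.IsInternal g)
    (hgrad : ∀ i j : ZMod 3, ∀ x ∈ g i, ∀ y ∈ g j, ⁅x, y⁆ ∈ g (i + j)) {i j : ZMod 3}
    (hij : i + j ≠ 0) {x y : L} (hx : x ∈ g i) (hy : y ∈ g j) : killingForm ℂ L x y = 0 := by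
  rw [killingForm_apply_apply]
  refine LinearMap.trace_eq_zero_of_mapsTo_ne hi (fun k => i + (j + k)) ?_ ?_
  · intro k h
    apply hij
    have : i + j + k = k := by rw [add_assoc]; exact h
    simpa using this
  · intro k z hz
    exact hgrad _ _ _ hx _ (hgrad _ _ _ hy _ hz)

/-- The centralizer of `g 0`. -/
def z3Cent (g : ZMod 3 → Submodule ℂ L) : LieSubalgebra ℂ L where
  carrier := {x | ∀ h ∈ g 0, ⁅h, x⁆ = 0}
  add_mem' := by intro a b ha hb h hh; rw [lie_add, ha h hh, hb h hh, add_zero]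
  zero_mem' := by intro h hh; simp
  smul_mem' := by intro c x hx h hh; rw [lie_smul, hx h hh, smul_zero]
  lie_mem' := by
    intro x y hx hy h hh
    rw [leibniz_lie, hx h hh, hy h hh]; simp

variable [LieAlgebra.IsKilling ℂ L]

lemma z3_main1 (g : ZMod 3 → Submodule ℂ L) (hi : DirectSum.IsInternal g)
    (hgrad : ∀ i j : ZMod 3, ∀ x ∈ g i, ∀ y ∈ g j, ⁅x, y⁆ ∈ g (i + j))
    (habelian : ∀ x ∈ g 0, ∀ y ∈ g 0, ⁅x, y⁆ = 0)
    (hss : ∀ x ∈ g 0, ∀ k : ZMod 3, k ≠ 0 → ∃ s : Set L, s ⊆ g k ∧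
      Submodule.span ℂ s = g k ∧ ∀ y ∈ s, ∃ c : ℂ, ⁅x, y⁆ = c • y) :
    ∃ H : LieSubalgebra ℂ L, H.IsCartanSubalgebra ∧ H.toSubmodule = g 0 := by
  have hmem : ∀ x, x ∈ z3Cent g ↔ ∀ h ∈ g 0, ⁅h, x⁆ = 0 := fun x => Iff.rfl
  -- components
  have hdec : ∀ x ∈ z3Cent g, ∃ x0 ∈ g 0, ∃ x1 ∈ g 1, ∃ x2 ∈ g 2, x = x0 + x1 + x2 ∧
      x1 ∈ z3Cent g ∧ x2 ∈ z3Cent g := by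
    intro x hx
    obtain ⟨x0, h0, x1, h1, x2, h2, rfl⟩ := z3_dec g hi x
    refine ⟨x0, h0, x1, h1, x2, h2, rfl, ?_, ?_⟩
    · intro h hh
      have := hx h hh
      rw [lie_add, lie_add] at this
      exact (z3_uniq g hi (hgrad 0 0 _ hh _ h0) (hgrad 0 1 _ hh _ h1) (hgrad 0 2 _ hh _ h2) this).2.1
    · intro h hh
      have := hx h hh
      rw [lie_add, lie_add] at this
      exact (z3_uniq g hi (hgrad 0 0 _ hh _ h0) (hgrad 0 1 _ hh _ h1) (hgrad 0 2 _ hh _ h2) this).2.2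
  have hker : ∀ x : L, (∀ y, killingForm ℂ L x y = 0) → x = 0 := by
    intro x hx
    have : x ∈ LinearMap.ker (killingForm ℂ L) := by
      rw [LinearMap.mem_ker]; ext y; simpa using hx y
    simpa using this
  have h12 : ∀ x ∈ g 1, x ∈ z3Cent g → ∀ y ∈ g 2, y ∈ z3Cent g → ⁅x, y⁆ = 0 := by
    intro x hx hxz y hy hyz
    have h0 : ⁅x, y⁆ ∈ g 0 := hgrad 1 2 x hx y hy
    apply hker
    intro w
    obtain ⟨w0, hw0, w1, hw1, w2, hw2, rfl⟩ := z3_dec g hi w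
    rw [map_add, map_add, z3_kill g hi hgrad (i := 0) (j := 1) (by decide) h0 hw1,
      z3_kill g hi hgrad (i := 0) (j := 2) (by decide) h0 hw2]
    have : killingForm ℂ L ⁅x, y⁆ w0 = killingForm ℂ L x ⁅y, w0⁆ :=
      LieModule.traceForm_apply_lie_apply ℂ L L x y w0
    rw [this, ← lie_skew, hyz w0 hw0]
    simp
  have h21 : ∀ x ∈ g 2, x ∈ z3Cent g → ∀ y ∈ g 1, y ∈ z3Cent g → ⁅x, y⁆ = 0 := by
    intro x hx hxz y hy hyz
    rw [← lie_skew, h12 y hy hyz x hx hxz, neg_zero]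
  have h0c : ∀ x ∈ g 0, ∀ y ∈ z3Cent g, ⁅x, y⁆ = 0 := fun x hx y hy => hy x hx
  have hc0 : ∀ x ∈ g 0, ∀ y ∈ z3Cent g, ⁅y, x⁆ = 0 := fun x hx y hy => by
    rw [← lie_skew, hy x hx, neg_zero]
  have hnil : ∀ x ∈ z3Cent g, ∀ y ∈ z3Cent g, ∀ w ∈ z3Cent g, ⁅x, ⁅y, w⁆⁆ = 0 := by
    intro x hx y hy w hw
    obtain ⟨x0, hx0, x1, hx1, x2, hx2, rfl, hx1z, hx2z⟩ := hdec x hx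
    obtain ⟨y0, hy0, y1, hy1, y2, hy2, rfl, hy1z, hy2z⟩ := hdec y hy
    obtain ⟨w0, hw0, w1, hw1, w2, hw2, rfl, hw1z, hw2z⟩ := hdec w hw
    have e : ⁅y0 + y1 + y2, w0 + w1 + w2⁆ = ⁅y1, w1⁆ + ⁅y2, w2⁆ := by
      have := h0c y0 hy0 _ hw
      rw [add_lie, add_lie, this]
      simp only [lie_add]
      rw [hc0 w0 hw0 y1 hy1z, hc0 w0 hw0 y2 hy2z, h12 y1 hy1 hy1z w2 hw2 hw2z,
        h21 y2 hy2 hy2z w1 hw1 hw1z]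
      abel
    have m1 : ⁅y1, w1⁆ ∈ z3Cent g := LieSubalgebra.lie_mem _ hy1z hw1z
    have m2 : ⁅y2, w2⁆ ∈ z3Cent g := LieSubalgebra.lie_mem _ hy2z hw2z
    have n1 : ⁅y1, w1⁆ ∈ g 2 := hgrad 1 1 _ hy1 _ hw1
    have n2 : ⁅y2, w2⁆ ∈ g 1 := hgrad 2 2 _ hy2 _ hw2
    rw [e, add_lie, add_lie, h0c x0 hx0 _ (add_mem m1 m2), lie_add, lie_add, h12 x1 hx1 hx1z _ n1 m1,
      h21 x2 hx2 hx2z _ n2 m2, leibniz_lie x1 y2 w2, h12 x1 hx1 hx1z y2 hy2 hy2z,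
      h12 x1 hx1 hx1z w2 hw2 hw2z, leibniz_lie x2 y1 w1, h21 x2 hx2 hx2z y1 hy1 hy1z,
      h21 x2 hx2 hx2z w1 hw1 hw1z]
    simp
  have hcar : (z3Cent g).IsCartanSubalgebra := by
    constructor
    · refine LieModule.IsNilpotent.mk (R := ℂ) (k := 2) (M := z3Cent g) ?_
      rw [LieModule.lowerCentralSeries_succ, LieModule.lowerCentralSeries_succ,
        LieModule.lowerCentralSeries_zero, LieSubmodule.lie_eq_bot_iff]
      intro x _ m hm
      rw [← LieSubmodule.mem_toSubmodule, LieSubmodule.lieIdeal_oper_eq_linear_span'] at hm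
      induction hm using Submodule.span_induction with
      | mem u hu =>
        obtain ⟨y, -, w, -, rfl⟩ := hu
        ext
        exact hnil x x.2 y y.2 w w.2
      | zero => simp
      | add u v _ _ hu hv => rw [lie_add, hu, hv, add_zero]
      | smul t u _ hu => rw [lie_smul, hu, smul_zero]
    · refine le_antisymm ?_ (LieSubalgebra.le_normalizer _)
      intro x hx h hh
      rw [LieSubalgebra.mem_normalizer_iff'] at hx
      have hz : h ∈ z3Cent g := fun y hy => habelian y hy h hh
      exact z3_ss g hi habelian hss hh (hx h hz h hh)
  refine ⟨z3Cent g, hcar, ?_⟩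
  have key : ∀ k : ZMod 3, k ≠ 0 → ∀ x ∈ g k, x ∈ z3Cent g → x = 0 := by
    have a3 : ∀ k : ZMod 3, k ≠ 0 → k = 1 ∨ k = 2 := by decide
    intro k hk x hx hxz
    have : (⟨x, hxz⟩ : z3Cent g) ∈ ⨅ α : LieModule.Weight ℂ (z3Cent g) L, α.ker := by
      rw [Submodule.mem_iInf]
      intro α
      obtain ⟨e, he0, he⟩ := LieModule.exists_forall_lie_eq_smul ℂ (z3Cent g) L α
      have he' : ∀ y (hy : y ∈ z3Cent g), ⁅y, e⁆ = α ⟨y, hy⟩ • e := fun y hy => he ⟨y, hy⟩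
      suffices α ⟨x, hxz⟩ = 0 by simpa using this
      by_contra hne
      by_cases hα : ∀ h, ∀ hh : h ∈ z3Cent g, h ∈ g 0 → α ⟨h, hh⟩ = 0
      · have hez : e ∈ z3Cent g := by
          intro h hh
          have hz : h ∈ z3Cent g := fun y hy => habelian y hy h hh
          rw [he' h hz, hα h hz hh, zero_smul]
        have h1 := he' x hxz
        have h2 : ⁅(⟨x, hxz⟩ : z3Cent g), (⟨e, hez⟩ : z3Cent g)⁆ = 0 := trivial_lie_zero _ _ _ _
        have h3 : ⁅x, e⁆ = 0 := congrArg Subtype.val h2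
        rw [h3] at h1
        exact (smul_ne_zero hne he0) h1.symm
      · push Not at hα
        obtain ⟨h, hz, hh, hαh⟩ := hα
        obtain ⟨e0, h0, e1, h1, e2, h2, rfl⟩ := z3_dec g hi e
        have a := he' h hz
        rw [lie_add, lie_add, habelian h hh e0 h0, smul_add, smul_add] at a
        have b := z3_uniq g hi (x0 := α ⟨h, hz⟩ • e0) (x1 := α ⟨h, hz⟩ • e1 - ⁅h, e1⁆)
          (x2 := α ⟨h, hz⟩ • e2 - ⁅h, e2⁆) ((g 0).smul_mem _ h0)
          (sub_mem ((g 1).smul_mem _ h1) (hgrad 0 1 _ hh _ h1))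
          (sub_mem ((g 2).smul_mem _ h2) (hgrad 0 2 _ hh _ h2)) (by
            rw [show α ⟨h, hz⟩ • e0 + (α ⟨h, hz⟩ • e1 - ⁅h, e1⁆) + (α ⟨h, hz⟩ • e2 - ⁅h, e2⁆)
              = (α ⟨h, hz⟩ • e0 + α ⟨h, hz⟩ • e1 + α ⟨h, hz⟩ • e2)
                - (0 + ⁅h, e1⁆ + ⁅h, e2⁆) by abel, ← a, sub_self])
        obtain ⟨b, -, -⟩ := b
        have e00 : e0 = 0 := by simpa [hαh] using b
        subst e00
        have c := he' x hxz
        simp only [zero_add] at c he0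
        rw [lie_add, smul_add] at c
        have c' : ⁅x, e1⁆ + ⁅x, e2⁆ - (α ⟨x, hxz⟩ • e1 + α ⟨x, hxz⟩ • e2) = 0 := by
          rw [c, sub_self]
        have hk' : k = 1 ∨ k = 2 := a3 k hk
        rcases hk' with rfl | rfl
        · obtain ⟨u0, u1, u2⟩ := z3_uniq g hi (x0 := ⁅x, e2⁆) (x1 := -(α ⟨x, hxz⟩ • e1))
            (x2 := ⁅x, e1⁆ - α ⟨x, hxz⟩ • e2) (hgrad 1 2 _ hx _ h2)
            (neg_mem ((g 1).smul_mem _ h1))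
            (sub_mem (hgrad 1 1 _ hx _ h1) ((g 2).smul_mem _ h2)) (by rw [← c']; abel)
          have : e1 = 0 := by simpa [hne] using u1
          subst this
          have : e2 = 0 := by simpa [hne] using u2
          subst this
          simp at he0
        · obtain ⟨u0, u1, u2⟩ := z3_uniq g hi (x0 := ⁅x, e1⁆) (x1 := ⁅x, e2⁆ - (α ⟨x, hxz⟩ • e1))
            (x2 := - (α ⟨x, hxz⟩ • e2)) (hgrad 2 1 _ hx _ h1)
            (sub_mem (hgrad 2 2 _ hx _ h2) ((g 1).smul_mem _ h1))
            (neg_mem ((g 2).smul_mem _ h2)) (by rw [← c']; abel)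
          have : e2 = 0 := by simpa [hne] using u2
          subst this
          have : e1 = 0 := by simpa [hne] using u1
          subst this
          simp at he0
    rw [LieAlgebra.IsKilling.iInf_ker_weight_eq_bot] at this
    exact congrArg Subtype.val ((Submodule.mem_bot ℂ).1 this)
  ext x
  constructor
  · intro hx
    obtain ⟨x0, h0, x1, h1, x2, h2, rfl, h1z, h2z⟩ := hdec x hx
    rw [key 1 (by decide) x1 h1 h1z, key 2 (by decide) x2 h2 h2z]
    simpa using h0
  · intro hx h hh
    exact habelian h hh x hx

end Part1

section Part2

open LieAlgebra.IsKilling LieModule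

set_option linter.unusedSectionVars false

variable {L : Type*} [LieRing L] [LieAlgebra ℂ L] [FiniteDimensional ℂ L] [LieAlgebra.IsKilling ℂ L]
  {H : LieSubalgebra ℂ L} [H.IsCartanSubalgebra]

/-- Brackets between neighbouring root spaces in a root string do not vanish. -/
lemma z3_br (α δ δ' : Weight ℂ H L) (hα : α.IsNonZero) (hδ : (δ' : H → ℂ) = -α + δ) :
    ∃ f ∈ rootSpace H (-α), ∃ z ∈ rootSpace H δ, ⁅f, z⁆ ≠ 0 ∧ ⁅f, z⁆ ∈ rootSpace H δ' := by
  obtain ⟨x, hx, x_ne0⟩ := (chainTop α δ).exists_ne_zero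
  obtain ⟨h, e, f, isSl2, he, hf⟩ := exists_isSl2Triple_of_weight_isNonZero hα
  obtain rfl := isSl2.h_eq_coroot hα he hf
  have prim : isSl2.HasPrimitiveVectorWith x (chainLength α δ : ℂ) :=
    have := lie_mem_genWeightSpace_of_mem_genWeightSpace he hx
    ⟨x_ne0, (chainLength_smul _ _ hx).symm, by rwa [genWeightSpace_add_chainTop _ _ hα] at this⟩
  have hb : 1 ≤ chainBotCoeff (α : H → ℂ) δ := by
    have h1 := (rootSpace_zsmul_add_ne_bot_iff α δ hα (-1)).1 (by
      rw [neg_smul, one_smul, ← hδ]; exact δ'.2)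
    have := h1.2
    simpa using this
  have hlen : chainTopCoeff (α : H → ℂ) δ + 1 ≤ chainLength α δ := by
    rw [← chainBotCoeff_add_chainTopCoeff]; omega
  have hz : ((toEnd ℂ L L f) ^ (chainTopCoeff (α : H → ℂ) δ)) x ∈ rootSpace H δ := by
    have h1 := toEnd_pow_apply_mem hf hx (chainTopCoeff (α : H → ℂ) δ)
    have h2 : (chainTopCoeff (α : H → ℂ) δ) • (-(α : H → ℂ)) + (chainTop (α : H → ℂ) δ : H → ℂ) = δ := by
      rw [coe_chainTop]; simp
    rwa [h2] at h1
  refine ⟨f, hf, _, hz, ?_, ?_⟩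
  · have := prim.pow_toEnd_f_ne_zero_of_eq_nat rfl hlen
    rw [pow_succ'] at this
    exact this
  · rw [hδ]
    exact lie_mem_genWeightSpace_of_mem_genWeightSpace hf hz

variable (H) in
/-- Standing data: a `ℤ/3`-grading whose degree zero part is the Cartan subalgebra `H`. -/
structure Z3Data (g : ZMod 3 → Submodule ℂ L) : Prop where
  hi : DirectSum.IsInternal g
  hgrad : ∀ i j : ZMod 3, ∀ x ∈ g i, ∀ y ∈ g j, ⁅x, y⁆ ∈ g (i + j)
  hH : H.toSubmodule = g 0

/-- `α` is a root whose root space is in degree `k`. -/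
def Z3Q (g : ZMod 3 → Submodule ℂ L) (k : ZMod 3) (α : Weight ℂ H L) : Prop :=
  α.IsNonZero ∧ ∀ x ∈ rootSpace H α, x ∈ g k

variable {g : ZMod 3 → Submodule ℂ L}

lemma z3_disj (D : Z3Data H g) {i j : ZMod 3} (hij : i ≠ j) {x : L} (h1 : x ∈ g i) (h2 : x ∈ g j) :
    x = 0 := by
  have := D.hi.submodule_iSupIndep.pairwiseDisjoint hij
  exact Submodule.disjoint_def.1 this x h1 h2

lemma z3_root_line {α : Weight ℂ H L} (hα : α.IsNonZero) {e x : L} (he : e ∈ rootSpace H α)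
    (he0 : e ≠ 0) (hx : x ∈ rootSpace H α) : ∃ c : ℂ, c • e = x := by
  simpa using (finrank_eq_one_iff_of_nonzero' (⟨e, he⟩ : rootSpace H α) (by simpa using he0)).mp
      (finrank_rootSpace_eq_one _ hα) ⟨_, hx⟩

lemma z3_mem_root_of_lie {α : Weight ℂ H L} {x : L} (hx : ∀ h : H, ⁅(h : L), x⁆ = α h • x) :
    x ∈ rootSpace H α := by
  refine (LieModule.weightSpace_le_genWeightSpace L (α : H → ℂ)) ?_
  rw [LieModule.mem_weightSpace]
  exact hx

lemma z3_deg (D : Z3Data H g) {α : Weight ℂ H L} (hα : α.IsNonZero) : Z3Q g 1 α ∨ Z3Q g 2 α := by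
  obtain ⟨e, he, he0⟩ := α.exists_ne_zero
  obtain ⟨e0, h0, e1, h1, e2, h2, rfl⟩ := z3_dec g D.hi e
  have key : ∀ h : H, ⁅(h : L), e0⁆ = α h • e0 ∧ ⁅(h : L), e1⁆ = α h • e1 ∧ ⁅(h : L), e2⁆ = α h • e2 := by
    intro h
    have hh : (h : L) ∈ g 0 := by rw [← D.hH]; exact h.2
    have a : ⁅(h : L), e0 + e1 + e2⁆ = α h • (e0 + e1 + e2) := lie_eq_smul_of_mem_rootSpace he h
    rw [← sub_eq_zero] at a
    obtain ⟨u0, u1, u2⟩ := z3_uniq g D.hi (x0 := ⁅(h : L), e0⁆ - α h • e0) (x1 := ⁅(h : L), e1⁆ - α h • e1)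
      (x2 := ⁅(h : L), e2⁆ - α h • e2)
      (sub_mem (D.hgrad 0 0 _ hh _ h0) ((g 0).smul_mem _ h0))
      (sub_mem (D.hgrad 0 1 _ hh _ h1) ((g 1).smul_mem _ h1))
      (sub_mem (D.hgrad 0 2 _ hh _ h2) ((g 2).smul_mem _ h2))
      (by rw [← a]; simp only [lie_add, smul_add]; abel)
    exact ⟨sub_eq_zero.1 u0, sub_eq_zero.1 u1, sub_eq_zero.1 u2⟩
  have e00 : e0 = 0 := by
    by_contra hne
    apply hα
    funext h
    have hz : (⟨e0, by rw [← LieSubalgebra.mem_toSubmodule, D.hH]; exact h0⟩ : H) ∈ (⊤ : Submodule ℂ H) := trivial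
    have h3 : ⁅h, (⟨e0, by rw [← LieSubalgebra.mem_toSubmodule, D.hH]; exact h0⟩ : H)⁆ = 0 := trivial_lie_zero _ _ _ _
    have h4 : ⁅(h : L), e0⁆ = 0 := congrArg Subtype.val h3
    rw [(key h).1] at h4
    simpa [hne] using h4
  have m1 : e1 ∈ rootSpace H α := z3_mem_root_of_lie fun h => (key h).2.1
  have m2 : e2 ∈ rootSpace H α := z3_mem_root_of_lie fun h => (key h).2.2
  by_cases e10 : e1 = 0
  · right
    refine ⟨hα, fun x hx => ?_⟩
    obtain ⟨c, rfl⟩ := z3_root_line hα m2 (by rintro rfl; simp [e00, e10] at he0) hx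
    exact (g 2).smul_mem _ h2
  · left
    refine ⟨hα, fun x hx => ?_⟩
    obtain ⟨c, rfl⟩ := z3_root_line hα m1 e10 hx
    exact (g 1).smul_mem _ h1

lemma z3_Q_neg (D : Z3Data H g) {α : Weight ℂ H L} {k : ZMod 3} (hk : k = 1 ∨ k = 2)
    (h : Z3Q g k α) : Z3Q g (-k) (-α) := by
  have hα := h.1
  obtain ⟨c, e, f, isSl2, he, hf⟩ := exists_isSl2Triple_of_weight_isNonZero hα
  have h0 : c ∈ g 0 := by
    rw [isSl2.h_eq_coroot hα he hf, ← D.hH]; exact (coroot α).2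
  have hef := isSl2.lie_e_f
  have hf' : f ∈ rootSpace H (-α : Weight ℂ H L) := by rw [Weight.coe_neg]; exact hf
  have hmk := D.hgrad
  rcases hk with rfl | rfl
  · rcases z3_deg D (Weight.IsNonZero.neg hα) with h1 | h1
    · have := D.hgrad 1 1 e (h.2 e he) f (h1.2 f hf')
      rw [hef] at this
      exact (isSl2.h_ne_zero (z3_disj D (by decide) this h0)).elim
    · exact h1
  · rcases z3_deg D (Weight.IsNonZero.neg hα) with h1 | h1
    · exact h1
    · have := D.hgrad 2 2 e (h.2 e he) f (h1.2 f hf')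
      rw [hef] at this
      exact (isSl2.h_ne_zero (z3_disj D (by decide) this h0)).elim

lemma z3_Q_uniq (D : Z3Data H g) {α : Weight ℂ H L} {k l : ZMod 3} (h : Z3Q g k α)
    (h' : Z3Q g l α) : k = l := by
  by_contra hne
  obtain ⟨e, he, he0⟩ := α.exists_ne_zero
  exact he0 (z3_disj D hne (h.2 e he) (h'.2 e he))

lemma z3_F1 (D : Z3Data H g) {α : Weight ℂ H L} (hα : α.IsNonZero) : Z3Q g 1 α ∨ Z3Q g 1 (-α) := by
  rcases z3_deg D hα with h | h
  · exact Or.inl h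
  · exact Or.inr (z3_Q_neg D (Or.inr rfl) h)

lemma z3_F2 (D : Z3Data H g) {α : Weight ℂ H L} (h : Z3Q g 1 α) : ¬ Z3Q g 1 (-α) := fun h' =>
  absurd (z3_Q_uniq D (z3_Q_neg D (Or.inl rfl) h) h') (by decide)

lemma z3_zero_mem (D : Z3Data H g) {γ : Weight ℂ H L} (hγ : γ.IsZero) {x : L}
    (hx : x ∈ rootSpace H γ) : x ∈ g 0 := by
  rw [hγ.eq, rootSpace_zero_eq] at hx
  rw [← D.hH]; exact hx

lemma z3_F3 (D : Z3Data H g) {α β γ : Weight ℂ H L} (hα : Z3Q g 1 α) (hβ : Z3Q g 1 β)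
    (hγ : (γ : H → ℂ) = α + β) : Z3Q g 1 (-γ) := by
  obtain ⟨f, hf, z, hz, hne, hm⟩ := z3_br (-α) β γ (Weight.IsNonZero.neg hα.1)
    (by rw [Weight.coe_neg, neg_neg, hγ])
  rw [Weight.coe_neg, neg_neg] at hf
  have h2 : ⁅f, z⁆ ∈ g 2 := D.hgrad 1 1 _ (hα.2 _ hf) _ (hβ.2 _ hz)
  by_cases h0 : γ.IsZero
  · exact (hne (z3_disj D (by decide) h2 (z3_zero_mem D h0 hm))).elim
  rcases z3_deg D h0 with h | h
  · exact (hne (z3_disj D (by decide) h2 (h.2 _ hm))).elim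
  · exact z3_Q_neg D (Or.inr rfl) h

lemma z3_F4 (D : Z3Data H g) {α β γ : Weight ℂ H L} (hα : Z3Q g 1 α) (hβ : Z3Q g 1 β)
    (hγ : (γ : H → ℂ) = -β + α) : α = β := by
  obtain ⟨f, hf, z, hz, hne, hm⟩ := z3_br β α γ hβ.1 hγ
  rw [← Weight.coe_neg] at hf
  have h2 : ⁅f, z⁆ ∈ g 0 := D.hgrad 2 1 _ ((z3_Q_neg D (Or.inl rfl) hβ).2 _ hf) _ (hα.2 _ hz)
  by_cases h0 : γ.IsZero
  · rw [h0.eq] at hγ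
    apply LieModule.Weight.ext
    intro x
    have := congrFun hγ x
    simp only [Pi.zero_apply, Pi.add_apply, Pi.neg_apply] at this
    linear_combination -this
  rcases z3_deg D h0 with h | h
  · exact (hne (z3_disj D (by decide) h2 (h.2 _ hm))).elim
  · exact (hne (z3_disj D (by decide) h2 (h.2 _ hm))).elim

/-- Pairings of distinct degree one roots. -/
lemma z3_pair (D : Z3Data H g) {α β : Weight ℂ H L} (hα : Z3Q g 1 α) (hβ : Z3Q g 1 β)
    (hne : α ≠ β) : β (coroot α) = 0 ∨ (β (coroot α) = -1 ∧ ∃ γ : Weight ℂ H L,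
      Z3Q g 1 γ ∧ (γ : H → ℂ) = -(α + β)) := by
  have hb : chainBotCoeff (α : H → ℂ) β = 0 := by
    by_contra h
    have h1 := (rootSpace_zsmul_add_ne_bot_iff α β hα.1 (-1)).2 ⟨by omega, by omega⟩
    rw [neg_smul, one_smul] at h1
    exact hne (z3_F4 D hβ hα (γ := ⟨_, h1⟩) rfl).symm
  rw [apply_coroot_eq_cast, hb]
  by_cases ht : chainTopCoeff (α : H → ℂ) β = 0
  · left; rw [ht]; simp
  right
  have h1 := (rootSpace_zsmul_add_ne_bot_iff α β hα.1 1).2 ⟨by omega, by omega⟩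
  rw [one_smul] at h1
  have hγ := z3_F3 D hα hβ (γ := ⟨_, h1⟩) rfl
  refine ⟨?_, _, hγ, rfl⟩
  suffices chainTopCoeff (α : H → ℂ) β = 1 by rw [this]; simp
  by_contra h2
  have h3 := (rootSpace_zsmul_add_ne_bot_iff α β hα.1 2).2 ⟨by omega, by omega⟩
  -- `2α+β = α - γ`
  have h4 := z3_F4 D hα hγ (γ := ⟨_, h3⟩) (by
    show (2 : ℤ) • (α : H → ℂ) + (β : H → ℂ) = -(-((α : H → ℂ) + β)) + α
    rw [neg_neg, two_smul]; abel)
  have h5 : (α : H → ℂ) = -(α + β) := congrArg (fun w : Weight ℂ H L => (w : H → ℂ)) h4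
  -- then β = -2 α
  have h6 : ((-β : Weight ℂ H L) : H → ℂ) = 2 • α := by
    rw [Weight.coe_neg, two_smul]
    funext x
    have := congrFun h5 x
    simp only [Pi.add_apply, Pi.neg_apply] at this ⊢
    linear_combination - this
  exact (-β).2 (by rw [← rootSpace_two_smul α hα.1, ← h6]; rfl)

end Part2

section Part3

open LieAlgebra.IsKilling LieModule
open scoped Classical

set_option linter.unusedSectionVars false

variable {L : Type*} [LieRing L] [LieAlgebra ℂ L] [FiniteDimensional ℂ L] [LieAlgebra.IsKilling ℂ L]
  {H : LieSubalgebra ℂ L} [H.IsCartanSubalgebra] {g : ZMod 3 → Submodule ℂ L}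

variable (H) in
/-- The finite set of degree one roots. -/
noncomputable def z3P (g : ZMod 3 → Submodule ℂ L) : Finset (Weight ℂ H L) :=
  Finset.univ.filter (fun α => Z3Q g 1 α)

lemma mem_z3P {α : Weight ℂ H L} : α ∈ z3P H g ↔ Z3Q g 1 α := by simp [z3P]

lemma z3_finrank_sum : Module.finrank ℂ L =
    ∑ α : Weight ℂ H L, Module.finrank ℂ (rootSpace H α) := by
  have h1 : iSupIndep fun χ : Weight ℂ H L => (rootSpace H χ).toSubmodule :=
    LieSubmodule.iSupIndep_toSubmodule.2 (iSupIndep_genWeightSpace' ℂ H L)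
  have h2 : ⨆ χ : Weight ℂ H L, (rootSpace H χ).toSubmodule = ⊤ := by
    rw [← LieSubmodule.iSup_toSubmodule, iSup_genWeightSpace_eq_top' ℂ H L]; rfl
  have h3 := DirectSum.isInternal_submodule_of_iSupIndep_of_iSup_eq_top h1 h2
  rw [← (LinearEquiv.ofBijective (DirectSum.coeLinearMap _) h3).finrank_eq,
    Module.finrank_directSum]
  rfl

lemma z3_card (D : Z3Data H g) (hdim : Module.finrank ℂ L = 24)
    (hdim0 : Module.finrank ℂ (g 0) = 6) : (z3P H g).card = 9 := by
  have hnt : Nontrivial L := by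
    apply Module.nontrivial_of_finrank_pos (R := ℂ); omega
  have h0 : Module.finrank ℂ (rootSpace H (0 : H → ℂ)) = 6 := by
    rw [rootSpace_zero_eq, ← hdim0, ← D.hH]; rfl
  have hs := z3_finrank_sum (H := H)
  rw [hdim] at hs
  have hval : ∀ α : Weight ℂ H L, Module.finrank ℂ (rootSpace H α) =
      (if α = 0 then 6 else 0) + (if Z3Q g 1 α then 1 else 0) + (if Z3Q g 1 (-α) then 1 else 0) := by
    intro α
    by_cases hα : α.IsZero
    · have h1 : ¬ Z3Q g 1 α := fun h => h.1 hα
      have h2 : ¬ Z3Q g 1 (-α) := fun h => h.1 hα.neg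
      have h3 : α = 0 := by
        apply LieModule.Weight.ext; intro x; rw [hα.eq]; rfl
      rw [if_neg h1, if_neg h2, if_pos h3, hα.eq, h0]
    · have h3 : α ≠ 0 := by rintro rfl; exact hα Weight.isZero_zero
      rw [finrank_rootSpace_eq_one α hα, if_neg h3]
      rcases z3_F1 D hα with h | h
      · rw [if_pos h, if_neg (z3_F2 D h)]
      · rw [if_pos h, if_neg (fun h' => z3_F2 D h' h)]
  rw [Finset.sum_congr rfl (fun α _ => hval α), Finset.sum_add_distrib, Finset.sum_add_distrib] at hs
  have e1 : ∑ α : Weight ℂ H L, (if Z3Q g 1 (-α) then 1 else 0) =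
      ∑ α : Weight ℂ H L, (if Z3Q g 1 α then 1 else 0) :=
    Equiv.sum_comp (Equiv.neg (Weight ℂ H L)) (fun α => if Z3Q g 1 α then 1 else 0)
  rw [e1, Finset.sum_ite_eq' Finset.univ, if_pos (Finset.mem_univ _), Finset.sum_boole] at hs
  simp only [Nat.cast_id] at hs
  unfold z3P
  omega

/-- Three degree one roots with zero sum. -/
structure Z3Tri (g : ZMod 3 → Submodule ℂ L) (α β γ : Weight ℂ H L) : Prop where
  ha : Z3Q g 1 α
  hb : Z3Q g 1 β
  hc : Z3Q g 1 γ
  hs : ∀ h : H, α h + β h + γ h = 0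

lemma Z3Tri.rot {α β γ : Weight ℂ H L} (T : Z3Tri g α β γ) : Z3Tri g β γ α :=
  ⟨T.hb, T.hc, T.ha, fun h => by rw [← T.hs h]; ring⟩

lemma Z3Tri.swap {α β γ : Weight ℂ H L} (T : Z3Tri g α β γ) : Z3Tri g β α γ :=
  ⟨T.hb, T.ha, T.hc, fun h => by rw [← T.hs h]; ring⟩

lemma z3_pval (D : Z3Data H g) {α β : Weight ℂ H L} (hα : Z3Q g 1 α) (hβ : Z3Q g 1 β) :
    β (coroot α) = 0 ∨ β (coroot α) = -1 ∨ (β (coroot α) = 2 ∧ α = β) := by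
  by_cases h : α = β
  · subst h; exact Or.inr (Or.inr ⟨root_apply_coroot hα.1, rfl⟩)
  · rcases z3_pair D hα hβ h with h | h
    · exact Or.inl h
    · exact Or.inr (Or.inl h.1)

lemma Z3Tri.pair (D : Z3Data H g) {α β γ : Weight ℂ H L} (T : Z3Tri g α β γ) :
    β (coroot α) = -1 := by
  have h := T.hs (coroot α)
  rw [root_apply_coroot T.ha.1] at h
  rcases z3_pval D T.ha T.hb with h1 | h1 | ⟨h1, -⟩
  · rcases z3_pval D T.ha T.hc with h2 | h2 | ⟨h2, -⟩ <;> rw [h1, h2] at h <;> norm_num at h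
  · exact h1
  · rcases z3_pval D T.ha T.hc with h2 | h2 | ⟨h2, -⟩ <;> rw [h1, h2] at h <;> norm_num at h

lemma Z3Tri.ne (D : Z3Data H g) {α β γ : Weight ℂ H L} (T : Z3Tri g α β γ) : α ≠ β := by
  rintro rfl
  have h := T.pair D
  rw [root_apply_coroot T.ha.1] at h
  norm_num at h

lemma Z3Tri.orth (D : Z3Data H g) {α β γ δ : Weight ℂ H L} (T : Z3Tri g α β γ) (hδ : Z3Q g 1 δ)
    (h1 : δ ≠ α) (h2 : δ ≠ β) (h3 : δ ≠ γ) : δ (coroot α) = 0 := by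
  rcases z3_pair D T.ha hδ h1.symm with h | ⟨-, ε, hε, hε'⟩
  · exact h
  have h4 := T.hs (coroot δ)
  have h5 := congrFun hε' (coroot δ)
  simp only [Pi.neg_apply, Pi.add_apply] at h5
  rw [root_apply_coroot hδ.1] at h5
  have a0 : α (coroot δ) = 0 := by
    rcases z3_pval D hδ T.ha with a | a | ⟨-, a⟩
    · exact a
    · rcases z3_pval D hδ T.hb with b | b | ⟨-, b⟩
      · rcases z3_pval D hδ T.hc with c | c | ⟨-, c⟩
        · rw [a, b, c] at h4; norm_num at h4
        · rw [a, b, c] at h4; norm_num at h4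
        · exact absurd c h3
      · rcases z3_pval D hδ T.hc with c | c | ⟨-, c⟩
        · rw [a, b, c] at h4; norm_num at h4
        · rw [a, b, c] at h4; norm_num at h4
        · exact absurd c h3
      · exact absurd b h2
    · exact absurd a h1
  rw [a0] at h5
  rcases z3_pval D hδ hε with e | e | ⟨e, -⟩ <;> rw [e] at h5 <;> norm_num at h5

lemma Z3Tri.const_aux (D : Z3Data H g) {α β γ : Weight ℂ H L} (T : Z3Tri g α β γ)
    (c : Weight ℂ H L → ℂ) (hc : ∀ h : H, ∑ δ ∈ z3P H g, c δ * δ h = 0) :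
    2 * c α = c β + c γ := by
  have h := hc (coroot α)
  have hab := T.ne D
  have hbc := T.rot.ne D
  have hca := T.rot.rot.ne D
  have hsub : ({α, β, γ} : Finset (Weight ℂ H L)) ⊆ z3P H g := by
    intro x hx
    simp only [Finset.mem_insert, Finset.mem_singleton] at hx
    rcases hx with rfl | rfl | rfl
    · exact mem_z3P.2 T.ha
    · exact mem_z3P.2 T.hb
    · exact mem_z3P.2 T.hc
  rw [← Finset.sum_subset hsub, Finset.sum_insert (by simp [hab, hca.symm]),
    Finset.sum_insert (by simp [hbc]), Finset.sum_singleton, root_apply_coroot T.ha.1,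
    T.pair D, T.rot.rot.swap.pair D] at h
  · linear_combination h
  · intro x hx hx'
    simp only [Finset.mem_insert, Finset.mem_singleton, not_or] at hx'
    rw [T.orth D (mem_z3P.1 hx) hx'.1 hx'.2.1 hx'.2.2, mul_zero]

lemma Z3Tri.const (D : Z3Data H g) {α β γ : Weight ℂ H L} (T : Z3Tri g α β γ)
    (c : Weight ℂ H L → ℂ) (hc : ∀ h : H, ∑ δ ∈ z3P H g, c δ * δ h = 0) :
    c β = c α ∧ c γ = c α := by
  have h1 := T.const_aux D c hc
  have h2 := T.rot.const_aux D c hc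
  constructor
  · linear_combination (h2 - h1) / 3
  · linear_combination (-2 * h1 - h2) / 3

lemma z3_exists_tri (D : Z3Data H g) {α : Weight ℂ H L} (hα : Z3Q g 1 α)
    (c : Weight ℂ H L → ℂ) (hc : ∀ h : H, ∑ δ ∈ z3P H g, c δ * δ h = 0) (h0 : c α ≠ 0) :
    ∃ β γ, Z3Tri g α β γ := by
  by_contra hno
  have h := hc (coroot α)
  rw [Finset.sum_eq_single α, root_apply_coroot hα.1] at h
  · apply h0; linear_combination h / 2
  · intro β hβ hne
    rcases z3_pair D hα (mem_z3P.1 hβ) hne.symm with h | ⟨-, γ, hγ, hs⟩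
    · rw [h, mul_zero]
    · refine (hno ⟨β, γ, hα, mem_z3P.1 hβ, hγ, fun x => ?_⟩).elim
      rw [hs]; simp
  · intro h; exact (h (mem_z3P.2 hα)).elim

lemma z3_pick (D : Z3Data H g) (hcard : (z3P H g).card = 9) (hdim0 : Module.finrank ℂ (g 0) = 6)
    (p q : Weight ℂ H L) : ∃ c : Weight ℂ H L → ℂ, (∀ h : H, ∑ δ ∈ z3P H g, c δ * δ h = 0) ∧
      c p = 0 ∧ c q = 0 ∧ ∃ α, Z3Q g 1 α ∧ c α ≠ 0 := by
  have hH : Module.finrank ℂ H = 6 := by rw [← hdim0, ← D.hH]; rfl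
  let ext : (z3P H g → ℂ) →ₗ[ℂ] (Weight ℂ H L → ℂ) :=
    { toFun := fun c w => if h : w ∈ z3P H g then c ⟨w, h⟩ else 0
      map_add' := by intro a b; funext w; by_cases h : w ∈ z3P H g <;> simp [h]
      map_smul' := by intro a b; funext w; by_cases h : w ∈ z3P H g <;> simp [h] }
  let S : (Weight ℂ H L → ℂ) →ₗ[ℂ] Module.Dual ℂ H :=
    ∑ δ ∈ z3P H g, (LinearMap.proj δ : (Weight ℂ H L → ℂ) →ₗ[ℂ] ℂ).smulRight (Weight.toLinear ℂ H L δ)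
  let F : (Weight ℂ H L → ℂ) →ₗ[ℂ] (Module.Dual ℂ H × (ℂ × ℂ)) :=
    S.prod ((LinearMap.proj p).prod (LinearMap.proj q))
  have hlt : Module.finrank ℂ (Module.Dual ℂ H × (ℂ × ℂ)) < Module.finrank ℂ (z3P H g → ℂ) := by
    rw [Module.finrank_prod, Module.finrank_prod, Subspace.dual_finrank_eq, hH, Module.finrank_self,
      Module.finrank_fintype_fun_eq_card, Fintype.card_coe, hcard]
    norm_num
  have hk := LinearMap.ker_ne_bot_of_finrank_lt (f := F ∘ₗ ext) hlt
  obtain ⟨c, hc, hc0⟩ := (Submodule.ne_bot_iff _).1 hk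
  have hF : F (ext c) = 0 := hc
  refine ⟨ext c, ?_, ?_, ?_, ?_⟩
  · intro h
    have h1 : S (ext c) = 0 := congrArg Prod.fst hF
    have h2 := LinearMap.congr_fun h1 h
    simpa [S, LinearMap.sum_apply] using h2
  · exact congrArg (fun x => x.2.1) hF
  · exact congrArg (fun x => x.2.2) hF
  · obtain ⟨⟨α, hα⟩, hne⟩ := Function.ne_iff.1 hc0
    refine ⟨α, mem_z3P.1 hα, ?_⟩
    simpa [ext, hα] using hne

lemma z3_three (D : Z3Data H g) (hdim : Module.finrank ℂ L = 24)
    (hdim0 : Module.finrank ℂ (g 0) = 6) :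
    ∃ T : Fin 3 → Fin 3 → Weight ℂ H L, (∀ i, Z3Tri g (T i 0) (T i 1) (T i 2)) ∧
      (∀ i j a b, i ≠ j → T i a ≠ T j b) ∧ (∀ α, Z3Q g 1 α → ∃ i a, α = T i a) := by
  have hcard := z3_card D hdim hdim0
  obtain ⟨p, hp⟩ : (z3P H g).Nonempty := by rw [← Finset.card_pos]; omega
  obtain ⟨c1, hc1, -, -, a1, ha1, hn1⟩ := z3_pick D hcard hdim0 p p
  obtain ⟨b1, d1, T1⟩ := z3_exists_tri D ha1 c1 hc1 hn1
  obtain ⟨c2, hc2, hp2, -, a2, ha2, hn2⟩ := z3_pick D hcard hdim0 a1 a1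
  obtain ⟨b2, d2, T2⟩ := z3_exists_tri D ha2 c2 hc2 hn2
  obtain ⟨c3, hc3, hp3, hq3, a3, ha3, hn3⟩ := z3_pick D hcard hdim0 a1 a2
  obtain ⟨b3, d3, T3⟩ := z3_exists_tri D ha3 c3 hc3 hn3
  have k1 := T1.const D c2 hc2
  have k2 := T2.const D c2 hc2
  have l1 := T1.const D c3 hc3
  have l2 := T2.const D c3 hc3
  have l3 := T3.const D c3 hc3
  let T : Fin 3 → Fin 3 → Weight ℂ H L := ![![a1, b1, d1], ![a2, b2, d2], ![a3, b3, d3]]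
  have hT : ∀ i, Z3Tri g (T i 0) (T i 1) (T i 2) := by
    intro i; fin_cases i
    · exact T1
    · exact T2
    · exact T3
  have m1 : ∀ a, c2 (T 0 a) = 0 := by
    intro a; fin_cases a
    · exact hp2
    · exact k1.1.trans hp2
    · exact k1.2.trans hp2
  have m2 : ∀ a, c2 (T 1 a) ≠ 0 := by
    intro a; fin_cases a
    · exact hn2
    · exact fun h => hn2 (k2.1.symm.trans h)
    · exact fun h => hn2 (k2.2.symm.trans h)
  have n1 : ∀ a, c3 (T 0 a) = 0 := by
    intro a; fin_cases a
    · exact hp3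
    · exact l1.1.trans hp3
    · exact l1.2.trans hp3
  have n2 : ∀ a, c3 (T 1 a) = 0 := by
    intro a; fin_cases a
    · exact hq3
    · exact l2.1.trans hq3
    · exact l2.2.trans hq3
  have n3 : ∀ a, c3 (T 2 a) ≠ 0 := by
    intro a; fin_cases a
    · exact hn3
    · exact fun h => hn3 (l3.1.symm.trans h)
    · exact fun h => hn3 (l3.2.symm.trans h)
  have d01 : ∀ a b, T 0 a ≠ T 1 b := fun a b h => m2 b (h ▸ m1 a)
  have d02 : ∀ a b, T 0 a ≠ T 2 b := fun a b h => n3 b (h ▸ n1 a)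
  have d12 : ∀ a b, T 1 a ≠ T 2 b := fun a b h => n3 b (h ▸ n2 a)
  have hdis : ∀ i j a b, i ≠ j → T i a ≠ T j b := by
    intro i j a b hij
    fin_cases i <;> fin_cases j
    · exact absurd rfl hij
    · exact d01 a b
    · exact d02 a b
    · exact (d01 b a).symm
    · exact absurd rfl hij
    · exact d12 a b
    · exact (d02 b a).symm
    · exact (d12 b a).symm
    · exact absurd rfl hij
  have hrow : ∀ i, Function.Injective (T i) := by
    intro i a b hab
    have x1 := (hT i).ne D
    have x2 := (hT i).rot.ne D
    have x3 := (hT i).rot.rot.ne D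
    fin_cases a <;> fin_cases b
    · rfl
    · exact absurd hab x1
    · exact absurd hab.symm x3
    · exact absurd hab.symm x1
    · rfl
    · exact absurd hab x2
    · exact absurd hab x3
    · exact absurd hab.symm x2
    · rfl
  have hmem : ∀ i a, Z3Q g 1 (T i a) := by
    intro i a
    fin_cases a
    · exact (hT i).ha
    · exact (hT i).hb
    · exact (hT i).hc
  refine ⟨T, hT, hdis, ?_⟩
  have hinj : Function.Injective (fun x : Fin 3 × Fin 3 => T x.1 x.2) := by
    rintro ⟨i, a⟩ ⟨j, b⟩ h
    by_cases hij : i = j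
    · subst hij
      have : a = b := hrow i h
      rw [this]
    · exact absurd h (hdis i j a b hij)
  have him : Finset.univ.image (fun x : Fin 3 × Fin 3 => T x.1 x.2) = z3P H g := by
    apply Finset.eq_of_subset_of_card_le
    · intro x hx
      obtain ⟨y, -, rfl⟩ := Finset.mem_image.1 hx
      exact mem_z3P.2 (hmem _ _)
    · rw [hcard, Finset.card_image_of_injective _ hinj]; simp
  intro α hα
  have := mem_z3P.2 hα
  rw [← him] at this
  obtain ⟨y, -, rfl⟩ := Finset.mem_image.1 this
  exact ⟨_, _, rfl⟩

end Part3

section Part4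

set_option linter.unusedSectionVars false

variable {L : Type*} [LieRing L] [LieAlgebra ℂ L]

/-- Chevalley and Serre relations of type `A₂`. -/
structure Sl3Rel (h1 h2 e1 e2 f1 f2 : L) : Prop where
  hh : ⁅h1, h2⁆ = 0
  h1e1 : ⁅h1, e1⁆ = (2 : ℂ) • e1
  h1e2 : ⁅h1, e2⁆ = (-1 : ℂ) • e2
  h1f1 : ⁅h1, f1⁆ = (-2 : ℂ) • f1
  h1f2 : ⁅h1, f2⁆ = (1 : ℂ) • f2
  h2e1 : ⁅h2, e1⁆ = (-1 : ℂ) • e1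
  h2e2 : ⁅h2, e2⁆ = (2 : ℂ) • e2
  h2f1 : ⁅h2, f1⁆ = (1 : ℂ) • f1
  h2f2 : ⁅h2, f2⁆ = (-2 : ℂ) • f2
  e1f1 : ⁅e1, f1⁆ = h1
  e2f2 : ⁅e2, f2⁆ = h2
  e1f2 : ⁅e1, f2⁆ = 0
  e2f1 : ⁅e2, f1⁆ = 0
  e1e3 : ⁅e1, ⁅e1, e2⁆⁆ = 0
  e2e3 : ⁅e2, ⁅e1, e2⁆⁆ = 0
  f1f3 : ⁅f1, ⁅f2, f1⁆⁆ = 0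
  f2f3 : ⁅f2, ⁅f2, f1⁆⁆ = 0

/-- The linear map from `sl₃` attached to eight elements. -/
def sl3Lin (h1 h2 e1 e2 e3 f1 f2 f3 : L) : SpecialLinear.sl (Fin 3) ℂ →ₗ[ℂ] L where
  toFun M := M.1 0 1 • e1 + M.1 1 2 • e2 + M.1 0 2 • e3 + M.1 1 0 • f1 + M.1 2 1 • f2 + M.1 2 0 • f3
    + M.1 0 0 • h1 - M.1 2 2 • h2
  map_add' A B := by
    have e : ∀ i j, (A + B).1 i j = A.1 i j + B.1 i j := fun _ _ => rfl
    simp only [e]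
    module
  map_smul' c A := by
    have e : ∀ i j, (c • A).1 i j = c * A.1 i j := fun _ _ => rfl
    simp only [e, RingHom.id_apply]
    module

lemma sl3_lie_skew' {x y z : L} (h : ⁅x, y⁆ = z) : ⁅y, x⁆ = -z := by rw [← lie_skew, h]

lemma sl3_trace (M : SpecialLinear.sl (Fin 3) ℂ) : M.1 1 1 = - M.1 0 0 - M.1 2 2 := by
  have h : Matrix.trace M.1 = 0 := M.2
  rw [Matrix.trace_fin_three] at h
  linear_combination h

set_option maxHeartbeats 4000000 in
lemma sl3_hom_aux {h1 h2 e1 e2 e3 f1 f2 f3 : L} (R : Sl3Rel h1 h2 e1 e2 f1 f2)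
    (he3 : ⁅e1, e2⁆ = e3) (hf3 : ⁅f2, f1⁆ = f3) (A B : SpecialLinear.sl (Fin 3) ℂ) :
    sl3Lin h1 h2 e1 e2 e3 f1 f2 f3 ⁅A, B⁆ =
      ⁅sl3Lin h1 h2 e1 e2 e3 f1 f2 f3 A, sl3Lin h1 h2 e1 e2 e3 f1 f2 f3 B⁆ := by
  obtain ⟨hh, h1e1, h1e2, h1f1, h1f2, h2e1, h2e2, h2f1, h2f2, e1f1, e2f2, e1f2, e2f1,
    e1e3, e2e3, f1f3, f2f3⟩ := R
  rw [he3] at e1e3 e2e3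
  rw [hf3] at f1f3 f2f3
  have f1e1 := sl3_lie_skew' e1f1
  have f2e2 := sl3_lie_skew' e2f2
  have f1e2 := sl3_lie_skew' e2f1
  have f2e1 := sl3_lie_skew' e1f2
  have e1h1 := sl3_lie_skew' h1e1
  have e2h1 := sl3_lie_skew' h1e2
  have f1h1 := sl3_lie_skew' h1f1
  have f2h1 := sl3_lie_skew' h1f2
  have e1h2 := sl3_lie_skew' h2e1
  have e2h2 := sl3_lie_skew' h2e2
  have f1h2 := sl3_lie_skew' h2f1
  have f2h2 := sl3_lie_skew' h2f2
  have h1e3 : ⁅h1, e3⁆ = e3 := by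
    rw [← he3, leibniz_lie, h1e1, h1e2, smul_lie, lie_smul]; module
  have h2e3 : ⁅h2, e3⁆ = e3 := by
    rw [← he3, leibniz_lie, h2e1, h2e2, smul_lie, lie_smul]; module
  have h1f3 : ⁅h1, f3⁆ = -f3 := by
    rw [← hf3, leibniz_lie, h1f1, h1f2, smul_lie, lie_smul]; module
  have h2f3 : ⁅h2, f3⁆ = -f3 := by
    rw [← hf3, leibniz_lie, h2f1, h2f2, smul_lie, lie_smul]; module
  have e1f3 : ⁅e1, f3⁆ = -f2 := by
    rw [← hf3, leibniz_lie, e1f1, e1f2, zero_lie, f2h1]; module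
  have e2f3 : ⁅e2, f3⁆ = f1 := by
    rw [← hf3, leibniz_lie, e2f1, e2f2, lie_zero, h2f1]; module
  have f1e3 : ⁅f1, e3⁆ = e2 := by
    rw [← he3, leibniz_lie, f1e1, f1e2, neg_zero, lie_zero, neg_lie, h1e2]; module
  have f2e3 : ⁅f2, e3⁆ = -e1 := by
    rw [← he3, leibniz_lie, f2e1, f2e2, neg_zero, zero_lie, lie_neg, e1h2]; module
  have e3f1 := sl3_lie_skew' f1e3
  have e3f2 := sl3_lie_skew' f2e3
  have e3f3 : ⁅e3, f3⁆ = h1 + h2 := by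
    rw [← hf3, leibniz_lie, e3f2, e3f1, neg_neg, lie_neg, e1f1, f2e2]; module
  have f3e3 := sl3_lie_skew' e3f3
  have f3e1 := sl3_lie_skew' e1f3
  have f3e2 := sl3_lie_skew' e2f3
  have f3h1 := sl3_lie_skew' h1f3
  have f3h2 := sl3_lie_skew' h2f3
  have e3h1 := sl3_lie_skew' h1e3
  have e3h2 := sl3_lie_skew' h2e3
  have h2h1 := sl3_lie_skew' hh
  have e2e1 := sl3_lie_skew' he3
  have f1f2 := sl3_lie_skew' hf3
  have e3e1 := sl3_lie_skew' e1e3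
  have e3e2 := sl3_lie_skew' e2e3
  have f3f1 := sl3_lie_skew' f1f3
  have f3f2 := sl3_lie_skew' f2f3
  have tA := sl3_trace A
  have tB := sl3_trace B
  simp only [sl3Lin, LinearMap.coe_mk, AddHom.coe_mk, SpecialLinear.sl_bracket, Matrix.sub_apply,
    Matrix.mul_apply, Fin.sum_univ_three, add_lie, lie_add, sub_lie, lie_sub, smul_lie, lie_smul,
    lie_self, hh, h1e1, h1e2, h1f1, h1f2, h2e1, h2e2, h2f1, h2f2, e1f1, e2f2, e1f2, e2f1,
    e1e3, e2e3, f1f3, f2f3, he3, hf3, f1e1, f2e2, f1e2, f2e1, e1h1, e2h1, f1h1, f2h1, e1h2, e2h2,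
    f1h2, f2h2, h1e3, h2e3, h1f3, h2f3, e1f3, e2f3, f1e3, f2e3, e3f1, e3f2, e3f3, f3e3, f3e1, f3e2,
    f3h1, f3h2, e3h1, e3h2, h2h1, e2e1, f1f2, e3e1, e3e2, f3f1, f3f2]
  rw [tA, tB]
  module

/-- The Lie algebra map from `sl₃` attached to Chevalley and Serre generators. -/
def sl3Hom {h1 h2 e1 e2 f1 f2 : L} (R : Sl3Rel h1 h2 e1 e2 f1 f2) :
    SpecialLinear.sl (Fin 3) ℂ →ₗ⁅ℂ⁆ L :=
  { sl3Lin h1 h2 e1 e2 ⁅e1, e2⁆ f1 f2 ⁅f2, f1⁆ with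
    map_lie' := by
      intro A B
      exact sl3_hom_aux R rfl rfl A B }

lemma sl3Hom_apply {h1 h2 e1 e2 f1 f2 : L} (R : Sl3Rel h1 h2 e1 e2 f1 f2)
    (M : SpecialLinear.sl (Fin 3) ℂ) : sl3Hom R M =
    M.1 0 1 • e1 + M.1 1 2 • e2 + M.1 0 2 • ⁅e1, e2⁆ + M.1 1 0 • f1 + M.1 2 1 • f2
      + M.1 2 0 • ⁅f2, f1⁆ + M.1 0 0 • h1 - M.1 2 2 • h2 := rfl

lemma sl3Hom_range {h1 h2 e1 e2 f1 f2 : L} (R : Sl3Rel h1 h2 e1 e2 f1 f2) :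
    e1 ∈ (sl3Hom R).range ∧ e2 ∈ (sl3Hom R).range ∧ f1 ∈ (sl3Hom R).range ∧
      f2 ∈ (sl3Hom R).range := by
  refine ⟨⟨SpecialLinear.single 0 1 (by decide) 1, ?_⟩, ⟨SpecialLinear.single 1 2 (by decide) 1, ?_⟩,
    ⟨SpecialLinear.single 1 0 (by decide) 1, ?_⟩, ⟨SpecialLinear.single 2 1 (by decide) 1, ?_⟩⟩ <;>
  · change sl3Hom R _ = _
    rw [sl3Hom_apply]
    simp

lemma sl3Hom_comm {h1 h2 e1 e2 f1 f2 : L} (R : Sl3Rel h1 h2 e1 e2 f1 f2) {x : L}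
    (a1 : ⁅x, e1⁆ = 0) (a2 : ⁅x, e2⁆ = 0) (b1 : ⁅x, f1⁆ = 0) (b2 : ⁅x, f2⁆ = 0)
    (M : SpecialLinear.sl (Fin 3) ℂ) : ⁅x, sl3Hom R M⁆ = 0 := by
  have c1 : ⁅x, h1⁆ = 0 := by rw [← R.e1f1, leibniz_lie, a1, b1]; simp
  have c2 : ⁅x, h2⁆ = 0 := by rw [← R.e2f2, leibniz_lie, a2, b2]; simp
  have c3 : ⁅x, ⁅e1, e2⁆⁆ = 0 := by rw [leibniz_lie, a1, a2]; simp
  have c4 : ⁅x, ⁅f2, f1⁆⁆ = 0 := by rw [leibniz_lie, b1, b2]; simp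
  rw [sl3Hom_apply]
  simp only [lie_add, lie_sub, lie_smul, a1, a2, b1, b2, c1, c2, c3, c4, smul_zero, add_zero, sub_zero]

lemma sl3Hom_comm' {h1 h2 e1 e2 f1 f2 : L} (R : Sl3Rel h1 h2 e1 e2 f1 f2)
    {k1 k2 x1 x2 y1 y2 : L} (S : Sl3Rel k1 k2 x1 x2 y1 y2)
    (hc : ∀ x ∈ ({x1, x2, y1, y2} : Set L), ∀ y ∈ ({e1, e2, f1, f2} : Set L), ⁅x, y⁆ = 0)
    (M N : SpecialLinear.sl (Fin 3) ℂ) : ⁅sl3Hom R M, sl3Hom S N⁆ = 0 := by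
  have key : ∀ x ∈ ({x1, x2, y1, y2} : Set L), ⁅sl3Hom R M, x⁆ = 0 := by
    intro x hx
    have h := hc x hx
    rw [← lie_skew, sl3Hom_comm R (h e1 (by simp)) (h e2 (by simp)) (h f1 (by simp)) (h f2 (by simp)),
      neg_zero]
  exact sl3Hom_comm S (key _ (by simp)) (key _ (by simp)) (key _ (by simp)) (key _ (by simp)) N

lemma finrank_sl3 : Module.finrank ℂ (SpecialLinear.sl (Fin 3) ℂ) = 8 := by
  change Module.finrank ℂ (LinearMap.ker (Matrix.traceLinearMap (Fin 3) ℂ ℂ)) = 8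
  have h1 := LinearMap.finrank_range_add_finrank_ker (Matrix.traceLinearMap (Fin 3) ℂ ℂ)
  have h2 : LinearMap.range (Matrix.traceLinearMap (Fin 3) ℂ ℂ) = ⊤ := by
    rw [LinearMap.range_eq_top]
    exact Matrix.trace_surjective
  rw [h2, finrank_top, Module.finrank_self, Module.finrank_matrix, Module.finrank_self] at h1
  simp only [Fintype.card_fin] at h1
  omega

/-- Three commuting maps from `sl₃` give a map from the product. -/
def sl3Cube (p q r : SpecialLinear.sl (Fin 3) ℂ →ₗ⁅ℂ⁆ L) (hpq : ∀ M N, ⁅p M, q N⁆ = 0)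
    (hpr : ∀ M N, ⁅p M, r N⁆ = 0) (hqr : ∀ M N, ⁅q M, r N⁆ = 0) :
    (SpecialLinear.sl (Fin 3) ℂ × (SpecialLinear.sl (Fin 3) ℂ × SpecialLinear.sl (Fin 3) ℂ)) →ₗ⁅ℂ⁆ L where
  toFun x := p x.1 + q x.2.1 + r x.2.2
  map_add' x y := by
    simp only [Prod.fst_add, Prod.snd_add, map_add]; abel
  map_smul' c x := by
    simp only [Prod.smul_fst, Prod.smul_snd, map_smul, smul_add, RingHom.id_apply]
  map_lie' := by
    intro x y
    have e1 : ⁅x, y⁆.1 = ⁅x.1, y.1⁆ := rfl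
    have e2 : ⁅x, y⁆.2.1 = ⁅x.2.1, y.2.1⁆ := rfl
    have e3 : ⁅x, y⁆.2.2 = ⁅x.2.2, y.2.2⁆ := rfl
    have hqp : ∀ M N, ⁅q M, p N⁆ = 0 := fun M N => by rw [← lie_skew, hpq, neg_zero]
    have hrp : ∀ M N, ⁅r M, p N⁆ = 0 := fun M N => by rw [← lie_skew, hpr, neg_zero]
    have hrq : ∀ M N, ⁅r M, q N⁆ = 0 := fun M N => by rw [← lie_skew, hqr, neg_zero]
    simp only [e1, e2, e3, LieHom.map_lie, add_lie, lie_add, hpq, hpr, hqr, hqp, hrp, hrq]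
    abel

lemma sl3Cube_equiv (hdim : Module.finrank ℂ L = 24) [FiniteDimensional ℂ L]
    (p q r : SpecialLinear.sl (Fin 3) ℂ →ₗ⁅ℂ⁆ L) (hpq : ∀ M N, ⁅p M, q N⁆ = 0)
    (hpr : ∀ M N, ⁅p M, r N⁆ = 0) (hqr : ∀ M N, ⁅q M, r N⁆ = 0)
    (htop : ∀ R : LieSubalgebra ℂ L, p.range ≤ R → q.range ≤ R → r.range ≤ R → R = ⊤) :
    Nonempty (L ≃ₗ⁅ℂ⁆
      (SpecialLinear.sl (Fin 3) ℂ ×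
        (SpecialLinear.sl (Fin 3) ℂ × SpecialLinear.sl (Fin 3) ℂ))) := by
  have h1 : (sl3Cube p q r hpq hpr hqr).range = ⊤ := by
    apply htop
    · rintro _ ⟨M, rfl⟩
      refine ⟨(M, 0, 0), ?_⟩
      change p M + q 0 + r 0 = p M
      simp
    · rintro _ ⟨M, rfl⟩
      refine ⟨(0, M, 0), ?_⟩
      change p 0 + q M + r 0 = q M
      simp
    · rintro _ ⟨M, rfl⟩
      refine ⟨(0, 0, M), ?_⟩
      change p 0 + q 0 + r M = r M
      simp
  have hsurj : Function.Surjective (sl3Cube p q r hpq hpr hqr) := (LieHom.range_eq_top _).1 h1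
  have hfr : Module.finrank ℂ (SpecialLinear.sl (Fin 3) ℂ ×
        (SpecialLinear.sl (Fin 3) ℂ × SpecialLinear.sl (Fin 3) ℂ)) = Module.finrank ℂ L := by
    rw [Module.finrank_prod, Module.finrank_prod, finrank_sl3, hdim]
  have hinj : Function.Injective (sl3Cube p q r hpq hpr hqr) :=
    (LinearMap.injective_iff_surjective_of_finrank_eq_finrank
      (f := (sl3Cube p q r hpq hpr hqr).toLinearMap) hfr).2 hsurj
  exact ⟨(LieEquiv.ofBijective (sl3Cube p q r hpq hpr hqr) ⟨hinj, hsurj⟩).symm⟩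

end Part4

section Part5

open LieAlgebra.IsKilling LieModule

set_option linter.unusedSectionVars false

variable {L : Type*} [LieRing L] [LieAlgebra ℂ L] [FiniteDimensional ℂ L] [LieAlgebra.IsKilling ℂ L]
  {H : LieSubalgebra ℂ L} [H.IsCartanSubalgebra] {g : ZMod 3 → Submodule ℂ L}

lemma z3_zero_of {χ : H → ℂ} {x : L} (hx : x ∈ rootSpace H χ)
    (h : ∀ w : Weight ℂ H L, (w : H → ℂ) = χ → False) : x = 0 := by
  by_contra hne
  have hb : rootSpace H χ ≠ ⊥ := by
    intro h0
    rw [h0] at hx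
    exact hne (by simpa using hx)
  exact h ⟨χ, hb⟩ rfl

/-- Root vectors `x ∈ L_{±α}`, `y ∈ L_{±δ}` commute when `α`, `δ` are distinct, not in a triple. -/
lemma z3_comm (D : Z3Data H g) {α δ : Weight ℂ H L} (hα : Z3Q g 1 α) (hδ : Z3Q g 1 δ)
    (hne : α ≠ δ) (hno : ∀ ε, ¬ Z3Tri g α δ ε) {x y : L}
    (hx : x ∈ rootSpace H (α : H → ℂ) ∨ x ∈ rootSpace H (-α : H → ℂ))
    (hy : y ∈ rootSpace H (δ : H → ℂ) ∨ y ∈ rootSpace H (-δ : H → ℂ)) : ⁅x, y⁆ = 0 := by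
  rcases hx with hx | hx <;> rcases hy with hy | hy
  · refine z3_zero_of (lie_mem_genWeightSpace_of_mem_genWeightSpace hx hy) fun w hw => ?_
    refine hno (-w) ⟨hα, hδ, z3_F3 D hα hδ hw, fun h => ?_⟩
    rw [Weight.coe_neg, hw]; simp
  · refine z3_zero_of (lie_mem_genWeightSpace_of_mem_genWeightSpace hx hy) fun w hw => ?_
    exact hne (z3_F4 D hα hδ (γ := w) (by rw [hw, add_comm]))
  · refine z3_zero_of (lie_mem_genWeightSpace_of_mem_genWeightSpace hx hy) fun w hw => ?_
    exact hne (z3_F4 D hδ hα (γ := w) hw).symm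
  · refine z3_zero_of (lie_mem_genWeightSpace_of_mem_genWeightSpace hx hy) fun w hw => ?_
    have hw' : ((-w : Weight ℂ H L) : H → ℂ) = α + δ := by
      rw [Weight.coe_neg, hw]; funext h; simp; ring
    have := z3_F3 D hα hδ hw'
    rw [neg_neg] at this
    refine hno w ⟨hα, hδ, this, fun h => ?_⟩
    rw [hw]; simp; ring

lemma z3_rel (D : Z3Data H g) {α β γ : Weight ℂ H L} (T : Z3Tri g α β γ) :
    ∃ h1 h2 e1 e2 f1 f2 : L, Sl3Rel h1 h2 e1 e2 f1 f2 ∧ e1 ∈ rootSpace H (α : H → ℂ) ∧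
      e2 ∈ rootSpace H (β : H → ℂ) ∧ f1 ∈ rootSpace H (-α : H → ℂ) ∧ f2 ∈ rootSpace H (-β : H → ℂ) ∧
      e1 ≠ 0 ∧ e2 ≠ 0 ∧ f1 ≠ 0 ∧ f2 ≠ 0 ∧ ⁅e1, e2⁆ ≠ 0 ∧ ⁅f2, f1⁆ ≠ 0 := by
  obtain ⟨h1, e1, f1, t1, he1, hf1⟩ := exists_isSl2Triple_of_weight_isNonZero T.ha.1
  obtain ⟨h2, e2, f2, t2, he2, hf2⟩ := exists_isSl2Triple_of_weight_isNonZero T.hb.1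
  have hc1 := t1.h_eq_coroot T.ha.1 he1 hf1
  have hc2 := t2.h_eq_coroot T.hb.1 he2 hf2
  have hac : α (coroot β) = -1 := T.swap.pair D
  have hbc : β (coroot α) = -1 := T.pair D
  have haa := root_apply_coroot T.ha.1
  have hbb := root_apply_coroot T.hb.1
  have hγ : (γ : H → ℂ) = -(α + β) := by
    funext h
    have := T.hs h
    simp only [Pi.neg_apply, Pi.add_apply]
    linear_combination this
  have act : ∀ (δ : H → ℂ) (h : H) (x : L), x ∈ rootSpace H δ → ⁅(h : L), x⁆ = δ h • x :=
    fun δ h x hx => lie_eq_smul_of_mem_rootSpace hx h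
  have R : Sl3Rel h1 h2 e1 e2 f1 f2 :=
    { hh := by
        rw [hc1, hc2]
        have h3 : ⁅coroot α, coroot β⁆ = 0 := trivial_lie_zero _ _ _ _
        exact congrArg Subtype.val h3
      h1e1 := by rw [hc1, act _ _ _ he1, haa]
      h1e2 := by rw [hc1, act _ _ _ he2, hbc]
      h1f1 := by rw [hc1, act _ _ _ hf1, Pi.neg_apply, haa]
      h1f2 := by rw [hc1, act _ _ _ hf2, Pi.neg_apply, hbc, neg_neg]
      h2e1 := by rw [hc2, act _ _ _ he1, hac]
      h2e2 := by rw [hc2, act _ _ _ he2, hbb]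
      h2f1 := by rw [hc2, act _ _ _ hf1, Pi.neg_apply, hac, neg_neg]
      h2f2 := by rw [hc2, act _ _ _ hf2, Pi.neg_apply, hbb]
      e1f1 := t1.lie_e_f
      e2f2 := t2.lie_e_f
      e1f2 := by
        refine z3_zero_of (lie_mem_genWeightSpace_of_mem_genWeightSpace he1 hf2) fun w hw => ?_
        exact T.ne D (z3_F4 D T.ha T.hb (γ := w) (by rw [hw, add_comm]))
      e2f1 := by
        refine z3_zero_of (lie_mem_genWeightSpace_of_mem_genWeightSpace he2 hf1) fun w hw => ?_
        exact T.ne D (z3_F4 D T.hb T.ha (γ := w) (by rw [hw, add_comm])).symm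
      e1e3 := by
        refine z3_zero_of (lie_mem_genWeightSpace_of_mem_genWeightSpace he1
          (lie_mem_genWeightSpace_of_mem_genWeightSpace he1 he2)) fun w hw => ?_
        exact T.rot.rot.ne D (z3_F4 D T.ha T.hc (γ := w) (by rw [hw, hγ]; abel)).symm
      e2e3 := by
        refine z3_zero_of (lie_mem_genWeightSpace_of_mem_genWeightSpace he2
          (lie_mem_genWeightSpace_of_mem_genWeightSpace he1 he2)) fun w hw => ?_
        exact T.rot.ne D (z3_F4 D T.hb T.hc (γ := w) (by rw [hw, hγ]; abel))
      f1f3 := by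
        refine z3_zero_of (lie_mem_genWeightSpace_of_mem_genWeightSpace hf1
          (lie_mem_genWeightSpace_of_mem_genWeightSpace hf2 hf1)) fun w hw => ?_
        exact T.rot.rot.ne D (z3_F4 D T.hc T.ha (γ := w) (by rw [hw, hγ]; abel))
      f2f3 := by
        refine z3_zero_of (lie_mem_genWeightSpace_of_mem_genWeightSpace hf2
          (lie_mem_genWeightSpace_of_mem_genWeightSpace hf2 hf1)) fun w hw => ?_
        exact T.rot.ne D (z3_F4 D T.hc T.hb (γ := w) (by rw [hw, hγ]; abel)).symm }
  have f10 : f1 ≠ 0 := by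
    rintro rfl
    exact t1.h_ne_zero (by rw [← t1.lie_e_f, lie_zero])
  have e10 : e1 ≠ 0 := by
    rintro rfl
    exact t1.h_ne_zero (by rw [← t1.lie_e_f, zero_lie])
  have f20 : f2 ≠ 0 := by
    rintro rfl
    exact t2.h_ne_zero (by rw [← t2.lie_e_f, lie_zero])
  have e20 : e2 ≠ 0 := by
    rintro rfl
    exact t2.h_ne_zero (by rw [← t2.lie_e_f, zero_lie])
  refine ⟨h1, h2, e1, e2, f1, f2, R, he1, he2, hf1, hf2, e10, e20, f10, f20, ?_, ?_⟩
  · intro h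
    have : ⁅f1, ⁅e1, e2⁆⁆ = e2 := by
      rw [leibniz_lie, sl3_lie_skew' R.e1f1, sl3_lie_skew' R.e2f1, neg_lie, R.h1e2]; simp
    rw [h, lie_zero] at this
    exact e20 this.symm
  · intro h
    have : ⁅e2, ⁅f2, f1⁆⁆ = f1 := by
      rw [leibniz_lie, R.e2f2, R.e2f1, R.h2f1]; simp
    rw [h, lie_zero] at this
    exact f10 this.symm

lemma z3_rootSpace_le {α : Weight ℂ H L} (hα : α.IsNonZero) {e : L} (he : e ∈ rootSpace H α)
    (he0 : e ≠ 0) (R : LieSubalgebra ℂ L) (hR : e ∈ R) : ∀ x ∈ rootSpace H α, x ∈ R := by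
  intro x hx
  obtain ⟨c, rfl⟩ := z3_root_line hα he he0 hx
  exact R.smul_mem c hR

/-- A subalgebra containing all root spaces is everything. -/
lemma z3_top (R : LieSubalgebra ℂ L)
    (h : ∀ α : Weight ℂ H L, α.IsNonZero → ∀ x ∈ rootSpace H α, x ∈ R) : R = ⊤ := by
  have hco : ∀ α : Weight ℂ H L, α.IsNonZero → ((coroot α : H) : L) ∈ R := by
    intro α hα
    obtain ⟨c, e, f, t, he, hf⟩ := exists_isSl2Triple_of_weight_isNonZero hα
    rw [← t.h_eq_coroot hα he hf, ← t.lie_e_f]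
    exact R.lie_mem (h α hα e he) (h (-α) (Weight.IsNonZero.neg hα) f (by rw [Weight.coe_neg]; exact hf))
  have hH : ∀ x : H, (x : L) ∈ R := by
    have h1 : (⊤ : Submodule ℂ H) ≤ R.toSubmodule.comap H.toSubmodule.subtype := by
      rw [← RootPairing.IsRootSystem.span_coroot_eq_top (P := rootSystem H), Submodule.span_le]
      rintro _ ⟨α, rfl⟩
      exact hco α.1 (LieSubalgebra.isNonZero_coe_root α)
    intro x
    exact h1 (x := x) trivial
  have h2 : ⨆ χ : Weight ℂ H L, (rootSpace H χ).toSubmodule = ⊤ := by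
    rw [← LieSubmodule.iSup_toSubmodule, iSup_genWeightSpace_eq_top' ℂ H L]; rfl
  have h3 : (⊤ : Submodule ℂ L) ≤ R.toSubmodule := by
    rw [← h2]
    refine iSup_le fun χ x hx => ?_
    by_cases hχ : χ.IsZero
    · have hx' : x ∈ rootSpace H χ := hx
      rw [hχ.eq, rootSpace_zero_eq] at hx'
      exact hH ⟨x, hx'⟩
    · exact h χ hχ x hx
  rw [eq_top_iff]
  intro x _
  exact h3 (x := x) trivial

lemma z3_final (D : Z3Data H g) (hdim : Module.finrank ℂ L = 24)
    (hdim0 : Module.finrank ℂ (g 0) = 6) :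
    Nonempty (L ≃ₗ⁅ℂ⁆
      (SpecialLinear.sl (Fin 3) ℂ ×
        (SpecialLinear.sl (Fin 3) ℂ × SpecialLinear.sl (Fin 3) ℂ))) := by
  obtain ⟨T, hT, hdis, hall⟩ := z3_three D hdim hdim0
  choose h1 h2 e1 e2 f1 f2 R he1 he2 hf1 hf2 ne1 ne2 nf1 nf2 ne3 nf3 using fun i => z3_rel D (hT i)
  have hQ : ∀ i a, Z3Q g 1 (T i a) := by
    intro i a
    fin_cases a
    · exact (hT i).ha
    · exact (hT i).hb
    · exact (hT i).hc
  have hno : ∀ i j, i ≠ j → ∀ a b ε, ¬ Z3Tri g (T i a) (T j b) ε := by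
    intro i j hij a b ε hS
    have h := hS.pair D
    have h' : (T j b) (coroot (T i a)) = 0 := by
      fin_cases a
      · exact (hT i).orth D (hQ j b) (hdis j i b 0 hij.symm) (hdis j i b 1 hij.symm) (hdis j i b 2 hij.symm)
      · exact (hT i).rot.orth D (hQ j b) (hdis j i b 1 hij.symm) (hdis j i b 2 hij.symm) (hdis j i b 0 hij.symm)
      · exact (hT i).rot.rot.orth D (hQ j b) (hdis j i b 2 hij.symm) (hdis j i b 0 hij.symm) (hdis j i b 1 hij.symm)
    rw [h'] at h
    norm_num at h
  have hmem : ∀ i, ∀ x ∈ ({e1 i, e2 i, f1 i, f2 i} : Set L), ∃ a,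
      x ∈ rootSpace H (T i a : H → ℂ) ∨ x ∈ rootSpace H (-(T i a) : H → ℂ) := by
    intro i x hx
    simp only [Set.mem_insert_iff, Set.mem_singleton_iff] at hx
    rcases hx with rfl | rfl | rfl | rfl
    · exact ⟨0, Or.inl (he1 i)⟩
    · exact ⟨1, Or.inl (he2 i)⟩
    · exact ⟨0, Or.inr (hf1 i)⟩
    · exact ⟨1, Or.inr (hf2 i)⟩
  have hcomm : ∀ i j, i ≠ j → ∀ M N, ⁅sl3Hom (R i) M, sl3Hom (R j) N⁆ = 0 := by
    intro i j hij
    refine sl3Hom_comm' (R i) (R j) ?_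
    intro x hx y hy
    obtain ⟨a, ha⟩ := hmem j x hx
    obtain ⟨b, hb⟩ := hmem i y hy
    exact z3_comm D (hQ j a) (hQ i b) (hdis j i a b hij.symm) (hno j i hij.symm a b) ha hb
  refine sl3Cube_equiv hdim (sl3Hom (R 0)) (sl3Hom (R 1)) (sl3Hom (R 2)) (hcomm 0 1 (by decide))
    (hcomm 0 2 (by decide)) (hcomm 1 2 (by decide)) ?_
  intro S hS0 hS1 hS2
  have hS : ∀ i, (sl3Hom (R i)).range ≤ S := by
    intro i; fin_cases i
    · exact hS0
    · exact hS1
    · exact hS2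
  have m1 : ∀ i, e1 i ∈ S := fun i => hS i (sl3Hom_range (R i)).1
  have m2 : ∀ i, e2 i ∈ S := fun i => hS i (sl3Hom_range (R i)).2.1
  have m3 : ∀ i, f1 i ∈ S := fun i => hS i (sl3Hom_range (R i)).2.2.1
  have m4 : ∀ i, f2 i ∈ S := fun i => hS i (sl3Hom_range (R i)).2.2.2
  have m5 : ∀ i, ⁅e1 i, e2 i⁆ ∈ S := fun i => S.lie_mem (m1 i) (m2 i)
  have m6 : ∀ i, ⁅f2 i, f1 i⁆ ∈ S := fun i => S.lie_mem (m4 i) (m3 i)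
  have hsum : ∀ i, (T i 2 : H → ℂ) = -(T i 1 : H → ℂ) + -(T i 0 : H → ℂ) := by
    intro i
    funext h
    have := (hT i).hs h
    simp only [Pi.neg_apply, Pi.add_apply]
    linear_combination this
  have hpos : ∀ i a, ∀ x ∈ rootSpace H (T i a), x ∈ S := by
    intro i a
    fin_cases a
    · exact z3_rootSpace_le (hQ i 0).1 (he1 i) (ne1 i) S (m1 i)
    · exact z3_rootSpace_le (hQ i 1).1 (he2 i) (ne2 i) S (m2 i)
    · refine z3_rootSpace_le (hQ i 2).1 (e := ⁅f2 i, f1 i⁆) ?_ (nf3 i) S (m6 i)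
      rw [hsum i]
      exact lie_mem_genWeightSpace_of_mem_genWeightSpace (hf2 i) (hf1 i)
  have hneg : ∀ i a, ∀ x ∈ rootSpace H (-(T i a) : Weight ℂ H L), x ∈ S := by
    intro i a
    fin_cases a
    · exact z3_rootSpace_le (hQ i 0).1.neg (by rw [Weight.coe_neg]; exact hf1 i) (nf1 i) S (m3 i)
    · exact z3_rootSpace_le (hQ i 1).1.neg (by rw [Weight.coe_neg]; exact hf2 i) (nf2 i) S (m4 i)
    · refine z3_rootSpace_le (hQ i 2).1.neg (e := ⁅e1 i, e2 i⁆) ?_ (ne3 i) S (m5 i)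
      have h4 : ((-(T i 2) : Weight ℂ H L) : H → ℂ) = (T i 0 : H → ℂ) + (T i 1 : H → ℂ) := by
        rw [Weight.coe_neg, hsum i]; abel
      rw [h4]
      exact lie_mem_genWeightSpace_of_mem_genWeightSpace (he1 i) (he2 i)
  apply z3_top (H := H) S
  intro α hα
  rcases z3_F1 D hα with h | h
  · obtain ⟨i, a, rfl⟩ := hall α h
    exact hpos i a
  · obtain ⟨i, a, hia⟩ := hall (-α) h
    have : α = -(T i a) := by rw [← hia, neg_neg]
    rw [this]
    exact hneg i a

end Part5

/-- A semisimple `ℤ/3ℤ`-graded complex Lie algebra `g = g₀ ⊕ g₁ ⊕ g₂` of dimension 24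
whose degree-zero part `g₀` is an abelian 6-dimensional subalgebra acting semisimply on
`g₁` and `g₂` is isomorphic to the direct sum of three copies of `sl₃` (type `A₂³`). -/
theorem z3_graded_semisimple_dim24_iso_sl3_cubed
    {L : Type*} [LieRing L] [LieAlgebra ℂ L] [FiniteDimensional ℂ L]
    [LieAlgebra.IsSemisimple ℂ L]
    (hdim : Module.finrank ℂ L = 24)
    (g : ZMod 3 → Submodule ℂ L)
    (hinternal : DirectSum.IsInternal g)
    (hgrad : ∀ i j : ZMod 3, ∀ x ∈ g i, ∀ y ∈ g j, ⁅x, y⁆ ∈ g (i + j))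
    (habelian : ∀ x ∈ g 0, ∀ y ∈ g 0, ⁅x, y⁆ = 0)
    (hdim0 : Module.finrank ℂ (g 0) = 6)
    (hss : ∀ x ∈ g 0, ∀ k : ZMod 3, k ≠ 0 → ∃ s : Set L, s ⊆ g k ∧
      Submodule.span ℂ s = g k ∧ ∀ y ∈ s, ∃ c : ℂ, ⁅x, y⁆ = c • y) :
    Nonempty (L ≃ₗ⁅ℂ⁆
      (SpecialLinear.sl (Fin 3) ℂ ×
        (SpecialLinear.sl (Fin 3) ℂ × SpecialLinear.sl (Fin 3) ℂ))) := by
  have : LieAlgebra.IsKilling ℂ L := inferInstance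
  obtain ⟨H, hH, hH0⟩ := z3_main1 g hinternal hgrad habelian hss
  exact z3_final (H := H) ⟨hinternal, hgrad, hH0⟩ hdim hdim0
end

section
/- The fixed-point subalgebra of the simple complex Lie algebra of type D_4 under the automorphism induced by a fixed-point-free order-3 isometry of the root lattice D_4 (acting trivially on no nonzero vector of the Cartan subalgebra) has dimension 8, and being semisimple it is isomorphic to sl_3 (type A_2). -/
/-- The bracket coefficients of the Pauli matrices. -/
def kap (w : ℂ) (p q : ZMod 3 × ZMod 3) : ℂ := w ^ (p.2 * q.1).val - w ^ (p.1 * q.2).val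

/-- The determinant of two vectors of the plane over the field with three elements. -/
def dt (p q : ZMod 3 × ZMod 3) : ZMod 3 := p.1 * q.2 - p.2 * q.1

set_option linter.unusedSimpArgs false in
set_option maxHeartbeats 4000000 in
lemma coeff_normalized (w : ℂ) (hw : w ^ 2 + w + 1 = 0)
    (c : ZMod 3 × ZMod 3 → ZMod 3 × ZMod 3 → ℂ)
    (ha : ∀ p q, c p q = - c q p) (hz : ∀ p q, dt p q = 0 → c p q = 0)
    (J : ∀ p q r, p + q + r ≠ 0 →
      c q r * c p (q + r) = c p q * c (p + q) r + c p r * c q (p + r))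
    (hAB : c (1,0) (0,1) = 1 - w)
    (hAC : c (1,0) (1,1) = 1 - w)
    (hAD : c (1,0) (2,1) = 1 - w)
    (hBC : c (0,1) (1,1) = w - 1)
    (hBDp : c (0,1) (1,2) = w - 1)
    (hADp : c (1,0) (1,2) = 1 - (-1-w))
    (hACp : c (1,0) (2,2) = 1 - (-1-w))
    (hBCp : c (0,1) (2,2) = (-1-w) - 1) : ∀ p q, c p q = kap w p q := by
  have hBD : c (0,1) (2,1) = (-1-w) - 1 := by
    have h : c (1,0) (1,1) * c (0,1) (2,1) = c (0,1) (1,0) * c (1,1) (1,1) + c (0,1) (1,1) * c (1,0) (1,2) := J (0,1) (1,0) (1,1) (by decide)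
    rw [hAC, hz (1,1) (1,1) (by decide), hBC, hADp] at h
    grind
  have hCDp : c (1,1) (1,2) = w - (-1-w) := by
    have h : c (1,0) (1,2) * c (0,1) (2,2) = c (0,1) (1,0) * c (1,1) (1,2) + c (0,1) (1,2) * c (1,0) (1,0) := J (0,1) (1,0) (1,2) (by decide)
    rw [hADp, hBCp, ha (0,1) (1,0), hAB, hz (1,0) (1,0) (by decide)] at h
    grind
  have hCD : c (1,1) (2,1) = (-1-w) - w := by
    have h : c (1,0) (2,1) * c (0,1) (0,1) = c (0,1) (1,0) * c (1,1) (2,1) + c (0,1) (2,1) * c (1,0) (2,2) := J (0,1) (1,0) (2,1) (by decide)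
    rw [hz (0,1) (0,1) (by decide), ha (0,1) (1,0), hAB, hBD, hACp] at h
    grind
  have hBAp : c (0,1) (2,0) = (-1-w) - 1 := by
    have h : c (1,1) (1,2) * c (0,1) (2,0) = c (0,1) (1,1) * c (1,2) (1,2) + c (0,1) (1,2) * c (1,1) (1,0) := J (0,1) (1,1) (1,2) (by decide)
    rw [hCDp, hz (1,2) (1,2) (by decide), hBDp, ha (1,1) (1,0), hAC] at h
    grind
  have hDpAp : c (1,2) (2,0) = w - 1 := by
    have h : c (1,1) (2,0) * c (0,1) (0,1) = c (0,1) (1,1) * c (1,2) (2,0) + c (0,1) (2,0) * c (1,1) (2,1) := J (0,1) (1,1) (2,0) (by decide)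
    rw [hz (0,1) (0,1) (by decide), hBC, hBAp, hCD] at h
    grind
  have hDpCp : c (1,2) (2,2) = w - (-1-w) := by
    have h : c (1,2) (2,1) * c (0,1) (0,0) = c (0,1) (1,2) * c (1,0) (2,1) + c (0,1) (2,1) * c (1,2) (2,2) := J (0,1) (1,2) (2,1) (by decide)
    rw [hz (1,2) (2,1) (by decide), hBDp, hAD, hBD] at h
    grind
  have hCAp : c (1,1) (2,0) = (-1-w) - 1 := by
    have h : c (2,0) (1,0) * c (0,1) (0,0) = c (0,1) (2,0) * c (2,1) (1,0) + c (0,1) (1,0) * c (2,0) (1,1) := J (0,1) (2,0) (1,0) (by decide)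
    rw [hz (2,0) (1,0) (by decide), hBAp, ha (2,1) (1,0), hAD, ha (0,1) (1,0), hAB, ha (2,0) (1,1)] at h
    grind
  have hApD : c (2,0) (2,1) = 1 - (-1-w) := by
    have h : c (1,1) (2,0) * c (1,0) (0,1) = c (1,0) (1,1) * c (2,1) (2,0) + c (1,0) (2,0) * c (1,1) (0,0) := J (1,0) (1,1) (2,0) (by decide)
    rw [hCAp, hAB, hAC, ha (2,1) (2,0), hz (1,0) (2,0) (by decide)] at h
    grind
  have hBpA : c (0,2) (1,0) = (-1-w) - 1 := by
    have h : c (1,1) (2,1) * c (1,0) (0,2) = c (1,0) (1,1) * c (2,1) (2,1) + c (1,0) (2,1) * c (1,1) (0,1) := J (1,0) (1,1) (2,1) (by decide)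
    rw [hCD, ha (1,0) (0,2), hz (2,1) (2,1) (by decide), hAD, ha (1,1) (0,1), hBC] at h
    grind
  have hApCp : c (2,0) (2,2) = 1 - w := by
    have h : c (1,2) (2,0) * c (1,0) (0,2) = c (1,0) (1,2) * c (2,2) (2,0) + c (1,0) (2,0) * c (1,2) (0,0) := J (1,0) (1,2) (2,0) (by decide)
    rw [hDpAp, ha (1,0) (0,2), hBpA, hADp, ha (2,2) (2,0), hz (1,0) (2,0) (by decide)] at h
    grind
  have hDCp : c (2,1) (2,2) = (-1-w) - w := by
    have h : c (1,2) (2,1) * c (1,0) (0,0) = c (1,0) (1,2) * c (2,2) (2,1) + c (1,0) (2,1) * c (1,2) (0,1) := J (1,0) (1,2) (2,1) (by decide)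
    rw [hz (1,2) (2,1) (by decide), hADp, ha (2,2) (2,1), hAD, ha (1,2) (0,1), hBDp] at h
    grind
  have hBpDp : c (0,2) (1,2) = (-1-w) - 1 := by
    have h : c (1,2) (2,2) * c (1,0) (0,1) = c (1,0) (1,2) * c (2,2) (2,2) + c (1,0) (2,2) * c (1,2) (0,2) := J (1,0) (1,2) (2,2) (by decide)
    rw [hDpCp, hAB, hz (2,2) (2,2) (by decide), hACp, ha (1,2) (0,2)] at h
    grind
  have hBpAp : c (0,2) (2,0) = w - 1 := by
    have h : c (2,0) (0,2) * c (1,0) (2,2) = c (1,0) (2,0) * c (0,0) (0,2) + c (1,0) (0,2) * c (2,0) (1,2) := J (1,0) (2,0) (0,2) (by decide)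
    rw [ha (2,0) (0,2), hACp, hz (1,0) (2,0) (by decide), ha (1,0) (0,2), hBpA, ha (2,0) (1,2), hDpAp] at h
    grind
  have hBpD : c (0,2) (2,1) = w - 1 := by
    have h : c (2,1) (2,2) * c (1,0) (1,0) = c (1,0) (2,1) * c (0,1) (2,2) + c (1,0) (2,2) * c (2,1) (0,2) := J (1,0) (2,1) (2,2) (by decide)
    rw [hz (1,0) (1,0) (by decide), hAD, hBCp, hACp, ha (2,1) (0,2)] at h
    grind
  have hBpCp : c (0,2) (2,2) = w - 1 := by
    have h : c (2,2) (0,2) * c (1,0) (2,1) = c (1,0) (2,2) * c (0,2) (0,2) + c (1,0) (0,2) * c (2,2) (1,2) := J (1,0) (2,2) (0,2) (by decide)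
    rw [ha (2,2) (0,2), hAD, hz (0,2) (0,2) (by decide), ha (1,0) (0,2), hBpA, ha (2,2) (1,2), hDpCp] at h
    grind
  have hBpC : c (0,2) (1,1) = (-1-w) - 1 := by
    have h : c (2,2) (1,1) * c (1,0) (0,0) = c (1,0) (2,2) * c (0,2) (1,1) + c (1,0) (1,1) * c (2,2) (2,1) := J (1,0) (2,2) (1,1) (by decide)
    rw [hz (2,2) (1,1) (by decide), hACp, hAC, ha (2,2) (2,1), hDCp] at h
    grind
  have hw2 : w ^ 2 = -1 - w := by linear_combination hw
  have gAB : c (1,0) (0,1) = kap w (1,0) (0,1) := by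
    change _ = w ^ 0 - w ^ 1
    rw [hAB]; simp only [pow_zero, pow_one, hw2]
  have gAC : c (1,0) (1,1) = kap w (1,0) (1,1) := by
    change _ = w ^ 0 - w ^ 1
    rw [hAC]; simp only [pow_zero, pow_one, hw2]
  have gAD : c (1,0) (2,1) = kap w (1,0) (2,1) := by
    change _ = w ^ 0 - w ^ 1
    rw [hAD]; simp only [pow_zero, pow_one, hw2]
  have gBC : c (0,1) (1,1) = kap w (0,1) (1,1) := by
    change _ = w ^ 1 - w ^ 0
    rw [hBC]; simp only [pow_zero, pow_one, hw2]
  have gBDp : c (0,1) (1,2) = kap w (0,1) (1,2) := by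
    change _ = w ^ 1 - w ^ 0
    rw [hBDp]; simp only [pow_zero, pow_one, hw2]
  have gADp : c (1,0) (1,2) = kap w (1,0) (1,2) := by
    change _ = w ^ 0 - w ^ 2
    rw [hADp]; simp only [pow_zero, pow_one, hw2]
  have gACp : c (1,0) (2,2) = kap w (1,0) (2,2) := by
    change _ = w ^ 0 - w ^ 2
    rw [hACp]; simp only [pow_zero, pow_one, hw2]
  have gBCp : c (0,1) (2,2) = kap w (0,1) (2,2) := by
    change _ = w ^ 2 - w ^ 0
    rw [hBCp]; simp only [pow_zero, pow_one, hw2]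
  have gBD : c (0,1) (2,1) = kap w (0,1) (2,1) := by
    change _ = w ^ 2 - w ^ 0
    rw [hBD]; simp only [pow_zero, pow_one, hw2]
  have gCDp : c (1,1) (1,2) = kap w (1,1) (1,2) := by
    change _ = w ^ 1 - w ^ 2
    rw [hCDp]; simp only [pow_zero, pow_one, hw2]
  have gCD : c (1,1) (2,1) = kap w (1,1) (2,1) := by
    change _ = w ^ 2 - w ^ 1
    rw [hCD]; simp only [pow_zero, pow_one, hw2]
  have gBAp : c (0,1) (2,0) = kap w (0,1) (2,0) := by
    change _ = w ^ 2 - w ^ 0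
    rw [hBAp]; simp only [pow_zero, pow_one, hw2]
  have gDpAp : c (1,2) (2,0) = kap w (1,2) (2,0) := by
    change _ = w ^ 1 - w ^ 0
    rw [hDpAp]; simp only [pow_zero, pow_one, hw2]
  have gDpCp : c (1,2) (2,2) = kap w (1,2) (2,2) := by
    change _ = w ^ 1 - w ^ 2
    rw [hDpCp]; simp only [pow_zero, pow_one, hw2]
  have gCAp : c (1,1) (2,0) = kap w (1,1) (2,0) := by
    change _ = w ^ 2 - w ^ 0
    rw [hCAp]; simp only [pow_zero, pow_one, hw2]
  have gApD : c (2,0) (2,1) = kap w (2,0) (2,1) := by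
    change _ = w ^ 0 - w ^ 2
    rw [hApD]; simp only [pow_zero, pow_one, hw2]
  have gBpA : c (0,2) (1,0) = kap w (0,2) (1,0) := by
    change _ = w ^ 2 - w ^ 0
    rw [hBpA]; simp only [pow_zero, pow_one, hw2]
  have gApCp : c (2,0) (2,2) = kap w (2,0) (2,2) := by
    change _ = w ^ 0 - w ^ 1
    rw [hApCp]; simp only [pow_zero, pow_one, hw2]
  have gDCp : c (2,1) (2,2) = kap w (2,1) (2,2) := by
    change _ = w ^ 2 - w ^ 1
    rw [hDCp]; simp only [pow_zero, pow_one, hw2]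
  have gBpDp : c (0,2) (1,2) = kap w (0,2) (1,2) := by
    change _ = w ^ 2 - w ^ 0
    rw [hBpDp]; simp only [pow_zero, pow_one, hw2]
  have gBpAp : c (0,2) (2,0) = kap w (0,2) (2,0) := by
    change _ = w ^ 1 - w ^ 0
    rw [hBpAp]; simp only [pow_zero, pow_one, hw2]
  have gBpD : c (0,2) (2,1) = kap w (0,2) (2,1) := by
    change _ = w ^ 1 - w ^ 0
    rw [hBpD]; simp only [pow_zero, pow_one, hw2]
  have gBpCp : c (0,2) (2,2) = kap w (0,2) (2,2) := by
    change _ = w ^ 1 - w ^ 0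
    rw [hBpCp]; simp only [pow_zero, pow_one, hw2]
  have gBpC : c (0,2) (1,1) = kap w (0,2) (1,1) := by
    change _ = w ^ 2 - w ^ 0
    rw [hBpC]; simp only [pow_zero, pow_one, hw2]
  have anti : ∀ p q, c q p = kap w q p → c p q = kap w p q := by
    intro p q h
    rw [ha, h]
    simp only [kap]
    rw [mul_comm q.2, mul_comm q.1]
    ring
  have list : ∀ p q : ZMod 3 × ZMod 3, dt p q ≠ 0 → c p q = kap w p q ∨ c q p = kap w q p := by
    intro p q
    obtain ⟨p1, p2⟩ := p
    obtain ⟨q1, q2⟩ := q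
    fin_cases p1 <;> fin_cases p2 <;> fin_cases q1 <;> fin_cases q2 <;> intro h <;>
    first
    | exact absurd (by decide) h
    | exact Or.inl gAB
    | exact Or.inr gAB
    | exact Or.inl gAC
    | exact Or.inr gAC
    | exact Or.inl gAD
    | exact Or.inr gAD
    | exact Or.inl gBC
    | exact Or.inr gBC
    | exact Or.inl gBDp
    | exact Or.inr gBDp
    | exact Or.inl gADp
    | exact Or.inr gADp
    | exact Or.inl gACp
    | exact Or.inr gACp
    | exact Or.inl gBCp
    | exact Or.inr gBCp
    | exact Or.inl gBD
    | exact Or.inr gBD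
    | exact Or.inl gCDp
    | exact Or.inr gCDp
    | exact Or.inl gCD
    | exact Or.inr gCD
    | exact Or.inl gBAp
    | exact Or.inr gBAp
    | exact Or.inl gDpAp
    | exact Or.inr gDpAp
    | exact Or.inl gDpCp
    | exact Or.inr gDpCp
    | exact Or.inl gCAp
    | exact Or.inr gCAp
    | exact Or.inl gApD
    | exact Or.inr gApD
    | exact Or.inl gBpA
    | exact Or.inr gBpA
    | exact Or.inl gApCp
    | exact Or.inr gApCp
    | exact Or.inl gDCp
    | exact Or.inr gDCp
    | exact Or.inl gBpDp
    | exact Or.inr gBpDp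
    | exact Or.inl gBpAp
    | exact Or.inr gBpAp
    | exact Or.inl gBpD
    | exact Or.inr gBpD
    | exact Or.inl gBpCp
    | exact Or.inr gBpCp
    | exact Or.inl gBpC
    | exact Or.inr gBpC
  intro p q
  by_cases h : dt p q = 0
  · rw [hz p q h, kap]
    have : p.2 * q.1 = p.1 * q.2 := by
      rw [dt] at h
      exact (sub_eq_zero.1 h).symm
    rw [this, sub_self]
  · rcases list p q h with h | h
    · exact h
    · exact anti p q h



lemma coeff_scale (w : ℂ) (hw : w ^ 2 + w + 1 = 0)
    (c : ZMod 3 × ZMod 3 → ZMod 3 × ZMod 3 → ℂ)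
    (ha : ∀ p q, c p q = - c q p) (hz : ∀ p q, dt p q = 0 → c p q = 0)
    (hn : ∀ p q, dt p q ≠ 0 → c p q ≠ 0)
    (J : ∀ p q r, p + q + r ≠ 0 →
      c q r * c p (q + r) = c p q * c (p + q) r + c p r * c q (p + r)) :
    ∃ s : ZMod 3 × ZMod 3 → ℂ, (∀ p, s p ≠ 0) ∧
      ∀ p q, c p q * s p * s q = kap w p q * s (p + q) := by
  have ht : 1 - w ≠ 0 := by
    intro h
    have : w = 1 := by linear_combination -h
    subst this; norm_num at hw
  have ht2 : 2 + w ≠ 0 := by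
    intro h
    have : w = -2 := by linear_combination h
    subst this; norm_num at hw
  have nAB := hn (1,0) (0,1) (by decide)
  have nAC := hn (1,0) (1,1) (by decide)
  have nAD := hn (1,0) (2,1) (by decide)
  have nBC := hn (0,1) (1,1) (by decide)
  have nBDp := hn (0,1) (1,2) (by decide)
  have nADp := hn (1,0) (1,2) (by decide)
  have nACp := hn (1,0) (2,2) (by decide)
  have nBCp := hn (0,1) (2,2) (by decide)
  obtain ⟨a, hA⟩ := IsAlgClosed.exists_pow_nat_eq
    ((1 - w) ^ 3 / (c (1,0) (0,1) * c (1,0) (1,1) * c (1,0) (2,1))) (n := 3) (by norm_num)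
  obtain ⟨b, hB⟩ := IsAlgClosed.exists_pow_nat_eq
    ((1 - w) ^ 3 / (c (1,0) (0,1) * c (0,1) (1,1) * c (0,1) (1,2))) (n := 3) (by norm_num)
  have na : a ≠ 0 := by
    rintro rfl
    have : (1 - w) ^ 3 / (c (1,0) (0,1) * c (1,0) (1,1) * c (1,0) (2,1)) ≠ 0 := by positivity
    exact this (by rw [← hA]; norm_num)
  have nb : b ≠ 0 := by
    rintro rfl
    have : (1 - w) ^ 3 / (c (1,0) (0,1) * c (0,1) (1,1) * c (0,1) (1,2)) ≠ 0 := by positivity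
    exact this (by rw [← hB]; norm_num)
  obtain ⟨sC, hC⟩ : ∃ x, x = c (1,0) (0,1) * a * b / (1 - w) := ⟨_, rfl⟩
  obtain ⟨sD, hD⟩ : ∃ x, x = c (1,0) (1,1) * a * sC / (1 - w) := ⟨_, rfl⟩
  obtain ⟨sDp, hDp⟩ : ∃ x, x = c (0,1) (1,1) * b * sC / (-(1 - w)) := ⟨_, rfl⟩
  obtain ⟨sCp, hCp⟩ : ∃ x, x = c (1,0) (1,2) * a * sDp / (2 + w) := ⟨_, rfl⟩
  obtain ⟨sBp, hBp⟩ : ∃ x, x = c (1,0) (2,2) * a * sCp / (2 + w) := ⟨_, rfl⟩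
  obtain ⟨sAp, hAp⟩ : ∃ x, x = c (0,1) (2,2) * b * sCp / (-(2 + w)) := ⟨_, rfl⟩
  have ht' := neg_ne_zero.2 ht
  have ht2' := neg_ne_zero.2 ht2
  have nC : sC ≠ 0 := by rw [hC]; positivity
  have nD : sD ≠ 0 := by rw [hD]; positivity
  have nDp : sDp ≠ 0 := by rw [hDp]; exact div_ne_zero (by positivity) ht'
  have nCp : sCp ≠ 0 := by rw [hCp]; positivity
  have nBp : sBp ≠ 0 := by rw [hBp]; positivity
  have nAp : sAp ≠ 0 := by rw [hAp]; exact div_ne_zero (by positivity) ht2'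
  obtain ⟨s, h00, h10, h20, h01, h02, h11, h22, h21, h12⟩ : ∃ s : ZMod 3 × ZMod 3 → ℂ,
      s (0,0) = 1 ∧ s (1,0) = a ∧ s (2,0) = sAp ∧ s (0,1) = b ∧ s (0,2) = sBp ∧
      s (1,1) = sC ∧ s (2,2) = sCp ∧ s (2,1) = sD ∧ s (1,2) = sDp :=
    ⟨fun p => if p = (0,0) then 1 else if p = (1,0) then a else if p = (2,0) then sAp else
      if p = (0,1) then b else if p = (0,2) then sBp else if p = (1,1) then sC else
      if p = (2,2) then sCp else if p = (2,1) then sD else sDp,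
      rfl, rfl, rfl, rfl, rfl, rfl, rfl, rfl, rfl⟩
  have ns : ∀ p, s p ≠ 0 := by
    rintro ⟨p, q⟩
    fin_cases p <;> fin_cases q
    · exact h00 ▸ one_ne_zero
    · exact h01 ▸ nb
    · exact h02 ▸ nBp
    · exact h10 ▸ na
    · exact h11 ▸ nC
    · exact h12 ▸ nDp
    · exact h20 ▸ nAp
    · exact h21 ▸ nD
    · exact h22 ▸ nCp
  refine ⟨s, ns, ?_⟩
  have fin := coeff_normalized w hw (fun p q => c p q * s p * s q / s (p + q))
    (fun p q => by rw [ha p q, add_comm q p]; ring)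
    (fun p q h => by rw [hz p q h]; ring)
    (fun p q r h => by
      have j := J p q r h
      have e1 : p + (q + r) = p + q + r := by abel
      have e2 : q + (p + r) = p + q + r := by abel
      have h1 := ns (q + r)
      have h2 := ns (p + q)
      have h3 := ns (p + r)
      have h4 := ns (p + q + r)
      rw [e1, e2]
      field_simp
      linear_combination s p * s q * s r * j)
    (by
      change c (1,0) (0,1) * s (1,0) * s (0,1) / s (1,1) = _
      rw [h10, h01, h11, hC]; field_simp)
    (by
      change c (1,0) (1,1) * s (1,0) * s (1,1) / s (2,1) = _
      rw [h10, h11, h21, hD]; field_simp)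
    (by
      change c (1,0) (2,1) * s (1,0) * s (2,1) / s (0,1) = _
      rw [h10, h21, h01, hD, hC]
      rw [eq_div_iff (by positivity)] at hA
      field_simp
      linear_combination hA)
    (by
      change c (0,1) (1,1) * s (0,1) * s (1,1) / s (1,2) = _
      rw [h01, h11, h12, hDp]; field_simp; ring)
    (by
      change c (0,1) (1,2) * s (0,1) * s (1,2) / s (1,0) = _
      rw [h01, h12, h10, hDp, hC]
      rw [eq_div_iff (by positivity)] at hB
      field_simp
      linear_combination -hB)
    (by
      change c (1,0) (1,2) * s (1,0) * s (1,2) / s (2,2) = _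
      rw [h10, h12, h22, hCp]; field_simp; ring)
    (by
      change c (1,0) (2,2) * s (1,0) * s (2,2) / s (0,2) = _
      rw [h10, h22, h02, hBp]; field_simp; ring)
    (by
      change c (0,1) (2,2) * s (0,1) * s (2,2) / s (2,0) = _
      rw [h01, h22, h20, hAp]; field_simp; ring)
  intro p q
  have := fin p q
  rwa [div_eq_iff (ns _)] at this


section Pauli

attribute [local instance] LieRing.ofAssociativeRing

/-- The character of the cyclic group of order three attached to a cube root of unity. -/
def chr (w : ℂ) (a : ZMod 3) : ℂ := w ^ a.val

lemma chr_add (w : ℂ) (hw : w ^ 2 + w + 1 = 0) (a b : ZMod 3) :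
    chr w (a + b) = chr w a * chr w b := by
  have h3 : w ^ 3 = 1 := by linear_combination (w - 1) * hw
  simp only [chr]
  rw [ZMod.val_add, ← pow_add, ← pow_mod_natCard_aux w h3]
where
  pow_mod_natCard_aux (w : ℂ) (h3 : w ^ 3 = 1) (n : ℕ) : w ^ n = w ^ (n % 3) := by
    conv_lhs => rw [← Nat.div_add_mod n 3, pow_add, pow_mul, h3, one_pow, one_mul]

/-- The Pauli matrices of size three. -/
def pauli (w : ℂ) (p : ZMod 3 × ZMod 3) : Matrix (ZMod 3) (ZMod 3) ℂ :=
  fun i j => if i = j + p.1 then chr w (p.2 * j) else 0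

lemma pauli_mul (w : ℂ) (hw : w ^ 2 + w + 1 = 0) (p q : ZMod 3 × ZMod 3) :
    pauli w p * pauli w q = chr w (p.2 * q.1) • pauli w (p + q) := by
  ext i k
  rw [Matrix.mul_apply, Finset.sum_eq_single (k + q.1)]
  · simp only [pauli, Matrix.smul_apply, smul_eq_mul, if_true, Prod.fst_add, Prod.snd_add]
    have e : k + q.1 + p.1 = k + (p.1 + q.1) := by ring
    rw [e]
    split_ifs
    · rw [← chr_add w hw, ← chr_add w hw]
      congr 1; ring
    · simp
  · intro j _ hj
    simp [pauli, hj]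
  · simp

lemma pauli_lie (w : ℂ) (hw : w ^ 2 + w + 1 = 0) (p q : ZMod 3 × ZMod 3) :
    ⁅pauli w p, pauli w q⁆ = kap w p q • pauli w (p + q) := by
  rw [Ring.lie_def, pauli_mul w hw, pauli_mul w hw, add_comm q p, ← sub_smul, kap, chr, chr,
    mul_comm q.2]

lemma sum_zmod3 {M : Type*} [AddCommMonoid M] (g : ZMod 3 → M) :
    ∑ j, g j = g 0 + g 1 + g 2 := Fin.sum_univ_three g

lemma pauli_trace (w : ℂ) (hw : w ^ 2 + w + 1 = 0) (p : ZMod 3 × ZMod 3) (hp : p ≠ 0) :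
    (pauli w p).trace = 0 := by
  obtain ⟨a, b⟩ := p
  simp only [Matrix.trace, Matrix.diag, pauli]
  by_cases h : a = 0
  · subst h
    simp only [add_zero, if_true]
    rw [sum_zmod3]
    fin_cases b
    · exact absurd rfl hp
    · change w ^ 0 + w ^ 1 + w ^ 2 = 0
      linear_combination hw
    · change w ^ 0 + w ^ 2 + w ^ 1 = 0
      linear_combination hw
  · simp [h]

lemma pauli_indep (w : ℂ) (hw : w ^ 2 + w + 1 = 0) : LinearIndependent ℂ (pauli w) := by
  rw [Fintype.linearIndependent_iff]
  intro g hg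
  have ent : ∀ a j : ZMod 3, g (a, 0) * chr w (0 * j) + g (a, 1) * chr w (1 * j)
      + g (a, 2) * chr w (2 * j) = 0 := by
    intro a j
    have := congrFun (congrFun hg (j + a)) j
    rw [Matrix.sum_apply, Fintype.sum_prod_type, Finset.sum_eq_single a] at this
    · rw [sum_zmod3] at this
      simpa [pauli] using this
    · intro b _ hb
      apply Finset.sum_eq_zero
      intro x _
      simp [pauli, hb.symm]
    · simp
  rintro ⟨a, b⟩
  have e0 : g (a, 0) * w ^ 0 + g (a, 1) * w ^ 0 + g (a, 2) * w ^ 0 = 0 := ent a 0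
  have e1 : g (a, 0) * w ^ 0 + g (a, 1) * w ^ 1 + g (a, 2) * w ^ 2 = 0 := ent a 1
  have e2 : g (a, 0) * w ^ 0 + g (a, 1) * w ^ 2 + g (a, 2) * w ^ 1 = 0 := ent a 2
  have z0 : g (a, 0) = 0 := by grind
  have z1 : g (a, 1) = 0 := by grind
  have z2 : g (a, 2) = 0 := by grind
  fin_cases b
  · exact z0
  · exact z1
  · exact z2

lemma finrank_sl3_s13 : Module.finrank ℂ (LieAlgebra.SpecialLinear.sl (ZMod 3) ℂ) = 8 := by
  have h := LinearMap.finrank_range_add_finrank_ker (Matrix.traceLinearMap (ZMod 3) ℂ ℂ)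
  have hs : Function.Surjective (Matrix.traceLinearMap (ZMod 3) ℂ ℂ) := by
    intro x
    refine ⟨Matrix.diagonal (fun i => if i = 0 then x else 0), ?_⟩
    simp [Matrix.trace]
  rw [LinearMap.range_eq_top.2 hs, finrank_top, Module.finrank_self, Module.finrank_matrix] at h
  simp only [ZMod.card, Module.finrank_self] at h
  change Module.finrank ℂ (LinearMap.ker (Matrix.traceLinearMap (ZMod 3) ℂ ℂ)) = 8
  omega

theorem iso_sl3 {K : Type*} [LieRing K] [LieAlgebra ℂ K]
    (E : ZMod 3 × ZMod 3 → K) (_E0 : E 0 = 0)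
    (b : Module.Basis {p : ZMod 3 × ZMod 3 // p ≠ 0} ℂ K) (hb : ∀ p, b p = E p.1)
    (hlie : ∀ p q, ∃ c : ℂ, ⁅E p, E q⁆ = c • E (p + q) ∧ (dt p q ≠ 0 → c ≠ 0) ∧
      (dt p q = 0 → c = 0)) :
    Module.finrank ℂ K = 8 ∧
    Nonempty (K ≃ₗ⁅ℂ⁆ LieAlgebra.SpecialLinear.sl (Fin 3) ℂ) := by
  have hfr : Module.finrank ℂ K = 8 := by
    rw [Module.finrank_eq_card_basis b]; decide
  refine ⟨hfr, ?_⟩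
  choose c hc hn hz using hlie
  have hE : ∀ p, p ≠ 0 → E p ≠ 0 := fun p hp => by
    rw [← hb ⟨p, hp⟩]; exact b.ne_zero _
  have ha : ∀ p q, c p q = - c q p := by
    intro p q
    by_cases h : p + q = 0
    · have d1 : dt p q = 0 := by
        rw [eq_neg_of_add_eq_zero_left h]; simp only [dt, Prod.fst_neg, Prod.snd_neg]; ring
      have d2 : dt q p = 0 := by
        rw [eq_neg_of_add_eq_zero_left h]; simp only [dt, Prod.fst_neg, Prod.snd_neg]; ring
      rw [hz _ _ d1, hz _ _ d2, neg_zero]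
    · have h1 := hc p q
      rw [← lie_skew, hc q p, add_comm q p, ← neg_smul] at h1
      exact (smul_left_injective ℂ (hE _ h) h1).symm
  have J : ∀ p q r, p + q + r ≠ 0 →
      c q r * c p (q + r) = c p q * c (p + q) r + c p r * c q (p + r) := by
    intro p q r h
    have j := leibniz_lie (E p) (E q) (E r)
    rw [hc q r, hc p q, hc p r, lie_smul, smul_lie, lie_smul, hc, hc, hc, smul_smul, smul_smul,
      smul_smul, ← add_assoc p q r, ← add_assoc q p r, add_comm q p, ← add_smul] at j
    exact smul_left_injective ℂ (hE _ h) j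
  obtain ⟨w, hw⟩ : ∃ w : ℂ, w ^ 2 + w + 1 = 0 := by
    obtain ⟨z, hz⟩ := IsAlgClosed.exists_pow_nat_eq (-3 : ℂ) (n := 2) (by norm_num)
    exact ⟨(-1 + z) / 2, by linear_combination hz / 4⟩
  obtain ⟨s, ns, hs⟩ := coeff_scale w hw c ha hz hn J
  let T : K →ₗ[ℂ] Matrix (ZMod 3) (ZMod 3) ℂ := b.constr ℂ (fun p => (s p.1)⁻¹ • pauli w p.1)
  have hT : ∀ p, p ≠ 0 → T (E p) = (s p)⁻¹ • pauli w p := by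
    intro p hp
    rw [← hb ⟨p, hp⟩, Module.Basis.constr_basis]
  have hTlie : ∀ x y, T ⁅x, y⁆ = ⁅T x, T y⁆ := by
    intro x y
    have hx : x ∈ Submodule.span ℂ (Set.range b) := by rw [b.span_eq]; trivial
    have hy : y ∈ Submodule.span ℂ (Set.range b) := by rw [b.span_eq]; trivial
    induction hx, hy using Submodule.span_induction₂ with
    | mem_mem x y hx hy =>
      obtain ⟨p, rfl⟩ := hx
      obtain ⟨q, rfl⟩ := hy
      rw [hb, hb, hT _ p.2, hT _ q.2, smul_lie, lie_smul, pauli_lie w hw, hc, map_smul]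
      by_cases h : p.1 + q.1 = 0
      · have d1 : dt p.1 q.1 = 0 := by
          rw [eq_neg_of_add_eq_zero_left h]; simp only [dt, Prod.fst_neg, Prod.snd_neg]; ring
        have h2 := hs p q
        rw [hz _ _ d1, zero_mul, zero_mul, zero_eq_mul] at h2
        rw [hz _ _ d1, h2.resolve_right (ns _)]
        simp
      · rw [hT _ h, smul_smul, smul_smul, smul_smul]
        congr 1
        have h1 := ns p.1
        have h2 := ns q.1
        have h3 := ns (p.1 + q.1)
        field_simp
        linear_combination hs p.1 q.1
    | zero_left => simp
    | zero_right => simp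
    | add_left x y z _ _ _ h1 h2 => simp [h1, h2]
    | add_right x y z _ _ _ h1 h2 => simp [h1, h2]
    | smul_left r x y _ _ h => simp [h]
    | smul_right r x y _ _ h => simp [h]
  have htr : ∀ x, T x ∈ LieAlgebra.SpecialLinear.sl (ZMod 3) ℂ := by
    intro x
    have hx : x ∈ Submodule.span ℂ (Set.range b) := by rw [b.span_eq]; trivial
    induction hx using Submodule.span_induction with
    | mem x hx =>
      obtain ⟨p, rfl⟩ := hx
      rw [hb, hT _ p.2]
      apply Submodule.smul_mem (LieAlgebra.SpecialLinear.sl (ZMod 3) ℂ).toSubmodule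
      change Matrix.trace (pauli w p.1) = 0
      exact pauli_trace w hw _ p.2
    | zero => rw [map_zero]; exact zero_mem _
    | add x y _ _ h1 h2 => rw [map_add]; exact add_mem h1 h2
    | smul r x _ h =>
      rw [map_smul]
      exact Submodule.smul_mem (LieAlgebra.SpecialLinear.sl (ZMod 3) ℂ).toSubmodule _ h
  have hinj : Function.Injective T := by
    have hli : LinearIndependent ℂ (fun p : {p : ZMod 3 × ZMod 3 // p ≠ 0} =>
        (s p.1)⁻¹ • pauli w p.1) := by
      have h1 := (pauli_indep w hw).comp (fun p : {p : ZMod 3 × ZMod 3 // p ≠ 0} => p.1)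
        Subtype.val_injective
      exact h1.units_smul (fun p => Units.mk0 (s p.1)⁻¹ (inv_ne_zero (ns _)))
    rw [← LinearMap.ker_eq_bot, LinearMap.ker_eq_bot']
    intro x hx
    have hx' : T x = ∑ p, b.repr x p • ((s p.1)⁻¹ • pauli w p.1) := by
      simp only [T, Module.Basis.constr_apply_fintype, Module.Basis.equivFun_apply]
    rw [hx'] at hx
    have := Fintype.linearIndependent_iff.1 hli _ hx
    exact b.ext_elem (by simpa using this)
  let T' : K →ₗ⁅ℂ⁆ LieAlgebra.SpecialLinear.sl (ZMod 3) ℂ :=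
    { T.codRestrict (LieAlgebra.SpecialLinear.sl (ZMod 3) ℂ).toSubmodule htr with
      map_lie' := by
        intro x y
        apply Subtype.ext
        exact hTlie x y }
  have hinj' : Function.Injective T' := by
    intro x y h
    exact hinj (congrArg Subtype.val h)
  have : FiniteDimensional ℂ K := Module.Finite.of_basis b
  have hbij : Function.Bijective T' := by
    refine ⟨hinj', ?_⟩
    have : Function.Injective
        (T' : K →ₗ[ℂ] LieAlgebra.SpecialLinear.sl (ZMod 3) ℂ) := hinj'
    exact (LinearMap.injective_iff_surjective_of_finrank_eq_finrank
      (by rw [hfr, finrank_sl3_s13])).1 this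
  exact ⟨LieEquiv.ofBijective T' hbij⟩

end Pauli


section LieFacts
set_option linter.unusedSectionVars false
open LieAlgebra LieModule

variable {L : Type*} [LieRing L] [LieAlgebra ℂ L] [FiniteDimensional ℂ L]
    [LieAlgebra.IsSimple ℂ L] (H : LieSubalgebra ℂ L) [H.IsCartanSubalgebra]

/-- root space as a plain submodule, indexed by linear functionals -/
def wsp (l : Module.Dual ℂ H) : Submodule ℂ L := (rootSpace H (l : H → ℂ)).toSubmodule

/-- the set of roots -/
def rts : Set (Module.Dual ℂ H) := {l | l ≠ 0 ∧ wsp H l ≠ ⊥}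

lemma wsp_lie {l m : Module.Dual ℂ H} {x y : L} (hx : x ∈ wsp H l) (hy : y ∈ wsp H m) :
    ⁅x, y⁆ ∈ wsp H (l + m) :=
  lie_mem_genWeightSpace_of_mem_genWeightSpace hx hy

lemma wsp_zero : wsp H 0 = H.toSubmodule := by
  have := rootSpace_zero_eq ℂ L H
  unfold wsp
  change (rootSpace H (0 : H → ℂ)).toSubmodule = _
  rw [this]
  rfl

lemma wsp_indep : iSupIndep (wsp H) := by
  have h := iSupIndep_genWeightSpace ℂ H L
  have h2 := h.comp (f := fun l : Module.Dual ℂ H => (l : H → ℂ)) DFunLike.coe_injective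
  have := (LieSubmodule.iSupIndep_toSubmodule (R := ℂ) (L := H) (M := L)
    (N := fun l : Module.Dual ℂ H => rootSpace H (l : H → ℂ))).2 h2
  exact this

lemma wsp_weight (w : Weight ℂ H L) :
    wsp H (Weight.toLinear ℂ H L w) = (rootSpace H w).toSubmodule := rfl

lemma wsp_top : ⨆ l, wsp H l = ⊤ := by
  have h := iSup_genWeightSpace_eq_top' ℂ H L
  have h1 : (⨆ w : Weight ℂ H L, (rootSpace H w).toSubmodule) = ⊤ := by
    rw [← LieSubmodule.iSup_toSubmodule, h]; rfl
  rw [eq_top_iff, ← h1]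
  apply iSup_le
  intro w
  rw [← wsp_weight]
  exact le_iSup (wsp H) _

/-- the weight attached to a root -/
def wt {l : Module.Dual ℂ H} (hl : l ∈ rts H) : Weight ℂ H L :=
  ⟨l, fun h => hl.2 ((LieSubmodule.toSubmodule_eq_bot _).2 h)⟩

lemma wt_nz {l : Module.Dual ℂ H} (hl : l ∈ rts H) : (wt H hl).IsNonZero := by
  intro h
  apply hl.1
  ext x
  exact congrFun h x

lemma rts_iff (l : Module.Dual ℂ H) :
    l ∈ rts H ↔ ∃ w : Weight ℂ H L, w.IsNonZero ∧ Weight.toLinear ℂ H L w = l := by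
  constructor
  · intro h
    exact ⟨wt H h, wt_nz H h, by ext x; rfl⟩
  · rintro ⟨w, hw, rfl⟩
    refine ⟨?_, ?_⟩
    · intro h
      exact hw (by ext x; exact DFunLike.congr_fun h x)
    · rw [wsp_weight]
      intro h
      exact w.genWeightSpace_ne_bot' ((LieSubmodule.toSubmodule_eq_bot _).1 h)

lemma wsp_one {l : Module.Dual ℂ H} (hl : l ∈ rts H) : Module.finrank ℂ (wsp H l) = 1 :=
  IsKilling.finrank_rootSpace_eq_one (wt H hl) (wt_nz H hl)

lemma rts_neg {l : Module.Dual ℂ H} (hl : l ∈ rts H) : -l ∈ rts H := by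
  rw [rts_iff]
  refine ⟨-(wt H hl), ?_, ?_⟩
  · exact (wt_nz H hl).neg
  · ext x
    simp [wt]

lemma rts_eq : rts H = Set.range (IsKilling.rootSystem H).root := by
  ext l
  rw [rts_iff]
  constructor
  · rintro ⟨w, hw, rfl⟩
    exact ⟨⟨w, by simpa using hw⟩, rfl⟩
  · rintro ⟨w, rfl⟩
    exact ⟨w.1, (Finset.mem_filter.1 w.2).2, rfl⟩

lemma rts_finite : (rts H).Finite := by
  rw [rts_eq]; exact Set.finite_range _

lemma rts_card : (rts H).ncard + Module.finrank ℂ H = Module.finrank ℂ L := by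
  classical
  have hfin := rts_finite H
  -- index by insert 0
  let S : Finset (Module.Dual ℂ H) := insert 0 hfin.toFinset
  have hind : iSupIndep (fun l : S => wsp H l.1) :=
    (wsp_indep H).comp Subtype.val_injective
  have htop : ⨆ l : S, wsp H l.1 = ⊤ := by
    rw [eq_top_iff, ← wsp_top H]
    apply iSup_le
    intro l
    by_cases h0 : l ∈ S
    · exact le_iSup (fun l : S => wsp H l.1) ⟨l, h0⟩
    · have : wsp H l = ⊥ := by
        by_contra hne
        apply h0
        by_cases hl : l = 0
        · simp [S, hl]
        · simp [S]; right; exact ⟨hl, hne⟩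
      rw [this]; exact bot_le
  have hint : DirectSum.IsInternal (fun l : S => wsp H l.1) :=
    (DirectSum.isInternal_submodule_iff_iSupIndep_and_iSup_eq_top _).2 ⟨hind, htop⟩
  have e := LinearEquiv.ofBijective (DirectSum.coeLinearMap (fun l : S => wsp H l.1)) hint
  rw [← e.finrank_eq, Module.finrank_directSum]
  rw [Finset.sum_coe_sort S (fun l => Module.finrank ℂ (wsp H l))]
  rw [Finset.sum_insert (by simp [rts])]
  rw [Finset.sum_congr rfl (g := fun _ => 1) (fun l hl => wsp_one H (by simpa using hl))]
  rw [Set.ncard_eq_toFinset_card _ hfin, wsp_zero]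
  simp only [Finset.sum_const, smul_eq_mul, mul_one]
  rw [add_comm]; rfl

lemma lie_ne_zero {g d : Module.Dual ℂ H} (hg : g ∈ rts H) (hd : d ∈ rts H)
    (hgd : g + d ∈ rts H) (hne : d ≠ g) (hno : d - g ∉ rts H) {x y : L}
    (hx : x ∈ wsp H g) (hy : y ∈ wsp H d) (x0 : x ≠ 0) (y0 : y ≠ 0) : ⁅x, y⁆ ≠ 0 := by
  obtain ⟨h, e, f, ht, he, hf⟩ := IsKilling.exists_isSl2Triple_of_weight_isNonZero (wt_nz H hg)
  have hh := ht.h_eq_coroot (wt_nz H hg) he hf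
  have hbot : wsp H (d - g) = ⊥ := by
    by_contra hc
    exact hno ⟨sub_ne_zero.2 hne, hc⟩
  have key := fun n : ℤ => IsKilling.rootSpace_zsmul_add_ne_bot_iff (wt H hg) (wt H hd) (wt_nz H hg) n
  have hap := IsKilling.apply_coroot_eq_cast (wt H hg) (wt H hd)
  have k1 := (key 1).1 (by
    intro hc
    apply hgd.2
    unfold wsp
    have : ((g + d : Module.Dual ℂ H) : H → ℂ) = (1 : ℤ) • ⇑(wt H hg) + ⇑(wt H hd) := by
      ext x; simp [wt]
    rw [this]; exact (LieSubmodule.toSubmodule_eq_bot _).2 hc)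
  have k2 : ¬ (rootSpace H ((-1 : ℤ) • ⇑(wt H hg) + ⇑(wt H hd)) ≠ ⊥) := by
    intro hc
    apply hc
    have : ((d - g : Module.Dual ℂ H) : H → ℂ) = (-1 : ℤ) • ⇑(wt H hg) + ⇑(wt H hd) := by
      ext x; simp [wt]; ring
    unfold wsp at hbot
    rw [this] at hbot
    exact (LieSubmodule.toSubmodule_eq_bot _).1 hbot
  rw [key] at k2
  have hc0 : (d (IsKilling.coroot (wt H hg)) : ℂ) ≠ 0 := by
    change (wt H hd) (IsKilling.coroot (wt H hg)) ≠ 0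
    rw [hap]
    have : (((chainBotCoeff (⇑(wt H hg)) (wt H hd) : ℤ) -
      (chainTopCoeff (⇑(wt H hg)) (wt H hd) : ℤ) : ℤ)) ≠ 0 := by omega
    exact_mod_cast this
  -- x is a multiple of e
  have e0 : e ≠ 0 := ht.e_ne_zero
  have he' : e ∈ wsp H g := he
  obtain ⟨c, hc⟩ := (finrank_eq_one_iff_of_nonzero' (⟨x, hx⟩ : wsp H g)
    (by simpa using x0)).1 (wsp_one H hg) ⟨e, he'⟩
  have hc : c • x = e := congrArg Subtype.val hc
  intro hxy
  have hey : ⁅e, y⁆ = 0 := by rw [← hc, smul_lie, hxy, smul_zero]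
  have hfy : ⁅f, y⁆ = 0 := by
    have hf' : f ∈ wsp H (-g) := hf
    have := wsp_lie H hf' hy
    rw [neg_add_eq_sub, hbot] at this
    simpa using this
  have hhy : ⁅h, y⁆ = 0 := by
    rw [← ht.lie_e_f, lie_lie, hey, hfy]; simp
  rw [hh] at hhy
  have := IsKilling.lie_eq_smul_of_mem_rootSpace (H := H) hy (IsKilling.coroot (wt H hg))
  have h3 : ⁅((IsKilling.coroot (wt H hg) : H) : L), y⁆ = d (IsKilling.coroot (wt H hg)) • y := this
  rw [hhy] at h3
  exact (smul_ne_zero hc0 y0) h3.symm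

lemma irr_fact (q : Submodule ℂ (Module.Dual ℂ H)) (hq : q ≠ ⊥) (hq' : q ≠ ⊤) :
    ∃ b ∈ rts H, b ∉ q ∧ ∃ m : Module.Dual ℂ H →ₗ[ℂ] ℂ, (∃ v ∈ q, m v ≠ 0) ∧
      ∀ g ∈ rts H, ∃ n : ℤ, m g = n ∧ (n < 0 → g ≠ -b → g + b ∈ rts H) ∧
        (0 < n → g ≠ b → g - b ∈ rts H) := by
  have hne : ¬ ∀ i, q ∈ Module.End.invtSubmodule ((IsKilling.rootSystem H).reflection i : _ →ₗ[ℂ] _) :=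
    fun h => hq' (RootPairing.IsIrreducible.eq_top_of_invtSubmodule_reflection q h hq)
  push Not at hne
  obtain ⟨i, hi⟩ := hne
  rw [Module.End.mem_invtSubmodule] at hi
  obtain ⟨v, hv, hv'⟩ := Set.not_subset.1 hi
  have hv' : (IsKilling.rootSystem H).reflection i v ∉ q := hv'
  rw [RootPairing.reflection_apply] at hv'
  refine ⟨(IsKilling.rootSystem H).root i, ?_, ?_, (IsKilling.rootSystem H).coroot' i, ⟨v, hv, ?_⟩, ?_⟩
  · rw [rts_eq]; exact ⟨i, rfl⟩
  · intro h
    exact hv' (q.sub_mem hv (q.smul_mem _ h))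
  · intro h
    apply hv'
    rw [h]; simpa using hv
  · intro g hg
    rw [rts_eq] at hg ⊢
    obtain ⟨j, rfl⟩ := hg
    refine ⟨(IsKilling.rootSystem H).pairingIn ℤ j i, ?_, ?_, ?_⟩
    · have := (IsKilling.rootSystem H).algebraMap_pairingIn ℤ j i
      rw [← RootPairing.root_coroot'_eq_pairing] at this
      rw [← this]; simp
    · intro h1 h2
      exact RootPairing.root_add_root_mem_of_pairingIn_neg _ h1 h2
    · intro h1 h2
      exact RootPairing.root_sub_root_mem_of_pairingIn_pos _ h1 (fun h => h2 (by rw [h]))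

end LieFacts


/-- order three isometry on coordinates -/
def phi0 (x : ℤ × ℤ × ℤ × ℤ) : ℤ × ℤ × ℤ × ℤ :=
  (-x.2.1, x.1 - x.2.1, -x.2.2.2, x.2.2.1 - x.2.2.2)

/-- representatives of the roots up to sign and `phi0` -/
def base0 : Finset (ℤ × ℤ × ℤ × ℤ) := {(1,0,0,0), (0,0,1,0), (1,0,1,0), (0,-1,1,0)}

/-- representatives of the roots up to `phi0` -/
def base1 : Finset (ℤ × ℤ × ℤ × ℤ) := base0 ∪ base0.image (fun x => -x)

/-- all 24 roots in coordinates -/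
def R0 : Finset (ℤ × ℤ × ℤ × ℤ) :=
  base1 ∪ base1.image phi0 ∪ base1.image (fun x => phi0 (phi0 x))

/-- class of a lattice vector modulo `1 - phi` -/
def cl (x : ℤ × ℤ × ℤ × ℤ) : ZMod 3 × ZMod 3 :=
  (((x.1 + x.2.1 : ℤ) : ZMod 3), ((x.2.2.1 + x.2.2.2 : ℤ) : ZMod 3))

lemma R0_card : R0.card = 24 := by decide +kernel

lemma cl_add (x y : ℤ × ℤ × ℤ × ℤ) : cl (x + y) = cl x + cl y := by
  simp only [cl, Prod.fst_add, Prod.snd_add, Prod.mk_add_mk]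
  push_cast
  refine Prod.ext ?_ ?_ <;> simp only <;> ring

lemma cl_phi0 (x : ℤ × ℤ × ℤ × ℤ) : cl (phi0 x) = cl x := by
  have h3 : (3 : ZMod 3) = 0 := rfl
  simp only [cl, phi0]
  push_cast
  refine Prod.ext ?_ ?_ <;> simp only
  · linear_combination (-(x.2.1 : ZMod 3)) * h3
  · linear_combination (-(x.2.2.2 : ZMod 3)) * h3

lemma cl_iter (k : ℕ) (x : ℤ × ℤ × ℤ × ℤ) : cl (phi0^[k] x) = cl x := by
  induction k with
  | zero => rfl
  | succ n ih => rw [Function.iterate_succ_apply', cl_phi0, ih]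

lemma cl_ne : ∀ x ∈ R0, cl x ≠ 0 := by decide +kernel

lemma R0_iter : ∀ x ∈ R0, ∀ k : Fin 3, phi0^[k.1] x ∈ R0 := by decide +kernel

lemma R0_orbit : ∀ x ∈ R0, ∀ y ∈ R0, cl x = cl y → ∃ k : Fin 3, y = phi0^[k.1] x := by
  decide +kernel

lemma R0_surj : ∀ p : ZMod 3 × ZMod 3, p ≠ 0 → ∃ x ∈ R0, cl x = p := by decide +kernel

lemma R0_free : ∀ x ∈ R0, ∀ k l : Fin 3, phi0^[k.1] x = phi0^[l.1] x → k = l := by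
  decide +kernel

lemma R0_comm : ∀ x ∈ R0, ∀ y ∈ R0, cl x ≠ cl y → dt (cl x) (cl y) = 0 →
    ∀ k : Fin 3, x + phi0^[k.1] y ∉ R0 := by decide +kernel

lemma R0_noncomm : ∀ x ∈ R0, ∀ y ∈ R0, dt (cl x) (cl y) ≠ 0 →
    ∃ k : Fin 3, x + phi0^[k.1] y ∈ R0 ∧ ∀ l : Fin 3, l ≠ k → x + phi0^[l.1] y ∉ R0 := by
  decide +kernel

lemma R0_string : ∀ x ∈ R0, ∀ y ∈ R0, x + y ∈ R0 → y ≠ x ∧ y - x ∉ R0 := by decide +kernel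

lemma inv_sub {V : Type*} [AddCommGroup V] [Module ℂ V] (φ : V →ₗ[ℂ] V)
    (h1 : ∀ v, v + φ v + φ (φ v) = 0) (q : Submodule ℂ V) (hq : ∀ v ∈ q, φ v ∈ q)
    (b : V) (hb : b ∉ q) (z w : ℤ) (h : z • b + w • φ b ∈ q) : z = 0 ∧ w = 0 := by
  have h2 := hq _ h
  have e : (z - w) • (z • b + w • φ b) - w • φ (z • b + w • φ b) = (z * z - z * w + w * w) • b := by
    have : φ (φ b) = -b - φ b := by
      have := h1 b
      rw [← sub_eq_zero, ← this]; abel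
    simp only [map_add, map_zsmul, this]
    module
  have h3 : (z * z - z * w + w * w) • b ∈ q := by
    rw [← e]
    exact q.sub_mem (zsmul_mem h _) (zsmul_mem h2 _)
  have h4 : z * z - z * w + w * w = 0 := by
    by_contra hne
    apply hb
    rw [← Int.cast_smul_eq_zsmul ℂ] at h3
    exact (q.smul_mem_iff (by exact_mod_cast hne)).1 h3
  constructor <;> nlinarith [sq_nonneg (z - w), sq_nonneg z, sq_nonneg w, sq_nonneg (z+w)]

theorem comb {V : Type*} [AddCommGroup V] [Module ℂ V] (hV : Module.finrank ℂ V = 4)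
    (φ : V →ₗ[ℂ] V) (h1 : ∀ v, v + φ v + φ (φ v) = 0) (Φ : Set V) (hfin : Φ.Finite)
    (hcard : Φ.ncard = 24) (hzero : (0 : V) ∉ Φ) (hneg : ∀ v ∈ Φ, -v ∈ Φ)
    (hphi : ∀ v ∈ Φ, φ v ∈ Φ)
    (hirr : ∀ q : Submodule ℂ V, q ≠ ⊥ → q ≠ ⊤ →
      ∃ b ∈ Φ, b ∉ q ∧ ∃ m : V →ₗ[ℂ] ℂ, (∃ v ∈ q, m v ≠ 0) ∧
      ∀ g ∈ Φ, ∃ n : ℤ, m g = n ∧ (n < 0 → g ≠ -b → g + b ∈ Φ) ∧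
        (0 < n → g ≠ b → g - b ∈ Φ)) :
    ∃ r : ℤ × ℤ × ℤ × ℤ → V, Function.Injective r ∧ (∀ x y, r (x + y) = r x + r y) ∧
      (∀ x, r (phi0 x) = φ (r x)) ∧ ∀ v, v ∈ Φ ↔ ∃ x ∈ R0, r x = v := by
  classical
  have hpp : ∀ b, φ (φ b) = -b - φ b := by
    intro b
    have := h1 b
    rw [← sub_eq_zero, ← this]; abel
  obtain ⟨a, ha⟩ : Φ.Nonempty := by
    rw [Set.nonempty_iff_ne_empty]
    rintro rfl
    simp at hcard
  let q := Submodule.span ℂ ({a, φ a} : Set V)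
  have haq : a ∈ q := Submodule.subset_span (by simp)
  have hpaq : φ a ∈ q := Submodule.subset_span (by simp)
  have hqi : ∀ v ∈ q, φ v ∈ q := by
    intro v hv
    obtain ⟨s, t, rfl⟩ := Submodule.mem_span_pair.1 hv
    rw [map_add, map_smul, map_smul, hpp]
    exact q.add_mem (q.smul_mem _ hpaq) (q.smul_mem _ (q.sub_mem (q.neg_mem haq) hpaq))
  have hqb : q ≠ ⊥ := by
    intro h
    rw [h] at haq
    exact hzero ((Submodule.mem_bot ℂ).1 haq ▸ ha)
  have hqt : q ≠ ⊤ := by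
    intro h
    have h2 : Module.finrank ℂ q ≤ _ := finrank_span_le_card (R := ℂ) ({a, φ a} : Set V)
    rw [h, finrank_top, hV] at h2
    have h3 : ({a, φ a} : Set V).toFinset.card ≤ 2 := by
      rw [Set.toFinset_insert, Set.toFinset_singleton]
      exact Finset.card_le_two
    omega
  obtain ⟨b, hb, hbq, m, ⟨v, hv, hmv⟩, hm⟩ := hirr q hqb hqt
  obtain ⟨n0, e0, -, -⟩ := hm a ha
  obtain ⟨n1, e1, -, -⟩ := hm _ (hphi _ ha)
  obtain ⟨n2, e2, -, -⟩ := hm _ (hphi _ (hphi _ ha))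
  have hsum : n0 + n1 + n2 = 0 := by
    have := congrArg m (h1 a)
    rw [map_add, map_add, e0, e1, e2, map_zero] at this
    exact_mod_cast this
  have hnz : ¬ (n0 = 0 ∧ n1 = 0) := by
    rintro ⟨rfl, rfl⟩
    apply hmv
    obtain ⟨s, t, rfl⟩ := Submodule.mem_span_pair.1 hv
    simp [e0, e1]
  obtain ⟨α, hα, hαq, c0, c1, d0, d1, hc0, hc1⟩ : ∃ α ∈ Φ, α ∈ q ∧ ∃ c0 c1 : ℤ, m α = c0 ∧
      m (φ α) = c1 ∧ c0 < 0 ∧ 0 < c1 := by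
    have e3 : φ (φ (φ a)) = a := by rw [hpp, hpp]; abel
    have hcase : (n0 < 0 ∧ 0 < n1) ∨ (n1 < 0 ∧ 0 < n2) ∨ (n2 < 0 ∧ 0 < n0) ∨
      (0 < n0 ∧ n1 < 0) ∨ (0 < n1 ∧ n2 < 0) ∨ (0 < n2 ∧ n0 < 0) := by omega
    have p1 := hphi _ ha
    have p2 := hphi _ p1
    have q2 := hqi _ hpaq
    rcases hcase with h | h | h | h | h | h
    · exact ⟨a, ha, haq, n0, n1, e0, e1, h.1, h.2⟩
    · exact ⟨_, p1, hpaq, n1, n2, e1, e2, h.1, h.2⟩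
    · exact ⟨_, p2, q2, n2, n0, e2, by rw [e3, e0], h.1, h.2⟩
    · exact ⟨_, hneg _ ha, q.neg_mem haq, -n0, -n1, by simp [e0], by simp [e1], by omega, by omega⟩
    · exact ⟨_, hneg _ p1, q.neg_mem hpaq, -n1, -n2, by simp [e1], by simp [e2], by omega, by omega⟩
    · exact ⟨_, hneg _ p2, q.neg_mem q2, -n2, -n0, by simp [e2], by simp [e3, e0], by omega, by omega⟩
  have hαb : α + b ∈ Φ := by
    obtain ⟨n, en, k1, -⟩ := hm _ hα
    have : n = c0 := by rw [d0] at en; exact_mod_cast en.symm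
    refine k1 (by omega) ?_
    rintro rfl
    exact hbq (by simpa using hαq)
  have hαb2 : φ α - b ∈ Φ := by
    obtain ⟨n, en, -, k1⟩ := hm _ (hphi _ hα)
    have : n = c1 := by rw [d1] at en; exact_mod_cast en.symm
    refine k1 (by omega) ?_
    rintro rfl
    exact hbq (hqi _ hαq)
  let r : ℤ × ℤ × ℤ × ℤ → V := fun x =>
    x.1 • α + x.2.1 • φ α + (x.2.2.1 • b + x.2.2.2 • φ b)
  have radd : ∀ x y, r (x + y) = r x + r y := by
    intro x y
    simp only [r, Prod.fst_add, Prod.snd_add]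
    module
  have rphi : ∀ x, r (phi0 x) = φ (r x) := by
    intro x
    simp only [r, phi0, map_add, map_zsmul, hpp]
    module
  have rneg : ∀ x, r (-x) = - r x := by
    intro x
    simp only [r, Prod.fst_neg, Prod.snd_neg]
    module
  have rinj0 : ∀ x, r x = 0 → x = 0 := by
    rintro ⟨x1, x2, x3, x4⟩ hx
    simp only [r] at hx
    have hq1 : x3 • b + x4 • φ b ∈ q := by
      rw [eq_neg_of_add_eq_zero_right hx]
      exact q.neg_mem (q.add_mem (zsmul_mem hαq _) (zsmul_mem (hqi _ hαq) _))
    obtain ⟨rfl, rfl⟩ := inv_sub φ h1 q hqi b hbq _ _ hq1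
    have hq2 : x1 • α + x2 • φ α ∈ (⊥ : Submodule ℂ V) := by
      rw [Submodule.mem_bot, ← hx]; simp
    obtain ⟨rfl, rfl⟩ := inv_sub φ h1 ⊥ (by intro v hv; rw [Submodule.mem_bot] at *; rw [hv, map_zero])
      α (by rw [Submodule.mem_bot]; rintro rfl; exact hzero hα) _ _ hq2
    rfl
  have rinj : Function.Injective r := by
    intro x y hxy
    have := rinj0 (x + -y) (by rw [radd, rneg, hxy]; abel)
    rw [← sub_eq_add_neg] at this
    exact sub_eq_zero.1 this
  have hb0 : ∀ x ∈ base0, r x ∈ Φ := by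
    intro x hx
    simp only [base0, Finset.mem_insert, Finset.mem_singleton] at hx
    rcases hx with rfl | rfl | rfl | rfl
    · simpa [r] using hα
    · simpa [r] using hb
    · simpa [r] using hαb
    · have := hneg _ hαb2
      have e : r (0, -1, 1, 0) = -(φ α - b) := by simp only [r]; module
      rw [e]; exact this
  have hb1 : ∀ x ∈ base1, r x ∈ Φ := by
    intro x hx
    simp only [base1, Finset.mem_union, Finset.mem_image] at hx
    rcases hx with h | ⟨y, hy, rfl⟩
    · exact hb0 _ h
    · rw [rneg]; exact hneg _ (hb0 _ hy)
  have hR : ∀ x ∈ R0, r x ∈ Φ := by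
    intro x hx
    simp only [R0, Finset.mem_union, Finset.mem_image] at hx
    rcases hx with (h | ⟨y, hy, rfl⟩) | ⟨y, hy, rfl⟩
    · exact hb1 _ h
    · rw [rphi]; exact hphi _ (hb1 _ hy)
    · rw [rphi, rphi]; exact hphi _ (hphi _ (hb1 _ hy))
  refine ⟨r, rinj, radd, rphi, ?_⟩
  have himg : r '' (R0 : Set (ℤ × ℤ × ℤ × ℤ)) = Φ := by
    apply Set.eq_of_subset_of_ncard_le
    · rintro _ ⟨x, hx, rfl⟩
      exact hR x hx
    · rw [hcard, Set.ncard_image_of_injective _ rinj, Set.ncard_coe_finset, R0_card]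
    · exact hfin
  intro v
  rw [← himg]
  simp


theorem fixed_subalgebra_of_D4_under_order_three
    {L : Type*} [LieRing L] [LieAlgebra ℂ L] [FiniteDimensional ℂ L]
    [LieAlgebra.IsSimple ℂ L]
    (hdim : Module.finrank ℂ L = 28)
    (f : L ≃ₗ⁅ℂ⁆ L)
    (hf3 : ∀ x, f (f (f x)) = x)
    (hfne : ∃ x, f x ≠ x)
    (H : LieSubalgebra ℂ L) (hcartan : H.IsCartanSubalgebra)
    (hHdim : Module.finrank ℂ H = 4)
    (hfH : ∀ x ∈ H, f x ∈ H)
    (hfree : ∀ x ∈ H, f x = x → x = 0)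
    (hroot : ∀ χ : L → ℂ, (∃ h ∈ H, χ h ≠ 0) → ∀ x : L, x ≠ 0 →
      (∀ h ∈ H, ⁅h, x⁆ = χ h • x) → ¬ (∀ h ∈ H, ⁅h, f x⁆ = χ h • f x)) :
    ∃ K : LieSubalgebra ℂ L, (K : Set L) = {x | f x = x} ∧
      Module.finrank ℂ K = 8 ∧
      Nonempty (K ≃ₗ⁅ℂ⁆ LieAlgebra.SpecialLinear.sl (Fin 3) ℂ) := by
  classical
  haveI := hcartan
  -- the trace map
  let F : L →ₗ[ℂ] L := (f : L →ₗ[ℂ] L)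
  have hF : ∀ x, F x = f x := fun x => rfl
  let tr : L →ₗ[ℂ] L := LinearMap.id + F + F ∘ₗ F
  have htr : ∀ x, tr x = x + f x + f (f x) := fun x => rfl
  have ftr : ∀ x, f (tr x) = tr x := by
    intro x
    simp only [htr, map_add, hf3]; abel
  have trf : ∀ x, tr (f x) = tr x := by
    intro x
    simp only [htr, hf3]; abel
  have trit : ∀ (k : ℕ) x, tr (f^[k] x) = tr x := by
    intro k x
    induction k with
    | zero => rfl
    | succ n ih => rw [Function.iterate_succ_apply', trf, ih]
  have trH : ∀ x ∈ H, tr x = 0 := by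
    intro x hx
    apply hfree _ _ (ftr x)
    rw [htr]
    exact add_mem (add_mem hx (hfH _ hx)) (hfH _ (hfH _ hx))
  -- action on the dual of H
  let fH : H →ₗ[ℂ] H := F.restrict (p := H.toSubmodule) (q := H.toSubmodule) hfH
  have hfHc : ∀ x : H, ((fH x : H) : L) = f x := fun x => rfl
  let φ : Module.Dual ℂ H →ₗ[ℂ] Module.Dual ℂ H := (fH ∘ₗ fH).dualMap
  have hφ : ∀ l h, φ l h = l (fH (fH h)) := fun l h => rfl
  have h1 : ∀ v, v + φ v + φ (φ v) = 0 := by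
    intro v
    ext h
    simp only [LinearMap.add_apply, hφ, LinearMap.zero_apply]
    rw [← map_add, ← map_add]
    have : h + fH (fH h) + fH (fH (fH (fH h))) = 0 := by
      apply Subtype.ext
      have := trH h h.2
      rw [htr] at this
      push_cast
      simp only [hfHc, hf3]
      rw [← this]; abel
    rw [this, map_zero]
  have hW : ∀ l x, x ∈ wsp H l → f x ∈ wsp H (φ l) := by
    intro l x hx
    have key := fun h => LieAlgebra.IsKilling.lie_eq_smul_of_mem_rootSpace (H := H) hx h
    change f x ∈ LieAlgebra.rootSpace H (φ l : H → ℂ)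
    rw [LieModule.mem_genWeightSpace]
    intro h
    refine ⟨1, ?_⟩
    have e1 : ⁅(h : L), f x⁆ = (l (fH (fH h))) • f x := by
      have e2 : ⁅((fH (fH h) : H) : L), x⁆ = l (fH (fH h)) • x := key _
      have e3 := congrArg f e2
      rw [LieEquiv.map_lie, hfHc, hfHc, hf3, map_smul] at e3
      exact e3
    have e4 : ⁅h, f x⁆ = (l (fH (fH h))) • f x := e1
    simp [hφ, e4]
  have finj : ∀ x, x ≠ 0 → f x ≠ 0 := by
    intro x hx h
    apply hx
    rw [← hf3 x, h, map_zero, map_zero]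
  have hphi : ∀ v ∈ rts H, φ v ∈ rts H := by
    rintro v ⟨hv0, hv⟩
    refine ⟨?_, ?_⟩
    · intro h
      apply hv0
      have := h1 v
      simpa [h] using this
    · obtain ⟨x, hx, hx0⟩ := Submodule.exists_mem_ne_zero_of_ne_bot hv
      intro h
      have := hW _ _ hx
      rw [h, Submodule.mem_bot] at this
      exact finj _ hx0 this
  have hcard : (rts H).ncard = 24 := by
    have := rts_card H
    omega
  obtain ⟨r, rinj, radd, rphi, hrR⟩ := comb (by rw [Subspace.dual_finrank_eq, hHdim]) φ h1 (rts H)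
    (rts_finite H) hcard (fun h => h.1 rfl) (fun v hv => rts_neg H hv) hphi (irr_fact H)
  have r0 : r 0 = 0 := by
    have := radd 0 0
    simpa using this
  have rsub : ∀ x y, r (x - y) = r x - r y := by
    intro x y
    have := radd (x - y) y
    rw [sub_add_cancel] at this
    rw [this]; abel
  have hmem : ∀ x, r x ∈ rts H ↔ x ∈ R0 := by
    intro x
    rw [hrR]
    constructor
    · rintro ⟨y, hy, h⟩
      rwa [← rinj h]
    · exact fun h => ⟨x, h, rfl⟩
  have hWit : ∀ (k : ℕ) x u, u ∈ wsp H (r x) → f^[k] u ∈ wsp H (r (phi0^[k] x)) := by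
    intro k x u hu
    induction k with
    | zero => exact hu
    | succ n ih =>
      rw [Function.iterate_succ_apply', Function.iterate_succ_apply', rphi]
      exact hW _ _ ih
  have hnit : ∀ (k : ℕ) u, u ≠ 0 → f^[k] u ≠ 0 := by
    intro k u hu
    induction k with
    | zero => exact hu
    | succ n ih => rw [Function.iterate_succ_apply']; exact finj _ ih
  -- representatives
  have hrep : ∀ p : ZMod 3 × ZMod 3, ∃ xe : (ℤ × ℤ × ℤ × ℤ) × L, p ≠ 0 →
      xe.1 ∈ R0 ∧ cl xe.1 = p ∧ xe.2 ∈ wsp H (r xe.1) ∧ xe.2 ≠ 0 := by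
    intro p
    by_cases hp : p = 0
    · exact ⟨0, fun h => absurd hp h⟩
    · obtain ⟨x, hx, hxp⟩ := R0_surj p hp
      obtain ⟨e, he, he0⟩ := Submodule.exists_mem_ne_zero_of_ne_bot ((hmem x).2 hx).2
      exact ⟨(x, e), fun _ => ⟨hx, hxp, he, he0⟩⟩
  choose xe hxe using hrep
  let ρ := fun p => (xe p).1
  let e := fun p => (xe p).2
  have hρ : ∀ p, p ≠ 0 → ρ p ∈ R0 := fun p hp => (hxe p hp).1
  have hcl : ∀ p, p ≠ 0 → cl (ρ p) = p := fun p hp => (hxe p hp).2.1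
  have heW : ∀ p, p ≠ 0 → e p ∈ wsp H (r (ρ p)) := fun p hp => (hxe p hp).2.2.1
  have he0 : ∀ p, p ≠ 0 → e p ≠ 0 := fun p hp => (hxe p hp).2.2.2
  -- trace of root vectors
  have trroot : ∀ z ∈ R0, ∀ u ∈ wsp H (r z), ∃ c : ℂ, tr u = c • tr (e (cl z)) ∧
      (u ≠ 0 → c ≠ 0) := by
    intro z hz u hu
    have hc := cl_ne z hz
    obtain ⟨k, hk⟩ := R0_orbit _ (hρ _ hc) z hz (hcl _ hc)
    have hv := hWit k.1 _ _ (heW _ hc)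
    rw [← hk] at hv
    have hv0 := hnit k.1 _ (he0 _ hc)
    obtain ⟨c, hcu⟩ := (finrank_eq_one_iff_of_nonzero' (⟨_, hv⟩ : wsp H (r z))
      (by simpa using hv0)).1 (wsp_one H ((hmem z).2 hz)) ⟨u, hu⟩
    have hcu : c • f^[k.1] (e (cl z)) = u := congrArg Subtype.val hcu
    refine ⟨c, ?_, ?_⟩
    · rw [← hcu, map_smul, trit]
    · rintro hu0 rfl
      exact hu0 (by rw [← hcu, zero_smul])
  have trnon : ∀ z, z ∉ R0 → ∀ u ∈ wsp H (r z), tr u = 0 := by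
    intro z hz u hu
    by_cases hz0 : r z = 0
    · rw [hz0, wsp_zero] at hu
      exact trH u hu
    · have : wsp H (r z) = ⊥ := by
        by_contra hne
        exact hz ((hmem z).1 ⟨hz0, hne⟩)
      rw [this, Submodule.mem_bot] at hu
      rw [hu, map_zero]
  have trlie : ∀ x ∈ R0, ∀ y ∈ R0, ∀ u ∈ wsp H (r x), ∀ v ∈ wsp H (r y), u ≠ 0 → v ≠ 0 →
      ∃ c : ℂ, tr ⁅u, v⁆ = c • tr (e (cl x + cl y)) ∧ (x + y ∈ R0 → c ≠ 0) ∧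
        (x + y ∉ R0 → c = 0) := by
    intro x hx y hy u hu v hv u0 v0
    have hl := wsp_lie H hu hv
    rw [← radd] at hl
    by_cases hxy : x + y ∈ R0
    · obtain ⟨c, hc, hc0⟩ := trroot _ hxy _ hl
      rw [cl_add] at hc
      refine ⟨c, hc, fun _ => hc0 ?_, fun h => absurd hxy h⟩
      obtain ⟨hne, hsub⟩ := R0_string x hx y hy hxy
      refine lie_ne_zero H ((hmem x).2 hx) ((hmem y).2 hy) ?_ ?_ ?_ hu hv u0 v0
      · rw [← radd]; exact (hmem _).2 hxy
      · exact fun h => hne (rinj h)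
      · rw [← rsub, hmem]; exact hsub
    · refine ⟨0, ?_, fun h => absurd h hxy, fun _ => rfl⟩
      rw [trnon _ hxy _ hl, zero_smul]
  have lietr : ∀ u v, ⁅tr u, tr v⁆ = ∑ k : Fin 3, tr ⁅u, f^[k.1] v⁆ := by
    intro u v
    simp only [Fin.sum_univ_three, htr, map_add, LieEquiv.map_lie, hf3]
    simp [hf3]
    abel
  -- the fixed subalgebra
  let K : LieSubalgebra ℂ L :=
    { carrier := {x | f x = x}
      add_mem' := by intro a b ha hb; simp only [Set.mem_setOf_eq] at *; rw [map_add, ha, hb]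
      zero_mem' := by simp
      smul_mem' := by intro c a ha; simp only [Set.mem_setOf_eq] at *; rw [map_smul, ha]
      lie_mem' := by
        intro a b ha hb
        change f ⁅a, b⁆ = ⁅a, b⁆
        rw [LieEquiv.map_lie, show f a = a from ha, show f b = b from hb] }
  have hK : ∀ x : K, f x = x := fun x => x.2
  refine ⟨K, rfl, ?_⟩
  let E : ZMod 3 × ZMod 3 → K := fun p => if p = 0 then 0 else ⟨tr (e p), ftr _⟩
  have hE : ∀ p, p ≠ 0 → ((E p : K) : L) = tr (e p) := by
    intro p hp
    simp [E, hp]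
  have E0 : E 0 = 0 := by simp [E]
  have hli : LinearIndependent ℂ (fun p : {p : ZMod 3 × ZMod 3 // p ≠ 0} => E p.1) := by
    have hbig : LinearIndependent ℂ (fun pk : {p : ZMod 3 × ZMod 3 // p ≠ 0} × Fin 3 =>
        f^[pk.2.1] (e pk.1.1)) := by
      have hin : Function.Injective (fun pk : {p : ZMod 3 × ZMod 3 // p ≠ 0} × Fin 3 =>
          r (phi0^[pk.2.1] (ρ pk.1.1))) := by
        rintro ⟨p, k⟩ ⟨q, l⟩ h
        have h' := rinj h
        have h2 := congrArg cl h'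
        simp only [cl_iter] at h2
        rw [hcl _ p.2, hcl _ q.2] at h2
        have h3 : p = q := Subtype.ext h2
        subst h3
        rw [R0_free _ (hρ _ p.2) k l h']
      exact ((wsp_indep H).comp hin).linearIndependent _
        (fun pk => hWit _ _ _ (heW _ pk.1.2)) (fun pk => hnit _ _ (he0 _ pk.1.2))
    rw [Fintype.linearIndependent_iff] at hbig ⊢
    intro g hg p
    refine hbig (fun pk => g pk.1) ?_ (p, 0)
    rw [Fintype.sum_prod_type]
    have hg' := congrArg (Subtype.val : K → L) hg
    have hcoe : ((∑ i : {p : ZMod 3 × ZMod 3 // p ≠ 0}, g i • E i.1 : K) : L) =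
        ∑ i : {p : ZMod 3 × ZMod 3 // p ≠ 0}, g i • ((E i.1 : K) : L) := by
      have := map_sum K.toSubmodule.subtype (fun i : {p : ZMod 3 × ZMod 3 // p ≠ 0} => g i • E i.1)
        Finset.univ
      exact this
    rw [hcoe] at hg'
    refine Eq.trans ?_ hg'
    refine Finset.sum_congr rfl (fun i _ => ?_)
    rw [hE _ i.2, htr, Fin.sum_univ_three]
    simp
  have hspan : ⊤ ≤ Submodule.span ℂ (Set.range
      (fun p : {p : ZMod 3 × ZMod 3 // p ≠ 0} => E p.1)) := by
    let S := Submodule.span ℂ (Set.range (fun p : {p : ZMod 3 × ZMod 3 // p ≠ 0} => E p.1))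
    let trK : L →ₗ[ℂ] K := tr.codRestrict K.toSubmodule ftr
    have htrK : ∀ x, ((trK x : K) : L) = tr x := fun x => rfl
    have hall : (⊤ : Submodule ℂ L) ≤ S.comap trK := by
      rw [← wsp_top H]
      apply iSup_le
      intro l u hu
      rw [Submodule.mem_comap]
      by_cases hl : l ∈ rts H
      · obtain ⟨z, hz, rfl⟩ := (hrR l).1 hl
        obtain ⟨c, hc, -⟩ := trroot z hz u hu
        have : trK u = c • E (cl z) := by
          apply Subtype.ext
          rw [htrK, hc, ← hE _ (cl_ne z hz)]
          rfl
        rw [this]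
        exact S.smul_mem _ (Submodule.subset_span ⟨⟨cl z, cl_ne z hz⟩, rfl⟩)
      · have : trK u = 0 := by
          apply Subtype.ext
          rw [htrK]
          by_cases hl0 : l = 0
          · rw [hl0, wsp_zero] at hu
            exact trH u hu
          · have hb : wsp H l = ⊥ := by
              by_contra hne
              exact hl ⟨hl0, hne⟩
            rw [hb, Submodule.mem_bot] at hu
            rw [hu, map_zero]; rfl
        rw [this]; exact S.zero_mem
    intro x _
    have h2 : trK (x : L) ∈ S := hall (Submodule.mem_top (x := (x : L)))
    have h3 : x = (3 : ℂ)⁻¹ • trK (x : L) := by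
      apply Subtype.ext
      change (x : L) = (3 : ℂ)⁻¹ • tr (x : L)
      rw [htr, hK, hK]
      module
    rw [h3]
    exact S.smul_mem _ h2
  let b := Module.Basis.mk hli hspan
  refine iso_sl3 E E0 b (fun p => by simp [b]) ?_
  intro p q
  by_cases hp : p = 0
  · subst hp
    refine ⟨0, by rw [E0]; simp, fun h => absurd (by simp [dt]) h, fun _ => rfl⟩
  by_cases hq : q = 0
  · subst hq
    refine ⟨0, by rw [E0]; simp, fun h => absurd (by simp [dt]) h, fun _ => rfl⟩
  by_cases hpq : p = q
  · subst hpq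
    refine ⟨0, by simp, fun h => absurd (by simp only [dt]; ring) h, fun _ => rfl⟩
  have hk : ∀ k : Fin 3, ∃ c : ℂ, tr ⁅e p, f^[k.1] (e q)⁆ = c • tr (e (p + q)) ∧
      (ρ p + phi0^[k.1] (ρ q) ∈ R0 → c ≠ 0) ∧ (ρ p + phi0^[k.1] (ρ q) ∉ R0 → c = 0) := by
    intro k
    have := trlie _ (hρ p hp) _ (R0_iter _ (hρ q hq) k) _ (heW p hp) _ (hWit k.1 _ _ (heW q hq))
      (he0 p hp) (hnit _ _ (he0 q hq))
    rwa [cl_iter, hcl p hp, hcl q hq] at this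
  choose c hc hc1 hc2 using hk
  have hcn := R0_comm _ (hρ p hp) _ (hρ q hq) (by rwa [hcl p hp, hcl q hq])
  have hcs := R0_noncomm _ (hρ p hp) _ (hρ q hq)
  rw [hcl p hp, hcl q hq] at hcn hcs
  refine ⟨∑ k, c k, ?_, ?_, ?_⟩
  · apply Subtype.ext
    change ⁅((E p : K) : L), ((E q : K) : L)⁆ = (∑ k, c k) • ((E (p + q) : K) : L)
    rw [hE p hp, hE q hq, lietr, Finset.sum_congr rfl (fun k _ => hc k), ← Finset.sum_smul]
    by_cases hs : p + q = 0
    · have : ∑ k, c k = 0 := by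
        apply Finset.sum_eq_zero
        intro k _
        apply hc2
        intro hmem'
        apply cl_ne _ hmem'
        rw [cl_add, cl_iter, hcl p hp, hcl q hq, hs]
      rw [this, zero_smul, zero_smul]
    · rw [hE _ hs]
  · intro hd
    obtain ⟨k, hk1, hk2⟩ := hcs hd
    rw [Finset.sum_eq_single k (fun l _ hl => hc2 l (hk2 l hl)) (by simp)]
    exact hc1 k hk1
  · intro hd
    exact Finset.sum_eq_zero (fun k _ => hc2 k (hcn hd k))
end
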